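/- arXiv:2306.07259 — 3 statements merged into one kernel-verified Lean document; each statement's English description precedes it below -/
import Mathlib

section
/- Let H be a real-analytic hypersurface in an open set U ⊆ ℂⁿ (n ≥ 2) that is curve-supported from two sides at a point p ∈ H. Then there exists ε > 0 such that every point q ∈ B_ε(p) lies on an analytic disc attached to H whose image is contained in U. -/
open Metric

noncomputable section

/-- `H` is a (singular) real-analytic hypersurface in the open set `U ⊆ ℂⁿ`:
`H = {z ∈ U : ρ z = 0}` for some real-analytic `ρ : U → ℝ` (analytic over `ℝ`),
`H` nonempty, and `ρ` does not vanish identically on any connected component of `U`. -/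
def IsRealAnalyticHypersurface {n : ℕ} (U H : Set (EuclideanSpace ℂ (Fin n))) : Prop :=
  IsOpen U ∧ H.Nonempty ∧
    ∃ ρ : EuclideanSpace ℂ (Fin n) → ℝ,
      AnalyticOnNhd ℝ ρ U ∧
      H = {z | z ∈ U ∧ ρ z = 0} ∧
      ∀ z ∈ U, ∃ w ∈ connectedComponentIn U z, ρ w ≠ 0

/-- `C = φ '' 𝔻` is a support curve for `H` at `p`, parametrized by the nonconstant
holomorphic map `φ : 𝔻 → U` with `φ 0 = p` and `C ∩ H = {p}`. -/
def IsSupportCurveVia {n : ℕ} (U H : Set (EuclideanSpace ℂ (Fin n)))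
    (p : EuclideanSpace ℂ (Fin n)) (φ : ℂ → EuclideanSpace ℂ (Fin n))
    (C : Set (EuclideanSpace ℂ (Fin n))) : Prop :=
  DifferentiableOn ℂ φ (ball 0 1) ∧
  Set.MapsTo φ (ball 0 1) U ∧
  (∃ a ∈ ball (0 : ℂ) 1, ∃ b ∈ ball (0 : ℂ) 1, φ a ≠ φ b) ∧
  φ 0 = p ∧
  C = φ '' ball 0 1 ∧
  C ∩ H = {p}

/-- `C` is a support curve for `H` at `p`. -/
def IsSupportCurve {n : ℕ} (U H : Set (EuclideanSpace ℂ (Fin n)))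
    (p : EuclideanSpace ℂ (Fin n)) (C : Set (EuclideanSpace ℂ (Fin n))) : Prop :=
  ∃ φ : ℂ → EuclideanSpace ℂ (Fin n), IsSupportCurveVia U H p φ C

/-- `V` is a connected component of `U \ H`. -/
def IsComponentOfComplement {n : ℕ} (U H V : Set (EuclideanSpace ℂ (Fin n))) : Prop :=
  ∃ x ∈ U \ H, V = connectedComponentIn (U \ H) x

/-- `H` is curve-supported from two sides at `p`: there are two support curves at `p`
lying (off `p`) in two distinct connected components of `U \ H`. -/
def CurveSupportedFromTwoSides {n : ℕ} (U H : Set (EuclideanSpace ℂ (Fin n)))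
    (p : EuclideanSpace ℂ (Fin n)) : Prop :=
  ∃ C₁ C₂ V₁ V₂ : Set (EuclideanSpace ℂ (Fin n)),
    IsSupportCurve U H p C₁ ∧ IsSupportCurve U H p C₂ ∧
    IsComponentOfComplement U H V₁ ∧ IsComponentOfComplement U H V₂ ∧
    V₁ ≠ V₂ ∧ C₁ \ {p} ⊆ V₁ ∧ C₂ \ {p} ⊆ V₂

/-- `ψ` is an analytic disc attached to `S`: a nonconstant continuous map on the closed
unit disc, holomorphic on the open unit disc, with boundary values in `S`. -/
def IsAttachedDisc {n : ℕ} (S : Set (EuclideanSpace ℂ (Fin n)))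
    (ψ : ℂ → EuclideanSpace ℂ (Fin n)) : Prop :=
  ContinuousOn ψ (closedBall 0 1) ∧
  DifferentiableOn ℂ ψ (ball 0 1) ∧
  (∃ a ∈ closedBall (0 : ℂ) 1, ∃ b ∈ closedBall (0 : ℂ) 1, ψ a ≠ ψ b) ∧
  ψ '' sphere 0 1 ⊆ S

/-- The polynomial hull of `K ⊆ ℂⁿ`. -/
def polyHull {n : ℕ} (K : Set (EuclideanSpace ℂ (Fin n))) : Set (EuclideanSpace ℂ (Fin n)) :=
  {z | ∀ P : MvPolynomial (Fin n) ℂ,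
    ‖MvPolynomial.eval (fun i => z i) P‖ ≤
      ⨆ w : K, ‖MvPolynomial.eval (fun i => (w : EuclideanSpace ℂ (Fin n)) i) P‖}

/-- The rational hull of `K ⊆ ℂⁿ`. -/
def ratHull {n : ℕ} (K : Set (EuclideanSpace ℂ (Fin n))) : Set (EuclideanSpace ℂ (Fin n)) :=
  {z | ∀ P : MvPolynomial (Fin n) ℂ,
    MvPolynomial.eval (fun i => z i) P ∈
      (fun w : EuclideanSpace ℂ (Fin n) => MvPolynomial.eval (fun i => w i) P) '' K}

section AuxLemmas

open Set Filter Topology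

/-- Maximum principle with limsup boundary condition. -/
theorem aux_max_principle {G : Set ℂ} (hG : IsOpen G) (hb : Bornology.IsBounded G) {f : ℂ → ℂ}
    (hf : DifferentiableOn ℂ f G) {C : ℝ}
    (hlim : ∀ x ∈ frontier G, ∀ ε > 0, ∀ᶠ z in 𝓝[G] x, ‖f z‖ ≤ C + ε) :
    ∀ z ∈ G, ‖f z‖ ≤ C := by
  by_contra! hcon
  obtain ⟨z0, hz0, hC⟩ := hcon
  have key : ∀ s : ℝ, ‖f z0‖ ≤ s → IsClosed {z | z ∈ G ∧ s ≤ ‖f z‖} := by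
    intro s hs
    rw [← closure_subset_iff_isClosed]
    intro z hz
    have hzG : z ∈ closure G := closure_mono (fun w hw => hw.1) hz
    have hzG' : z ∈ G := by
      by_contra hn
      have hfr : z ∈ frontier G := by
        rw [frontier, hG.interior_eq]; exact ⟨hzG, hn⟩
      have h1 := hlim z hfr ((‖f z0‖ - C) / 2) (by linarith)
      rw [eventually_nhdsWithin_iff] at h1
      rw [mem_closure_iff_frequently] at hz
      obtain ⟨w, hw, hw2⟩ := (hz.and_eventually h1).exists
      have := hw2 hw.1
      have := hw.2
      linarith
    refine ⟨hzG', ?_⟩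
    have hc : ContinuousAt (fun z => ‖f z‖) z :=
      ((hf.differentiableAt (hG.mem_nhds hzG')).continuousAt).norm
    rw [mem_closure_iff_frequently] at hz
    by_contra hlt
    push Not at hlt
    have h2 := hc.eventually_lt continuousAt_const hlt
    obtain ⟨w, hw, hw2⟩ := (hz.and_eventually h2).exists
    have := hw.2
    linarith
  have hcomp : ∀ s : ℝ, ‖f z0‖ ≤ s → IsCompact {z | z ∈ G ∧ s ≤ ‖f z‖} := fun s hs =>
    Metric.isCompact_of_isClosed_isBounded (key s hs) (hb.subset fun w hw => hw.1)
  obtain ⟨z1, hz1, hmax⟩ := (hcomp _ le_rfl).exists_isMaxOn ⟨z0, hz0, le_rfl⟩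
    (f := fun z => ‖f z‖) ((hf.continuousOn.norm).mono fun w hw => hw.1)
  have hmaxG : ∀ w ∈ G, ‖f w‖ ≤ ‖f z1‖ := by
    intro w hw
    by_cases h : ‖f z0‖ ≤ ‖f w‖
    · exact hmax ⟨hw, h⟩
    · push Not at h
      exact h.le.trans hz1.2
  have hopen : IsOpen {z | z ∈ G ∧ ‖f z1‖ ≤ ‖f z‖} := by
    rw [isOpen_iff_mem_nhds]
    rintro z ⟨hz, hz'⟩
    have hloc : IsLocalMax (norm ∘ f) z := by
      filter_upwards [hG.mem_nhds hz] with w hw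
      exact (hmaxG w hw).trans hz'
    have hd : ∀ᶠ w in 𝓝 z, DifferentiableAt ℂ f w := by
      filter_upwards [hG.mem_nhds hz] with w hw
      exact hf.differentiableAt (hG.mem_nhds hw)
    filter_upwards [Complex.eventually_eq_of_isLocalMax_norm hd hloc, hG.mem_nhds hz] with w hw hwG
    exact ⟨hwG, by rw [hw]; exact hz'⟩
  have hcl : IsClopen {z | z ∈ G ∧ ‖f z1‖ ≤ ‖f z‖} := ⟨key _ hz1.2, hopen⟩
  rcases isClopen_iff.1 hcl with h | h
  · have : z1 ∈ {z | z ∈ G ∧ ‖f z1‖ ≤ ‖f z‖} := ⟨hz1.1, le_rfl⟩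
    rw [h] at this; exact this
  · have := hcomp _ hz1.2
    rw [h] at this
    exact noncompact_univ ℂ this

/-- upper half disc -/
def auxHD (R : ℝ) : Set ℂ := {w | ‖w‖ < R ∧ 0 < w.im}

theorem auxHD_isOpen (R : ℝ) : IsOpen (auxHD R) :=
  (isOpen_lt continuous_norm continuous_const).inter (isOpen_lt continuous_const Complex.continuous_im)

theorem auxHD_bdd (R : ℝ) : Bornology.IsBounded (auxHD R) :=
  Metric.isBounded_ball.subset (fun w hw => by simpa using hw.1 : auxHD R ⊆ ball (0:ℂ) R)

theorem auxHD_frontier {R : ℝ} {x : ℂ} (hx : x ∈ frontier (auxHD R)) :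
    ‖x‖ ≤ R ∧ 0 ≤ x.im ∧ (x.im = 0 ∨ ‖x‖ = R) := by
  rw [frontier, (auxHD_isOpen R).interior_eq] at hx
  have h1 : x ∈ {w : ℂ | ‖w‖ ≤ R ∧ 0 ≤ w.im} := by
    have hc : IsClosed {w : ℂ | ‖w‖ ≤ R ∧ 0 ≤ w.im} :=
      (isClosed_le continuous_norm continuous_const).inter
        (isClosed_le continuous_const Complex.continuous_im)
    have hs : auxHD R ⊆ {w : ℂ | ‖w‖ ≤ R ∧ 0 ≤ w.im} := fun w hw => ⟨hw.1.le, hw.2.le⟩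
    exact closure_minimal hs hc hx.1
  refine ⟨h1.1, h1.2, ?_⟩
  by_contra! h
  exact hx.2 ⟨lt_of_le_of_ne h1.1 h.2, lt_of_le_of_ne h1.2 (Ne.symm h.1)⟩

theorem auxHD_mono {R S : ℝ} (h : R ≤ S) : auxHD R ⊆ auxHD S := fun _ hw => ⟨hw.1.trans_le h, hw.2⟩

theorem auxHD_convex (R : ℝ) : Convex ℝ (auxHD R) := by
  have : auxHD R = ball (0:ℂ) R ∩ {w : ℂ | 0 < w.im} := by
    ext w; simp [auxHD]
  rw [this]
  exact (convex_ball _ _).inter (convex_halfSpace_im_gt 0)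

theorem aux_mob_den {a z : ℂ} (ha : ‖a‖ < 1) (hz : ‖z‖ ≤ 1) : 1 - (starRingEnd ℂ) a * z ≠ 0 := by
  intro h
  have h1 : (starRingEnd ℂ) a * z = 1 := by linear_combination -h
  have h2 : ‖(starRingEnd ℂ) a * z‖ = 1 := by rw [h1]; simp
  rw [norm_mul, Complex.norm_conj] at h2
  nlinarith [norm_nonneg a, norm_nonneg z]

theorem aux_mob_norm {a z : ℂ} (ha : ‖a‖ < 1) (hz : ‖z‖ < 1) :
    ‖(z - a) / (1 - (starRingEnd ℂ) a * z)‖ < 1 := by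
  have hd := aux_mob_den ha hz.le
  rw [norm_div, div_lt_one (norm_pos_iff.2 hd)]
  have e : ‖1 - (starRingEnd ℂ) a * z‖ ^ 2 - ‖z - a‖ ^ 2 = (1 - ‖a‖ ^ 2) * (1 - ‖z‖ ^ 2) := by
    simp only [← Complex.normSq_eq_norm_sq, Complex.normSq_apply]
    simp
    ring
  have h1 : 0 < (1 - ‖a‖ ^ 2) * (1 - ‖z‖ ^ 2) := by
    apply mul_pos <;> nlinarith [norm_nonneg a, norm_nonneg z]
  exact lt_of_pow_lt_pow_left₀ 2 (norm_nonneg _) (by linarith)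

theorem aux_mob_deriv {Q : ℂ → ℂ} {a w q' : ℂ} (hQ : HasDerivAt Q q' w)
    (hd : 1 - (starRingEnd ℂ) a * Q w ≠ 0) :
    HasDerivAt (fun v => (Q v - a) / (1 - (starRingEnd ℂ) a * Q v))
      (q' * (1 - ‖a‖ ^ 2) / (1 - (starRingEnd ℂ) a * Q w) ^ 2) w := by
  have h := (hQ.sub_const a).fun_div ((hQ.const_mul ((starRingEnd ℂ) a)).const_sub 1) hd
  have : (‖a‖ : ℂ) ^ 2 = (starRingEnd ℂ) a * a := by
    rw [mul_comm, Complex.mul_conj, Complex.normSq_eq_norm_sq]; push_cast; rfl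
  refine h.congr_deriv ?_
  rw [this]
  congr 1
  ring

/-- Schwarz-Pick at the centre of a ball. -/
theorem aux_schwarz_pick {Q : ℂ → ℂ} {w : ℂ} {y : ℝ} (hy : 0 < y)
    (hQ : DifferentiableOn ℂ Q (ball w y)) (hlt : ∀ v ∈ ball w y, ‖Q v‖ < 1) :
    ‖deriv Q w‖ ≤ (1 - ‖Q w‖ ^ 2) / y := by
  have hw : w ∈ ball w y := mem_ball_self hy
  have ha := hlt w hw
  set a := Q w with hadef
  have hder : ∀ v ∈ ball w y, HasDerivAt (fun v => (Q v - a) / (1 - (starRingEnd ℂ) a * Q v))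
      (deriv Q v * (1 - ‖a‖ ^ 2) / (1 - (starRingEnd ℂ) a * Q v) ^ 2) v := fun v hv =>
    aux_mob_deriv (hQ.differentiableAt (isOpen_ball.mem_nhds hv)).hasDerivAt
      (aux_mob_den ha (hlt v hv).le)
  have h0 := Complex.norm_deriv_le_div_of_mapsTo_ball (c := w) (R₁ := y) (R₂ := 1)
    (f := fun v => (Q v - a) / (1 - (starRingEnd ℂ) a * Q v))
    (fun v hv => (hder v hv).differentiableAt.differentiableWithinAt)
    (fun v hv => by
      simp only [← hadef, sub_self, zero_div, mem_closedBall, dist_zero_right]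
      exact (aux_mob_norm ha (hlt v hv)).le) hy
  rw [(hder w hw).deriv, ← hadef] at h0
  have e : 1 - (starRingEnd ℂ) a * a = ((1 - ‖a‖ ^ 2 : ℝ) : ℂ) := by
    rw [mul_comm, Complex.mul_conj, Complex.normSq_eq_norm_sq]; push_cast; rfl
  have hp : 0 < 1 - ‖a‖ ^ 2 := by nlinarith [norm_nonneg a]
  have e2 : (1 - (‖a‖ : ℂ) ^ 2) = ((1 - ‖a‖ ^ 2 : ℝ) : ℂ) := by push_cast; rfl
  rw [e, e2, norm_div, norm_mul, norm_pow, Complex.norm_real, Real.norm_of_nonneg hp.le] at h0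
  rw [div_le_div_iff₀ (by positivity) hy] at h0
  rw [le_div_iff₀ hy]
  have : ‖deriv Q w‖ * y * (1 - ‖a‖ ^ 2) ≤ (1 - ‖a‖ ^ 2) * (1 - ‖a‖ ^ 2) := by nlinarith
  exact le_of_mul_le_mul_right this hp

theorem aux_halfdisc_lip {R : ℝ} (hR : 0 < R) {Q : ℂ → ℂ} (hQ : DifferentiableOn ℂ Q (auxHD R))
    (hlt : ∀ w ∈ auxHD R, ‖Q w‖ < 1)
    (hlim : ∀ x : ℝ, |x| < R → Tendsto (fun w => ‖Q w‖) (𝓝[auxHD R] (x : ℂ)) (𝓝 1)) :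
    ∃ R' > 0, R' ≤ R ∧ ∃ C : ℝ, ∀ w₁ ∈ auxHD R', ∀ w₂ ∈ auxHD R', ‖Q w₁ - Q w₂‖ ≤ C * ‖w₁ - w₂‖ := by
  -- shrink
  obtain ⟨r, hr0, hrR, hhalf⟩ : ∃ r > 0, r < R ∧ ∀ w ∈ auxHD r, 1 / 2 ≤ ‖Q w‖ := by
    have h0 := hlim 0 (by simpa using hR)
    have h1 := h0.eventually_const_le (u := 1 / 2) (by norm_num)
    rw [eventually_nhdsWithin_iff, Metric.eventually_nhds_iff] at h1
    obtain ⟨e, he, h1⟩ := h1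
    refine ⟨min e (R / 2), by positivity, (min_le_right _ _).trans_lt (by linarith), fun w hw => ?_⟩
    refine h1 ?_ (auxHD_mono ((min_le_right _ _).trans (by linarith)) hw)
    simpa using hw.1.trans_le (min_le_left _ _)
  have hsub : auxHD r ⊆ auxHD R := auxHD_mono hrR.le
  set A : ℝ := 16 / r ^ 2 with hA
  set B : ℝ := 20 / r with hB
  have hQ0 : ∀ w ∈ auxHD r, Q w ≠ 0 := fun w hw h => by
    have := hhalf w hw
    rw [h] at this; norm_num at this
  have hbar : ∀ x0 : ℝ, |x0| ≤ r / 2 → ∀ w ∈ auxHD r,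
      ‖(Q w)⁻¹ * Complex.exp (-((A:ℂ) * (w - x0) ^ 2 - Complex.I * B * w))‖ ≤ 1 := by
    intro x0 hx0
    have hre : ∀ w : ℂ, (-((A:ℂ) * (w - x0) ^ 2 - Complex.I * B * w)).re
        = -(A * ((w.re - x0) ^ 2 - w.im ^ 2) + B * w.im) := by
      intro w
      simp [pow_two]
      ring
    apply aux_max_principle (auxHD_isOpen r) (auxHD_bdd r)
    · intro w hw
      apply DifferentiableAt.differentiableWithinAt
      have := hQ.differentiableAt ((auxHD_isOpen R).mem_nhds (hsub hw))
      exact (this.inv (hQ0 w hw)).mul (by fun_prop)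
    · intro x hx ε hε
      obtain ⟨h1, h2, h3⟩ := auxHD_frontier hx
      by_cases him : x.im = 0
      · have hxr : x = (x.re : ℂ) := by apply Complex.ext <;> simp [him]
        have habs : |x.re| < R := (Complex.abs_re_le_norm x).trans_lt (h1.trans_lt hrR)
        have ht := (hlim x.re habs).mono_left (nhdsWithin_mono _ hsub)
        rw [← hxr] at ht
        have hc : Continuous fun w : ℂ => Real.exp ((-((A:ℂ) * (w - x0) ^ 2 - Complex.I * B * w)).re) := by
          fun_prop
        have ht2 := (ht.inv₀ one_ne_zero).mul (hc.continuousAt.tendsto.mono_left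
          (nhdsWithin_le_nhds (a := x) (s := auxHD r)))
        have hle : (1:ℝ)⁻¹ * Real.exp ((-((A:ℂ) * (x - x0) ^ 2 - Complex.I * B * x)).re) < 1 + ε := by
          rw [hre, him, inv_one, one_mul]
          have : Real.exp (-(A * ((x.re - x0) ^ 2 - 0 ^ 2) + B * 0)) ≤ 1 := by
            rw [Real.exp_le_one_iff]
            have : 0 ≤ A := by positivity
            nlinarith [mul_nonneg this (sq_nonneg (x.re - x0))]
          linarith
        filter_upwards [ht2.eventually_le_const hle] with w hw
        rwa [norm_mul, norm_inv, Complex.norm_exp]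
      · have hxr : ‖x‖ = r := h3.resolve_left him
        have hpos : 0 < x.im := lt_of_le_of_ne h2 (Ne.symm him)
        have hge : 1 ≤ A * ((x.re - x0) ^ 2 - x.im ^ 2) + B * x.im := by
          have hsq : x.re ^ 2 + x.im ^ 2 = r ^ 2 := by
            rw [← hxr, ← Complex.normSq_eq_norm_sq, Complex.normSq_apply]; ring
          have hAr : A * r ^ 2 = 16 := by rw [hA]; field_simp
          have hBr : B * r = 20 := by rw [hB]; field_simp
          have hA0 : 0 < A := by positivity
          have hB0 : 0 < B := by positivity
          obtain ⟨hx1, hx2⟩ := abs_le.1 hx0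
          by_cases hy : x.im ≤ r / 4
          · have h5 : r ^ 2 * (1/16) ≤ (x.re - x0) ^ 2 - x.im ^ 2 := by
              have hre2 : (9/10 * r) ^ 2 ≤ x.re ^ 2 := by nlinarith
              have hre3 : 9/10 * r ≤ |x.re| := by
                rw [← abs_of_pos (show 0 < 9/10 * r by positivity)]
                exact sq_le_sq.1 hre2
              have : (4/10 * r) ^ 2 ≤ (x.re - x0) ^ 2 := by
                rw [sq_le_sq, abs_of_pos (show 0 < 4/10 * r by positivity)]
                have := abs_sub_abs_le_abs_sub x.re x0
                linarith
              have hy2 : x.im ^ 2 ≤ (r/4)^2 := by gcongr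
              nlinarith
            have h6 : A * (r ^ 2 * (1/16)) ≤ A * ((x.re - x0) ^ 2 - x.im ^ 2) :=
              mul_le_mul_of_nonneg_left h5 hA0.le
            nlinarith [mul_pos hB0 hpos]
          · push Not at hy
            have hyr : x.im ≤ r := by
              rw [← hxr]; exact (le_abs_self _).trans (Complex.abs_im_le_norm x)
            have h7 : A * x.im ^ 2 ≤ (16 / r) * x.im := by
              have : A * x.im ≤ 16 / r := by
                have : A * r = 16 / r := by rw [hA]; field_simp
                rw [← this]; exact mul_le_mul_of_nonneg_left hyr hA0.le
              nlinarith
            have h8 : 1 ≤ (4 / r) * x.im := by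
              rw [div_mul_eq_mul_div, le_div_iff₀ hr0]; linarith
            have h9 : B * x.im = (16 / r) * x.im + (4 / r) * x.im := by rw [hB]; ring
            nlinarith [mul_nonneg hA0.le (sq_nonneg (x.re - x0))]
        have hc : Continuous fun w : ℂ => 2 * Real.exp ((-((A:ℂ) * (w - x0) ^ 2 - Complex.I * B * w)).re) := by
          fun_prop
        have hle : 2 * Real.exp ((-((A:ℂ) * (x - x0) ^ 2 - Complex.I * B * x)).re) < 1 + ε := by
          rw [hre]
          have h1 : Real.exp (-(A * ((x.re - x0) ^ 2 - x.im ^ 2) + B * x.im)) ≤ Real.exp (-1) :=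
            Real.exp_le_exp.2 (by linarith)
          have h2 : Real.exp (-1) ≤ 1 / 2 := by
            rw [Real.exp_neg, one_div]
            apply inv_anti₀ (by norm_num)
            have := Real.add_one_le_exp (1:ℝ); linarith
          linarith
        have hev := (hc.continuousAt.tendsto.mono_left
          (nhdsWithin_le_nhds (a := x) (s := auxHD r))).eventually_le_const hle
        filter_upwards [hev, self_mem_nhdsWithin] with w hw hwr
        rw [norm_mul, norm_inv, Complex.norm_exp]
        refine le_trans (mul_le_mul_of_nonneg_right ?_ (Real.exp_pos _).le) hw
        rw [inv_le_comm₀ (by linarith [hhalf w hwr]) (by norm_num)]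
        linarith [hhalf w hwr]
  have hlow : ∀ w ∈ auxHD (r / 2), 1 - ‖Q w‖ ≤ B * w.im := by
    intro w hw
    have hwr : w ∈ auxHD r := auxHD_mono (by linarith) hw
    have h1 := hbar w.re ((Complex.abs_re_le_norm w).trans hw.1.le) w hwr
    have hre : (-((A:ℂ) * (w - w.re) ^ 2 - Complex.I * B * w)).re = A * w.im ^ 2 - B * w.im := by
      simp [pow_two]; ring
    rw [norm_mul, norm_inv, Complex.norm_exp, hre] at h1
    have hq : 0 < ‖Q w‖ := norm_pos_iff.2 (hQ0 w hwr)
    rw [inv_mul_le_iff₀ hq, mul_one] at h1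
    have h2 := Real.add_one_le_exp (A * w.im ^ 2 - B * w.im)
    have : 0 ≤ A * w.im ^ 2 := by positivity
    linarith
  refine ⟨r / 2, by positivity, by linarith, 2 * B, ?_⟩
  have hderiv : ∀ w ∈ auxHD (r / 2), ‖deriv Q w‖ ≤ 2 * B := by
    intro w hw
    have hball : ball w w.im ⊆ auxHD R := by
      intro v hv
      rw [mem_ball, dist_eq_norm] at hv
      constructor
      · have := norm_sub_norm_le v w
        have := (le_abs_self _).trans (Complex.abs_im_le_norm w)
        have := hw.1
        linarith
      · have := (neg_le_abs _).trans (Complex.abs_im_le_norm (v - w))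
        simp at this
        linarith
    have h1 := aux_schwarz_pick hw.2 (hQ.mono hball) (fun v hv => hlt v (hball hv))
    refine h1.trans ?_
    rw [div_le_iff₀ hw.2]
    have h2 := hlow w hw
    have h3 := hlt w (auxHD_mono (by linarith) hw)
    nlinarith [norm_nonneg (Q w)]
  intro w₁ h₁ w₂ h₂
  exact (auxHD_convex (r/2)).norm_image_sub_le_of_norm_deriv_le
    (fun w hw => hQ.differentiableAt ((auxHD_isOpen R).mem_nhds (auxHD_mono (by linarith) hw)))
    hderiv h₂ h₁

theorem aux_halfdisc_const {R : ℝ} (hR : 0 < R) {Q : ℂ → ℂ} (hQ : DifferentiableOn ℂ Q (auxHD R))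
    (hlt : ∀ w ∈ auxHD R, ‖Q w‖ < 1) {ζ : ℂ} (hζ : ‖ζ‖ ≤ 1)
    (hlim : ∀ x : ℝ, |x| < R → Tendsto Q (𝓝[auxHD R] (x : ℂ)) (𝓝 ζ)) :
    ∃ w ∈ auxHD R, Q w = ζ := by
  set r := R / 2 with hr
  have hr0 : 0 < r := by positivity
  have hrR : r < R := by rw [hr]; linarith
  have hsub : auxHD r ⊆ auxHD R := auxHD_mono hrR.le
  have hre : ∀ (k : ℝ) (w : ℂ), ((k:ℂ) * ((r ^ 2 / 2 : ℂ) + Complex.I * (2 * r) * w - w ^ 2)).re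
      = k * (r ^ 2 / 2 - 2 * r * w.im + (w.im ^ 2 - w.re ^ 2)) := by
    intro k w
    have e : ((r:ℂ) ^ 2 / 2) = ((r ^ 2 / 2 : ℝ) : ℂ) := by push_cast; rfl
    rw [e]
    simp only [Complex.mul_re, Complex.mul_im, Complex.add_re, Complex.sub_re, Complex.ofReal_re, Complex.ofReal_im, Complex.add_im, Complex.sub_im, Complex.I_re, Complex.I_im, pow_two, Complex.re_ofNat, Complex.im_ofNat]
    ring
  have hbar : ∀ k : ℝ, 0 ≤ k → ∀ w ∈ auxHD r,
      ‖(Q w - ζ) * Complex.exp ((k:ℂ) * ((r ^ 2 / 2 : ℂ) + Complex.I * (2 * r) * w - w ^ 2))‖ ≤ 2 := by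
    intro k hk
    apply aux_max_principle (auxHD_isOpen r) (auxHD_bdd r)
    · intro w hw
      apply DifferentiableAt.differentiableWithinAt
      have := hQ.differentiableAt ((auxHD_isOpen R).mem_nhds (hsub hw))
      exact (this.sub_const ζ).mul (by fun_prop)
    · intro x hx ε hε
      obtain ⟨h1, h2, h3⟩ := auxHD_frontier hx
      have hc : Continuous fun w : ℂ => Complex.exp ((k:ℂ) * ((r ^ 2 / 2 : ℂ) + Complex.I * (2 * r) * w - w ^ 2)) := by
          fun_prop
      have hcx := hc.continuousAt.tendsto.mono_left (nhdsWithin_le_nhds (a := x) (s := auxHD r))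
      by_cases him : x.im = 0
      · have hxr : x = (x.re : ℂ) := by apply Complex.ext <;> simp [him]
        have habs : |x.re| < R := (Complex.abs_re_le_norm x).trans_lt (h1.trans_lt hrR)
        have ht := (hlim x.re habs).mono_left (nhdsWithin_mono _ hsub)
        rw [← hxr] at ht
        have ht2 := ((ht.sub_const ζ).mul hcx).norm
        refine ht2.eventually_le_const ?_
        simp; linarith
      · have hxr : ‖x‖ = r := h3.resolve_left him
        have hsq : x.re ^ 2 + x.im ^ 2 = r ^ 2 := by
          rw [← hxr, ← Complex.normSq_eq_norm_sq, Complex.normSq_apply]; ring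
        have hyr : x.im ≤ r := by
          rw [← hxr]; exact (le_abs_self _).trans (Complex.abs_im_le_norm x)
        have hle : 2 * ‖Complex.exp ((k:ℂ) * ((r ^ 2 / 2 : ℂ) + Complex.I * (2 * r) * x - x ^ 2))‖ < 2 + ε := by
          rw [Complex.norm_exp, hre]
          have : Real.exp (k * (r ^ 2 / 2 - 2 * r * x.im + (x.im ^ 2 - x.re ^ 2))) ≤ 1 := by
            rw [Real.exp_le_one_iff]
            apply mul_nonpos_of_nonneg_of_nonpos hk
            nlinarith [mul_nonneg h2 (sub_nonneg.2 hyr)]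
          linarith
        filter_upwards [(hcx.norm.const_mul 2).eventually_le_const hle, self_mem_nhdsWithin] with w hw hwr
        rw [norm_mul]
        refine le_trans (mul_le_mul_of_nonneg_right ?_ (norm_nonneg _)) hw
        have := hlt w (hsub hwr)
        have := norm_sub_le (Q w) ζ
        linarith
  have hw0 : Complex.I * (r / 8 : ℂ) ∈ auxHD r := by
    have : (Complex.I * (r / 8 : ℂ)).im = r / 8 := by
      simp
    constructor
    · rw [norm_mul, Complex.norm_I, one_mul, norm_div, Complex.norm_real, Real.norm_of_nonneg hr0.le]
      norm_num; linarith
    · rw [this]; positivity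
  refine ⟨_, hsub hw0, ?_⟩
  have him : (Complex.I * (r / 8 : ℂ)).im = r / 8 := by simp
  have hre0 : (Complex.I * (r / 8 : ℂ)).re = 0 := by simp
  set w := Complex.I * (r / 8 : ℂ)
  have hall : ∀ k : ℝ, 0 ≤ k → ‖Q w - ζ‖ * (k * (r ^ 2 / 4)) ≤ 2 := by
    intro k hk
    have h1 := hbar k hk w hw0
    rw [norm_mul, Complex.norm_exp, hre, him, hre0] at h1
    refine le_trans (mul_le_mul_of_nonneg_left ?_ (norm_nonneg _)) h1
    refine le_trans ?_ (Real.add_one_le_exp _)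
    nlinarith [mul_nonneg hk (sq_nonneg r)]
  by_contra hne
  have hpos : 0 < ‖Q w - ζ‖ := norm_pos_iff.2 (sub_ne_zero.2 hne)
  have := hall (3 / (‖Q w - ζ‖ * (r ^ 2 / 4))) (by positivity)
  have e : ‖Q w - ζ‖ * (3 / (‖Q w - ζ‖ * (r ^ 2 / 4)) * (r ^ 2 / 4)) = 3 := by field_simp
  linarith

/-- In any interval there is a subinterval where a unimodular value is not a cluster value. -/
theorem aux_halfdisc_noncluster {R : ℝ} (hR : 0 < R) {Q : ℂ → ℂ}
    (hQ : DifferentiableOn ℂ Q (auxHD R)) (hlt : ∀ w ∈ auxHD R, ‖Q w‖ < 1)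
    (hlim : ∀ x : ℝ, |x| < R → Tendsto (fun w => ‖Q w‖) (𝓝[auxHD R] (x : ℂ)) (𝓝 1))
    {ζ : ℂ} (hζ : ‖ζ‖ = 1) :
    ∃ x0 : ℝ, ∃ δ > 0, |x0| + δ ≤ R ∧ ∀ x : ℝ, |x - x0| < δ →
      ¬ MapClusterPt ζ (𝓝[auxHD R] (x : ℂ)) Q := by
  obtain ⟨R', hR', hR'R, C, hLip⟩ := aux_halfdisc_lip hR hQ hlt hlim
  have hC : ∀ w₁ ∈ auxHD R', ∀ w₂ ∈ auxHD R', ‖Q w₁ - Q w₂‖ ≤ max C 1 * ‖w₁ - w₂‖ := by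
    intro w₁ h₁ w₂ h₂
    exact (hLip w₁ h₁ w₂ h₂).trans (mul_le_mul_of_nonneg_right (le_max_left _ _) (norm_nonneg _))
  set D := max C 1 with hD
  have hD0 : 0 < D := lt_of_lt_of_le one_pos (le_max_right _ _)
  have hnear : ∀ x : ℝ, |x| < R' → 𝓝[auxHD R] (x:ℂ) = 𝓝[auxHD R'] (x:ℂ) := by
    intro x hx
    refine le_antisymm ?_ (nhdsWithin_mono _ (auxHD_mono hR'R))
    rw [nhdsWithin, nhdsWithin, le_inf_iff]
    refine ⟨inf_le_left, ?_⟩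
    rw [le_principal_iff, ← nhdsWithin]
    have : ball (0:ℂ) R' ∈ 𝓝[auxHD R] (x:ℂ) := mem_nhdsWithin_of_mem_nhds
      (isOpen_ball.mem_nhds (by simpa using hx))
    filter_upwards [this, self_mem_nhdsWithin] with w h1 h2
    exact ⟨by simpa using h1, h2.2⟩
  by_cases hall : ∀ x : ℝ, |x| < R' → MapClusterPt ζ (𝓝[auxHD R] (x : ℂ)) Q
  · exfalso
    have hl : ∀ x : ℝ, |x| < R' → Tendsto Q (𝓝[auxHD R'] (x : ℂ)) (𝓝 ζ) := by
      intro x hx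
      have hcl := hall x hx
      rw [hnear x hx] at hcl
      rw [Metric.tendsto_nhds]
      intro ε hε
      set η := ε / (4 * D)
      have hη : 0 < η := by positivity
      have hb : ∀ᶠ w in 𝓝[auxHD R'] (x:ℂ), w ∈ ball (x:ℂ) η ∧ w ∈ auxHD R' :=
        Filter.Eventually.and (mem_nhdsWithin_of_mem_nhds (ball_mem_nhds _ hη)) self_mem_nhdsWithin
      obtain ⟨w0, h01, h02, h03⟩ := ((hcl.frequently (ball_mem_nhds ζ (show 0 < ε/2 by positivity))).and_eventually hb).exists
      filter_upwards [hb] with w hw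
      have h1 := hC w hw.2 w0 h03
      have h2 : ‖w - w0‖ ≤ 2 * η := by
        rw [← dist_eq_norm]
        have := dist_triangle_right w w0 (x:ℂ)
        have := mem_ball.1 hw.1
        have := mem_ball.1 h02
        linarith
      have h3 : D * ‖w - w0‖ ≤ ε / 2 := by
        calc D * ‖w - w0‖ ≤ D * (2 * η) := mul_le_mul_of_nonneg_left h2 hD0.le
          _ = ε / 2 := by simp only [η]; field_simp; ring
      have h4 := mem_ball.1 h01
      have h5 := dist_triangle (Q w) (Q w0) ζ
      rw [dist_eq_norm (Q w) (Q w0)] at h5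
      linarith
    obtain ⟨w, hw, hw2⟩ := aux_halfdisc_const hR' (hQ.mono (auxHD_mono hR'R))
      (fun w hw => hlt w (auxHD_mono hR'R hw)) hζ.le hl
    have := hlt w (auxHD_mono hR'R hw)
    rw [hw2, hζ] at this
    exact lt_irrefl _ this
  · push Not at hall
    obtain ⟨x0, hx0, hncl⟩ := hall
    rw [mapClusterPt_iff_frequently] at hncl
    push Not at hncl
    obtain ⟨s, hs, hncl⟩ := hncl
    obtain ⟨ε, hε, hεs⟩ := Metric.mem_nhds_iff.1 hs
    rw [hnear x0 hx0] at hncl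
    set η := ε / (8 * D)
    have hη : 0 < η := by positivity
    refine ⟨x0, min η ((R' - |x0|)), lt_min hη (by linarith), ?_, ?_⟩
    · have := min_le_right η (R' - |x0|); linarith
    · intro x hx hcl
      have hxη := hx.trans_le (min_le_left _ _)
      have hxR : |x| < R' := by
        have := hx.trans_le (min_le_right _ _)
        have := abs_sub_abs_le_abs_sub x x0
        linarith
      rw [hnear x hxR] at hcl
      have hb : ∀ᶠ w in 𝓝[auxHD R'] (x:ℂ), w ∈ ball (x:ℂ) η ∧ w ∈ auxHD R' :=
        Filter.Eventually.and (mem_nhdsWithin_of_mem_nhds (ball_mem_nhds _ hη)) self_mem_nhdsWithin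
      obtain ⟨w0, h01, h02, h03⟩ := ((hcl.frequently (ball_mem_nhds ζ (show 0 < ε/2 by positivity))).and_eventually hb).exists
      have hcl0 : (x0:ℂ) ∈ closure (auxHD R') := by
        rw [Metric.mem_closure_iff]
        intro e he
        set m := min (e/2) ((R' - |x0|)/2)
        have hm : 0 < m := lt_min (by linarith) (by linarith)
        refine ⟨x0 + m * Complex.I, ⟨?_, by simpa using hm⟩, ?_⟩
        · refine (norm_add_le _ _).trans_lt ?_
          simp only [Complex.norm_real, norm_mul, Complex.norm_I, mul_one, Real.norm_eq_abs, abs_of_pos hm]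
          have := min_le_right (e/2) ((R' - |x0|)/2)
          simp only [m]; linarith
        · simp only [dist_self_add_right, Complex.norm_real, norm_mul, Complex.norm_I, mul_one, Real.norm_eq_abs, abs_of_pos hm]
          have := min_le_left (e/2) ((R' - |x0|)/2)
          simp only [m]; linarith
      haveI : (𝓝[auxHD R'] (x0:ℂ)).NeBot := mem_closure_iff_nhdsWithin_neBot.1 hcl0
      have hb0 : ∀ᶠ w in 𝓝[auxHD R'] (x0:ℂ), w ∈ ball (x0:ℂ) η ∧ w ∈ auxHD R' :=
        Filter.Eventually.and (mem_nhdsWithin_of_mem_nhds (ball_mem_nhds _ hη)) self_mem_nhdsWithin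
      obtain ⟨w, hw1, hw2, hw3⟩ := (hncl.and hb0).exists
      apply hw1
      apply hεs
      have h1 := hC w hw3 w0 h03
      have h2 : ‖w - w0‖ ≤ 3 * η := by
        rw [← dist_eq_norm]
        have := dist_triangle4 w (x0:ℂ) (x:ℂ) w0
        have := mem_ball.1 hw2
        have := mem_ball'.1 h02
        have : dist (x0:ℂ) (x:ℂ) = |x - x0| := by
          rw [dist_comm, Complex.dist_of_im_eq (by simp), Real.dist_eq]; simp
        linarith
      have h3 : D * ‖w - w0‖ ≤ ε * (3/8) := by
        calc D * ‖w - w0‖ ≤ D * (3 * η) := mul_le_mul_of_nonneg_left h2 hD0.le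
          _ = ε * (3/8) := by simp only [η]; field_simp
      have h4 := mem_ball.1 h01
      have h5 := dist_triangle (Q w) (Q w0) ζ
      rw [dist_eq_norm (Q w) (Q w0)] at h5
      rw [mem_ball]
      linarith

/-- Reciprocals of polynomials are polynomially approximable on compacta with connected complement. -/
theorem aux_inv_poly {M : Set ℂ} (hM : IsCompact M) (hMc : IsPreconnected Mᶜ) (P : Polynomial ℂ)
    (hP : ∀ z ∈ M, P.eval z ≠ 0) {ε : ℝ} (hε : 0 < ε) :
    ∃ T : Polynomial ℂ, ∀ z ∈ M, ‖T.eval z - (P.eval z)⁻¹‖ < ε := by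
  have : CompactSpace M := isCompact_iff_compactSpace.1 hM
  rcases M.eq_empty_or_nonempty with h | hne
  · exact ⟨0, by simp [h]⟩
  let S : Subalgebra ℂ C(M, ℂ) := (polynomialFunctions M).topologicalClosure
  have hS : IsClosed (S : Set C(M, ℂ)) := Subalgebra.isClosed_topologicalClosure _
  have hSc : CompleteSpace S := hS.completeSpace_coe
  have hX : Polynomial.toContinuousMapOnAlgHom M Polynomial.X ∈ S :=
    Subalgebra.le_topologicalClosure _ ⟨Polynomial.X, trivial, rfl⟩
  let x : S := ⟨_, hX⟩
  have hsx : spectrum ℂ (x : C(M, ℂ)) = M := by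
    rw [ContinuousMap.spectrum_eq_range]
    ext z; simp [x]
  have hsx2 : spectrum ℂ x = M := by
    have := Subalgebra.spectrum_eq_of_isPreconnected_compl (𝕜 := ℂ) S x (by rw [hsx]; exact hMc)
    rw [this, hsx]
  have hPx : IsUnit (Polynomial.aeval x P) := by
    rw [← spectrum.zero_notMem_iff ℂ]
    have hnt : Nontrivial S := by
      have : Nonempty M := hne.to_subtype
      infer_instance
    rw [spectrum.map_polynomial_aeval_of_nonempty x P (by rw [hsx2]; exact hne), hsx2]
    rintro ⟨z, hz, h⟩
    exact hP z hz h
  obtain ⟨u, hu⟩ := hPx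
  have hval : ((Polynomial.aeval x P : S) : C(M, ℂ)) = Polynomial.toContinuousMapOnAlgHom M P := by
    have h1 : ((Polynomial.aeval x P : S) : C(M, ℂ)) = Polynomial.aeval (x : C(M, ℂ)) P :=
      (Polynomial.aeval_algHom_apply S.val x P).symm
    rw [h1]
    simp only [x]
    rw [Polynomial.aeval_algHom_apply, Polynomial.aeval_X_left_apply]
  have hinv : ((u⁻¹ : Sˣ) : S).1 ∈ closure (polynomialFunctions M : Set C(M, ℂ)) := by
    rw [← Subalgebra.topologicalClosure_coe]
    exact ((u⁻¹ : Sˣ) : S).2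
  obtain ⟨g, hg, hd⟩ := Metric.mem_closure_iff.1 hinv ε hε
  obtain ⟨T, -, rfl⟩ := hg
  refine ⟨T, fun z hz => ?_⟩
  have h1 : ((u : S) * ((u⁻¹ : Sˣ) : S) : S) = 1 := by simp
  have h2 : ((u : S) : C(M, ℂ)) ⟨z, hz⟩ * (((u⁻¹ : Sˣ) : S) : C(M, ℂ)) ⟨z, hz⟩ = 1 := by
    exact congrArg (fun s : S => (s : C(M, ℂ)) ⟨z, hz⟩) h1
  rw [hu, hval] at h2
  have h3 : (((u⁻¹ : Sˣ) : S) : C(M, ℂ)) ⟨z, hz⟩ = (P.eval z)⁻¹ := by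
    exact eq_inv_of_mul_eq_one_right h2
  have h4 := (ContinuousMap.dist_apply_le_dist (f := (((u⁻¹ : Sˣ) : S) : C(M, ℂ)))
    (g := Polynomial.toContinuousMapOnAlgHom M T) ⟨z, hz⟩).trans_lt hd
  rw [h3, dist_comm, dist_eq_norm] at h4
  simpa using h4

/-- locally uniformly polynomially approximable -/
def auxPA (Ω : Set ℂ) (h : ℂ → ℂ) : Prop :=
  ∀ L : Set ℂ, IsCompact L → L ⊆ Ω → ∀ ε > 0, ∃ P : Polynomial ℂ, ∀ z ∈ L, ‖P.eval z - h z‖ < ε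

theorem auxPA_poly (Ω : Set ℂ) (P : Polynomial ℂ) : auxPA Ω (fun z => P.eval z) :=
  fun L _ _ ε hε => ⟨P, fun z _ => by simpa using hε⟩

theorem auxPA_const (Ω : Set ℂ) (c : ℂ) : auxPA Ω (fun _ => c) := by
  simpa using auxPA_poly Ω (Polynomial.C c)

theorem auxPA_closed {Ω : Set ℂ} {h : ℂ → ℂ}
    (H : ∀ L : Set ℂ, IsCompact L → L ⊆ Ω → ∀ ε > 0, ∃ k, auxPA Ω k ∧ ∀ z ∈ L, ‖k z - h z‖ < ε) :
    auxPA Ω h := by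
  intro L hL hLΩ ε hε
  obtain ⟨k, hk, hk2⟩ := H L hL hLΩ (ε/2) (by positivity)
  obtain ⟨P, hP⟩ := hk L hL hLΩ (ε/2) (by positivity)
  refine ⟨P, fun z hz => ?_⟩
  have := norm_sub_le_norm_sub_add_norm_sub (P.eval z) (k z) (h z)
  linarith [hP z hz, hk2 z hz]

/-- filter witnessing approximation -/
theorem auxPA_filter {Ω : Set ℂ} (hΩ : IsOpen Ω) {h : ℂ → ℂ} (hh : auxPA Ω h) :
    ∃ l : Filter (Polynomial ℂ), l.NeBot ∧
      TendstoLocallyUniformlyOn (fun P z => Polynomial.eval z P) h l Ω := by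
  let ι := {x : Set ℂ × ℝ // IsCompact x.1 ∧ x.1 ⊆ Ω ∧ 0 < x.2}
  let s : ι → Set (Polynomial ℂ) := fun i => {P | ∀ z ∈ i.1.1, ‖P.eval z - h z‖ < i.1.2}
  have : Nonempty ι := ⟨⟨(∅, 1), isCompact_empty, empty_subset _, one_pos⟩⟩
  have hdir : Directed (· ≥ ·) (fun i => 𝓟 (s i)) := by
    intro i j
    refine ⟨⟨(i.1.1 ∪ j.1.1, min i.1.2 j.1.2), i.2.1.union j.2.1, union_subset i.2.2.1 j.2.2.1,
      lt_min i.2.2.2 j.2.2.2⟩, ?_, ?_⟩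
    · simp only [ge_iff_le, le_principal_iff, mem_principal, s]
      intro P hP z hz
      exact (hP z (Or.inl hz)).trans_le (min_le_left _ _)
    · simp only [ge_iff_le, le_principal_iff, mem_principal, s]
      intro P hP z hz
      exact (hP z (Or.inr hz)).trans_le (min_le_right _ _)
  refine ⟨⨅ i, 𝓟 (s i), ?_, ?_⟩
  · refine iInf_neBot_of_directed hdir fun i => ?_
    rw [principal_neBot_iff]
    exact hh i.1.1 i.2.1 i.2.2.1 i.1.2 i.2.2.2
  · rw [tendstoLocallyUniformlyOn_iff_forall_isCompact hΩ]
    intro K hKΩ hK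
    rw [Metric.tendstoUniformlyOn_iff]
    intro ε hε
    have : s ⟨(K, ε), hK, hKΩ, hε⟩ ∈ ⨅ i, 𝓟 (s i) := mem_iInf_of_mem _ (mem_principal_self _)
    filter_upwards [this] with P hP z hz
    rw [dist_comm, dist_eq_norm]; exact hP z hz

theorem auxPA_of_tendsto {Ω : Set ℂ} (hΩ : IsOpen Ω) {ι : Type*} {l : Filter ι} [l.NeBot]
    {k : ι → ℂ → ℂ} {h : ℂ → ℂ} (hk : ∀ i, auxPA Ω (k i))
    (ht : TendstoLocallyUniformlyOn k h l Ω) : auxPA Ω h := by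
  apply auxPA_closed
  intro L hL hLΩ ε hε
  have := (tendstoLocallyUniformlyOn_iff_forall_isCompact hΩ).1 ht L hLΩ hL
  obtain ⟨i, hi⟩ := (Metric.tendstoUniformlyOn_iff.1 this ε hε).exists
  exact ⟨k i, hk i, fun z hz => by rw [← dist_eq_norm, dist_comm]; exact hi z hz⟩

theorem auxPA_diff {Ω : Set ℂ} (hΩ : IsOpen Ω) {h : ℂ → ℂ} (hh : auxPA Ω h) :
    DifferentiableOn ℂ h Ω := by
  obtain ⟨l, hl, ht⟩ := auxPA_filter hΩ hh
  exact ht.differentiableOn (Eventually.of_forall fun P => P.differentiable.differentiableOn) hΩ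

theorem auxPA_deriv {Ω : Set ℂ} (hΩ : IsOpen Ω) {h : ℂ → ℂ} (hh : auxPA Ω h) :
    auxPA Ω (deriv h) := by
  obtain ⟨l, hl, ht⟩ := auxPA_filter hΩ hh
  have := ht.deriv (Eventually.of_forall fun P => P.differentiable.differentiableOn) hΩ
  refine auxPA_of_tendsto hΩ (k := fun P : Polynomial ℂ => deriv (fun z => P.eval z)) (fun P => ?_) this
  have : deriv (fun z => P.eval z) = fun z => P.derivative.eval z := by
    ext z; simp
  rw [this]; exact auxPA_poly _ _

theorem auxPA_add {Ω : Set ℂ} {h k : ℂ → ℂ} (hh : auxPA Ω h) (hk : auxPA Ω k) :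
    auxPA Ω (fun z => h z + k z) := by
  intro L hL hLΩ ε hε
  obtain ⟨P, hP⟩ := hh L hL hLΩ (ε/2) (by positivity)
  obtain ⟨T, hT⟩ := hk L hL hLΩ (ε/2) (by positivity)
  refine ⟨P + T, fun z hz => ?_⟩
  have e : (P + T).eval z - (h z + k z) = (P.eval z - h z) + (T.eval z - k z) := by
    rw [Polynomial.eval_add]; ring
  rw [e]
  refine (norm_add_le _ _).trans_lt ?_
  linarith [hP z hz, hT z hz]

theorem auxPA_mul {Ω : Set ℂ} (hΩ : IsOpen Ω) {h k : ℂ → ℂ} (hh : auxPA Ω h) (hk : auxPA Ω k) :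
    auxPA Ω (fun z => h z * k z) := by
  intro L hL hLΩ ε hε
  obtain ⟨A, hA⟩ := hL.exists_bound_of_continuousOn ((auxPA_diff hΩ hh).continuousOn.mono hLΩ)
  obtain ⟨B, hB⟩ := hL.exists_bound_of_continuousOn ((auxPA_diff hΩ hk).continuousOn.mono hLΩ)
  set C := max (max A B) 1
  have hC : 1 ≤ C := le_max_right _ _
  have hAC : A ≤ C := (le_max_left _ _).trans (le_max_left _ _)
  have hBC : B ≤ C := (le_max_right _ _).trans (le_max_left _ _)
  set δ := min 1 (ε / (4 * C))
  have hδ : 0 < δ := by positivity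
  have hδ1 : δ ≤ 1 := min_le_left _ _
  have hδ2 : δ * (4 * C) ≤ ε := by
    rw [← le_div_iff₀ (by positivity)]; exact min_le_right _ _
  obtain ⟨P, hP⟩ := hh L hL hLΩ δ hδ
  obtain ⟨T, hT⟩ := hk L hL hLΩ δ hδ
  refine ⟨P * T, fun z hz => ?_⟩
  have e : (P * T).eval z - (h z * k z) = (P.eval z - h z) * (T.eval z - k z)
      + (P.eval z - h z) * k z + h z * (T.eval z - k z) := by
    rw [Polynomial.eval_mul]; ring
  have h1 := hP z hz
  have h2 := hT z hz
  have h3 := (hA z hz).trans hAC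
  have h4 := (hB z hz).trans hBC
  rw [e]
  refine (norm_add₃_le ..).trans_lt ?_
  rw [norm_mul, norm_mul, norm_mul]
  have i1 : ‖P.eval z - h z‖ * ‖T.eval z - k z‖ ≤ δ * 1 := by gcongr; linarith
  have i2 : ‖P.eval z - h z‖ * ‖k z‖ ≤ δ * C := by gcongr
  have i3 : ‖h z‖ * ‖T.eval z - k z‖ ≤ C * δ := by gcongr
  nlinarith

theorem auxPA_inv {Ω : Set ℂ} (hΩ : IsOpen Ω)
    (hull : ∀ L, IsCompact L → L ⊆ Ω → ∃ M, IsCompact M ∧ L ⊆ M ∧ M ⊆ Ω ∧ IsPreconnected Mᶜ)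
    {h : ℂ → ℂ} (hh : auxPA Ω h) (h0 : ∀ z ∈ Ω, h z ≠ 0) : auxPA Ω (fun z => (h z)⁻¹) := by
  intro L hL hLΩ ε hε
  obtain ⟨M, hM, hLM, hMΩ, hMc⟩ := hull L hL hLΩ
  rcases M.eq_empty_or_nonempty with hem | hne
  · exact ⟨0, fun z hz => by have := hLM hz; rw [hem] at this; exact this.elim⟩
  obtain ⟨z0, hz0, hmin⟩ := hM.exists_isMinOn hne ((auxPA_diff hΩ hh).continuousOn.mono hMΩ).norm
  set m := ‖h z0‖
  have hm : 0 < m := norm_pos_iff.2 (h0 z0 (hMΩ hz0))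
  have hmle : ∀ z ∈ M, m ≤ ‖h z‖ := fun z hz => hmin hz
  set δ := min (m/2) (ε * m^2 / 4)
  have hδ : 0 < δ := by positivity
  obtain ⟨P, hP⟩ := hh M hM hMΩ δ hδ
  have hPm : ∀ z ∈ M, m/2 ≤ ‖P.eval z‖ := by
    intro z hz
    have h1 := hP z hz
    have h2 := hmle z hz
    have h3 := min_le_left (m/2) (ε * m^2 / 4)
    have h4 := norm_sub_norm_le (h z) (P.eval z)
    rw [norm_sub_rev] at h4
    linarith
  have hP0 : ∀ z ∈ M, P.eval z ≠ 0 := fun z hz => norm_pos_iff.1 (by linarith [hPm z hz])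
  obtain ⟨T, hT⟩ := aux_inv_poly hM hMc P hP0 (show 0 < ε/2 by positivity)
  refine ⟨T, fun z hz => ?_⟩
  have hzM := hLM hz
  have h1 := hT z hzM
  have h2 := norm_sub_le_norm_sub_add_norm_sub (T.eval z) (P.eval z)⁻¹ (h z)⁻¹
  have h3 : ‖(P.eval z)⁻¹ - (h z)⁻¹‖ ≤ ε/2 := by
    rw [inv_sub_inv (hP0 z hzM) (h0 z (hMΩ hzM)), norm_div, norm_mul, norm_sub_rev]
    have a1 := hPm z hzM
    have a2 := hmle z hzM
    rw [div_le_iff₀ (mul_pos (by linarith) (by linarith))]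
    have a3 := (hP z hzM).le.trans (min_le_right (m/2) (ε * m^2 / 4))
    have a4 : m/2 * m ≤ ‖P.eval z‖ * ‖h z‖ := by gcongr
    nlinarith
  linarith

theorem auxPA_exp {Ω : Set ℂ} (hΩ : IsOpen Ω) {h : ℂ → ℂ} (hh : auxPA Ω h) :
    auxPA Ω (fun z => Complex.exp (h z)) := by
  have hpow : ∀ n : ℕ, auxPA Ω (fun z => h z ^ n) := by
    intro n
    induction n with
    | zero => simpa using auxPA_const Ω 1
    | succ n ih => simpa [pow_succ] using auxPA_mul hΩ ih hh
  have hsum : ∀ n : ℕ, auxPA Ω (fun z => ∑ i ∈ Finset.range n, h z ^ i / (Nat.factorial i : ℂ)) := by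
    intro n
    induction n with
    | zero => simpa using auxPA_const Ω 0
    | succ n ih =>
      simp only [Finset.sum_range_succ]
      refine auxPA_add ih ?_
      simp only [div_eq_mul_inv]
      exact auxPA_mul hΩ (hpow n) (auxPA_const Ω _)
  apply auxPA_closed
  intro L hL hLΩ ε hε
  obtain ⟨A, hA⟩ := hL.exists_bound_of_continuousOn ((auxPA_diff hΩ hh).continuousOn.mono hLΩ)
  have h1 : Tendsto (fun n : ℕ => (max A 0) ^ n / (Nat.factorial n : ℝ) * 2) atTop (𝓝 0) := by
    simpa using (FloorSemiring.tendsto_pow_div_factorial_atTop (max A 0)).mul_const 2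
  obtain ⟨n, hn, hn2⟩ := ((h1.eventually_lt_const hε).and
    (eventually_ge_atTop (2 * ⌈max A 0⌉₊))).exists
  refine ⟨_, hsum n, fun z hz => ?_⟩
  rw [norm_sub_rev]
  have hz' : ‖h z‖ ≤ max A 0 := (hA z hz).trans (le_max_left _ _)
  have h2 : ‖h z‖ / (n.succ : ℕ) ≤ 1 / 2 := by
    rw [div_le_iff₀ (by positivity)]
    have : (2 * (⌈max A 0⌉₊ : ℝ)) ≤ n := by exact_mod_cast hn2
    have := Nat.le_ceil (max A 0)
    push_cast; linarith
  refine (Complex.exp_bound' h2).trans_lt (lt_of_le_of_lt ?_ hn)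
  gcongr

theorem auxPA_primitive {Ω : Set ℂ} (hΩ : IsOpen Ω) (hc : IsPreconnected Ω) {k : ℂ → ℂ}
    (hk : auxPA Ω k) {z0 : ℂ} (hz0 : z0 ∈ Ω) :
    ∃ g, auxPA Ω g ∧ ∀ z ∈ Ω, HasDerivAt g (k z) z := by
  obtain ⟨l, hl, ht⟩ := auxPA_filter hΩ hk
  have hprim : ∀ P : Polynomial ℂ, ∃ T : Polynomial ℂ, T.derivative = P ∧ T.eval z0 = 0 := by
    intro P
    obtain ⟨T, hT⟩ : ∃ T : Polynomial ℂ, T.derivative = P := by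
      induction P using Polynomial.induction_on' with
      | add p q hp hq =>
        obtain ⟨a, rfl⟩ := hp
        obtain ⟨b, rfl⟩ := hq
        exact ⟨a + b, by simp⟩
      | monomial n a =>
        refine ⟨Polynomial.monomial (n+1) (a / (n+1)), ?_⟩
        rw [Polynomial.derivative_monomial]
        have : (n:ℂ) + 1 ≠ 0 := by exact_mod_cast Nat.succ_ne_zero n
        simp only [Nat.add_sub_cancel]
        push_cast
        rw [div_mul_cancel₀ _ this]
    exact ⟨T - Polynomial.C (T.eval z0), by simp [hT], by simp⟩
  choose T hTd hT0 using hprim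
  have hder : ∀ P : Polynomial ℂ, ∀ z, HasDerivAt (fun z => (T P).eval z) (P.eval z) z := by
    intro P z
    have := (T P).hasDerivAt z
    rwa [hTd] at this
  have hball : ∀ z ∈ Ω, ∃ r > 0, ball z r ⊆ Ω ∧
      UniformCauchySeqOn (fun (P : Polynomial ℂ) z => P.eval z) l (ball z r) := by
    intro z hz
    obtain ⟨r, hr, hrΩ⟩ := Metric.isOpen_iff.1 hΩ z hz
    have h1 : closedBall z (r/2) ⊆ Ω := (closedBall_subset_ball (by linarith)).trans hrΩ
    refine ⟨r/2, by positivity, ball_subset_closedBall.trans h1, ?_⟩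
    have := (tendstoLocallyUniformlyOn_iff_forall_isCompact hΩ).1 ht _ h1 (isCompact_closedBall _ _)
    exact (this.mono ball_subset_closedBall).uniformCauchySeqOn
  let C : Set ℂ := {z | Cauchy (map (fun P => (T P).eval z) l)}
  have hball2 : ∀ z ∈ Ω, ∃ r > 0, ball z r ⊆ Ω ∧ ∀ x ∈ ball z r, x ∈ C → ∀ y ∈ ball z r, y ∈ C := by
    intro z hz
    obtain ⟨r, hr, hrΩ, hu⟩ := hball z hz
    refine ⟨r, hr, hrΩ, fun x hx hxC y hy => ?_⟩
    obtain ⟨s, hs, hsr⟩ : ∃ s > 0, ball x s ⊆ ball z r := Metric.isOpen_iff.1 isOpen_ball x hx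
    have hu' : UniformCauchySeqOn (fun (P : Polynomial ℂ) z =>
        (ContinuousLinearMap.toSpanSingleton ℂ (P.eval z) : ℂ →L[ℂ] ℂ)) l (ball z r) :=
      (ContinuousLinearMap.toSpanSingletonCLE : ℂ ≃L[ℂ] (ℂ →L[ℂ] ℂ)).toContinuousLinearMap.uniformContinuous.comp_uniformCauchySeqOn hu
    exact cauchy_map_of_uniformCauchySeqOn_fderiv (𝕜 := ℂ) (E := ℂ) (G := ℂ) (f := fun P z => (T P).eval z) isOpen_ball
      (convex_ball z r).isPreconnected hu' (fun P y _ => (hder P y).hasFDerivAt) hx hy hxC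
  have hsub : Ω ⊆ C := by
    have hz0C : z0 ∈ C := by
      have : (fun P => (T P).eval z0) = fun _ => (0:ℂ) := by ext P; exact hT0 P
      simp only [C, mem_ofPred_eq, this]
      exact Filter.Tendsto.cauchy_map tendsto_const_nhds
    refine hc.subset_of_closure_inter_subset (s := Ω) (u := {z | z ∈ Ω ∧ z ∈ C}) ?_ ⟨z0, hz0, hz0, hz0C⟩ ?_ |>.trans (fun z hz => hz.2)
    · rw [Metric.isOpen_iff]
      rintro z ⟨hz, hzC⟩
      obtain ⟨r, hr, hrΩ, h⟩ := hball2 z hz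
      exact ⟨r, hr, fun y hy => ⟨hrΩ hy, h z (mem_ball_self hr) hzC y hy⟩⟩
    · rintro z ⟨hz, hzΩ⟩
      obtain ⟨r, hr, hrΩ, h⟩ := hball2 z hzΩ
      obtain ⟨y, hy, hyd⟩ := Metric.mem_closure_iff.1 hz r hr
      exact ⟨hzΩ, h y (by rwa [mem_ball, dist_comm]) hy.2 z (mem_ball_self hr)⟩
  have hlim : ∀ z, ∃ g, z ∈ Ω → Tendsto (fun P => (T P).eval z) l (𝓝 g) := by
    intro z
    by_cases hz : z ∈ Ω
    · obtain ⟨g, hg⟩ := cauchy_map_iff_exists_tendsto.1 (hsub hz)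
      exact ⟨g, fun _ => hg⟩
    · exact ⟨0, fun h => (hz h).elim⟩
  choose g hg using hlim
  have htg : TendstoLocallyUniformlyOn (fun P z => (T P).eval z) g l Ω := by
    intro u hu x hx
    obtain ⟨r, hr, hrΩ, hux⟩ := hball x hx
    have h1 := uniformCauchySeqOn_ball_of_deriv (f := fun (P : Polynomial ℂ) z => (T P).eval z) hux (fun P y _ => hder P y) (hsub hx)
    exact ⟨ball x r, mem_nhdsWithin_of_mem_nhds (ball_mem_nhds x hr),
      h1.tendstoUniformlyOn_of_tendsto (fun y hy => hg y (hrΩ hy)) u hu⟩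
  refine ⟨g, auxPA_of_tendsto hΩ (fun P => auxPA_poly Ω (T P)) htg, fun z hz => ?_⟩
  exact hasDerivAt_of_tendstoLocallyUniformlyOn hΩ ht
    (Eventually.of_forall fun P z _ => hder P z) (fun z hz => hg z hz) hz

theorem auxPA_sqrt {Ω : Set ℂ} (hΩ : IsOpen Ω) (hc : IsPreconnected Ω)
    (hull : ∀ L, IsCompact L → L ⊆ Ω → ∃ M, IsCompact M ∧ L ⊆ M ∧ M ⊆ Ω ∧ IsPreconnected Mᶜ)
    {h : ℂ → ℂ} (hh : auxPA Ω h) (h0 : ∀ z ∈ Ω, h z ≠ 0) {z0 : ℂ} (hz0 : z0 ∈ Ω) :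
    ∃ g, auxPA Ω g ∧ ∀ z ∈ Ω, g z ^ 2 = h z := by
  obtain ⟨g, hg, hgd⟩ := auxPA_primitive hΩ hc
    (auxPA_mul hΩ (auxPA_deriv hΩ hh) (auxPA_inv hΩ hull hh h0)) hz0
  have hd : ∀ z ∈ Ω, HasDerivAt (fun z => h z * Complex.exp (-g z)) 0 z := by
    intro z hz
    have h1 := ((auxPA_diff hΩ hh).differentiableAt (hΩ.mem_nhds hz)).hasDerivAt
    have h2 := h1.fun_mul ((hgd z hz).fun_neg.cexp)
    refine h2.congr_deriv ?_
    have := h0 z hz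
    field_simp
    ring
  obtain ⟨c, hcst⟩ := hΩ.exists_is_const_of_deriv_eq_zero hc
    (fun z hz => (hd z hz).differentiableAt.differentiableWithinAt) (fun z hz => (hd z hz).deriv)
  obtain ⟨d, hd2⟩ := IsSquare.exists_sq c (IsAlgClosed.exists_pow_nat_eq c two_pos |>.elim fun d h => ⟨d, by rw [← h, sq]⟩)
  refine ⟨fun z => d * Complex.exp (2⁻¹ * g z), auxPA_mul hΩ (auxPA_const Ω d)
    (auxPA_exp hΩ (auxPA_mul hΩ (auxPA_const Ω _) hg)), fun z hz => ?_⟩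
  have h1 := hcst z hz
  rw [mul_pow, ← hd2, ← h1, ← Complex.exp_nat_mul, mul_assoc, ← Complex.exp_add]
  have : -g z + ((2:ℕ):ℂ) * (2⁻¹ * g z) = 0 := by push_cast; ring
  rw [this, Complex.exp_zero, mul_one]

/-- admissible class for Koebe argument -/
structure AuxAdm (Ω : Set ℂ) (F : ℂ → ℂ) : Prop where
  pa : auxPA Ω F
  inj : InjOn F Ω
  maps : ∀ z ∈ Ω, ‖F z‖ < 1
  zero : F 0 = 0

/-- pointwise convergence of bounded holomorphic functions is locally uniform -/
theorem aux_montel {Ω : Set ℂ} (hΩ : IsOpen Ω) {ι : Type*} {l : Filter ι} {F : ι → ℂ → ℂ} {f : ℂ → ℂ}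
    (hF : ∀ n, DifferentiableOn ℂ (F n) Ω) (hb : ∀ n, ∀ z ∈ Ω, ‖F n z‖ < 1)
    (ht : ∀ z ∈ Ω, Tendsto (fun n => F n z) l (𝓝 (f z))) : TendstoLocallyUniformlyOn F f l Ω := by
  have heq : ∀ z ∈ Ω, EquicontinuousAt F z := by
    intro z hz
    obtain ⟨r, hr, hrΩ⟩ := Metric.isOpen_iff.1 hΩ z hz
    have hlip : ∀ n, ∀ w ∈ ball z (r/2), dist (F n z) (F n w) ≤ 2 / r * dist z w := by
      intro n w hw
      have hder : ∀ v ∈ ball z (r/2), ‖deriv (F n) v‖ ≤ 2/r := by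
        intro v hv
        have hvb : ball v (r/2) ⊆ Ω := by
          refine (ball_subset_ball' ?_).trans hrΩ
          rw [mem_ball] at hv; linarith
        have h1 := aux_schwarz_pick (by positivity) ((hF n).mono hvb) (fun u hu => hb n u (hvb hu))
        refine h1.trans ?_
        rw [div_le_div_iff₀ (by positivity) hr]
        nlinarith [sq_nonneg ‖F n v‖]
      rw [dist_eq_norm, dist_eq_norm]
      exact (convex_ball z (r/2)).norm_image_sub_le_of_norm_deriv_le
        (fun v hv => (hF n).differentiableAt (hΩ.mem_nhds (hrΩ (ball_subset_ball (by linarith) hv)))) hder hw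
          (mem_ball_self (by positivity))
    rw [Metric.equicontinuousAt_iff]
    intro ε hε
    refine ⟨min (r/2) (ε * r / 4), by positivity, fun x hx n => ?_⟩
    have hx1 := hx.trans_le (min_le_left _ _)
    have hx2 := hx.trans_le (min_le_right _ _)
    have h1 := hlip n x hx1
    rw [dist_comm] at hx2
    refine h1.trans_lt ?_
    calc 2 / r * dist z x < 2 / r * (ε * r / 4) := by gcongr
      _ = ε / 2 := by field_simp; ring
      _ < ε := by linarith
  rw [tendstoLocallyUniformlyOn_iff_forall_isCompact hΩ]
  intro K hK hKc
  have h1 := (EquicontinuousOn.tendsto_uniformOnFun_iff_pi' (𝔖 := {K}) (F := F) (by simpa using hKc)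
    (by rintro K rfl x hx; exact (heq x (hK hx)).equicontinuousWithinAt K) l f).2 (by
      rw [tendsto_pi_nhds]
      intro x
      have hx : x.1 ∈ Ω := hK (by simpa using x.2)
      exact ht x.1 hx)
  exact (UniformOnFun.tendsto_iff_tendstoUniformlyOn.1 h1) K rfl

/-- Hurwitz: injectivity passes to nonconstant limits -/
theorem aux_hurwitz {Ω : Set ℂ} (hΩ : IsOpen Ω) (hc : IsPreconnected Ω) {ι : Type*} {l : Filter ι}
    [l.NeBot] {F : ι → ℂ → ℂ} {f : ℂ → ℂ}
    (hF : ∀ n, DifferentiableOn ℂ (F n) Ω) (hinj : ∀ n, InjOn (F n) Ω)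
    (ht : TendstoLocallyUniformlyOn F f l Ω) {z0 : ℂ} (hz0 : z0 ∈ Ω) (hnc : deriv f z0 ≠ 0) :
    InjOn f Ω := by
  have hfd : DifferentiableOn ℂ f Ω := ht.differentiableOn (Eventually.of_forall hF) hΩ
  intro a ha b hb hab
  by_contra hne
  have hga : AnalyticOnNhd ℂ (fun z => f z - f b) Ω :=
    (hfd.sub_const (f b)).analyticOnNhd hΩ
  have hev : ∀ᶠ z in 𝓝[≠] a, f z - f b ≠ 0 := by
    rcases (hga a ha).eventually_eq_zero_or_eventually_ne_zero with h | h
    · exfalso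
      have h1 := hga.eqOn_zero_of_preconnected_of_eventuallyEq_zero hc ha h
      apply hnc
      have : f =ᶠ[𝓝 z0] fun _ => f b := by
        filter_upwards [hΩ.mem_nhds hz0] with z hz
        exact sub_eq_zero.1 (h1 hz)
      rw [this.deriv_eq]; simp
    · exact h
  rw [eventually_nhdsWithin_iff, Metric.eventually_nhds_iff] at hev
  obtain ⟨r, hr, hev⟩ := hev
  obtain ⟨r2, hr2, hr2Ω⟩ := Metric.isOpen_iff.1 hΩ a ha
  have hdab : 0 < dist b a := dist_pos.2 (Ne.symm hne)
  set s := min (r/2) (min (r2/2) (dist b a / 2)) with hs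
  have hs0 : 0 < s := by positivity
  have hsr : s < r := (min_le_left _ _).trans_lt (by linarith)
  have hsr2 : s < r2 := ((min_le_right _ _).trans (min_le_left _ _)).trans_lt (by linarith)
  have hsd : s < dist b a := ((min_le_right _ _).trans (min_le_right _ _)).trans_lt (by linarith)
  have hcb : closedBall a s ⊆ Ω := (closedBall_subset_ball hsr2).trans hr2Ω
  have hsph : sphere a s ⊆ Ω := sphere_subset_closedBall.trans hcb
  have hsne : (sphere a s).Nonempty := (NormedSpace.sphere_nonempty).2 hs0.le
  obtain ⟨w0, hw0, hmin⟩ := (isCompact_sphere a s).exists_isMinOn hsne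
    (f := fun z => ‖f z - f b‖) ((hfd.continuousOn.mono hsph).sub continuousOn_const).norm
  set δ := ‖f w0 - f b‖
  have hδ : 0 < δ := by
    apply norm_pos_iff.2
    apply hev
    · rw [mem_sphere.1 hw0]; exact hsr
    · intro h
      have := mem_sphere.1 hw0
      rw [h, dist_self] at this; linarith
  have hu := (tendstoLocallyUniformlyOn_iff_forall_isCompact hΩ).1 ht _ hsph (isCompact_sphere a s)
  have e1 := Metric.tendstoUniformlyOn_iff.1 hu (δ/4) (by positivity)
  have e2 := (Metric.tendsto_nhds.1 (ht.tendsto_at hb)) (δ/4) (by positivity)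
  have e3 := (Metric.tendsto_nhds.1 (ht.tendsto_at ha)) (δ/8) (by positivity)
  have e4 := (Metric.tendsto_nhds.1 (ht.tendsto_at hb)) (δ/8) (by positivity)
  obtain ⟨n, h1, h2, h3, h4⟩ := (e1.and (e2.and (e3.and e4))).exists
  have hnz : ∀ z ∈ closedBall a s, F n z - F n b ≠ 0 := by
    intro z hz h
    have := hinj n (hcb hz) hb (sub_eq_zero.1 h)
    rw [this, mem_closedBall] at hz
    linarith
  have hlow : ∀ z ∈ sphere a s, δ/2 ≤ ‖F n z - F n b‖ := by
    intro z hz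
    have a1 : δ ≤ ‖f z - f b‖ := hmin hz
    have a2 := h1 z hz
    rw [dist_eq_norm] at a2 h2
    have : f z - f b = (f z - F n z) + (F n z - F n b) + (F n b - f b) := by ring
    rw [this] at a1
    have := a1.trans (norm_add₃_le ..)
    linarith
  have hmax := Complex.norm_le_of_forall_mem_frontier_norm_le (f := fun z => (F n z - F n b)⁻¹)
    (U := ball a s) isBounded_ball (C := 2/δ) ?_ ?_ (subset_closure (mem_ball_self hs0))
  · rw [norm_inv] at hmax
    have hpos : 0 < ‖F n a - F n b‖ := norm_pos_iff.2 (hnz a (mem_closedBall_self hs0.le))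
    rw [inv_le_comm₀ hpos (by positivity), inv_div] at hmax
    rw [dist_eq_norm] at h3 h4
    have : F n a - F n b = (F n a - f a) - (F n b - f b) := by rw [hab]; ring
    rw [this] at hmax
    have := hmax.trans (norm_sub_le _ _)
    linarith
  · apply DifferentiableOn.diffContOnCl
    rw [closure_ball a hs0.ne']
    intro z hz
    exact ((((hF n).mono hcb) z hz).sub_const _).inv (hnz z hz)
  · rw [frontier_ball a hs0.ne']
    intro z hz
    rw [norm_inv, inv_le_comm₀ (norm_pos_iff.2 (hnz z (sphere_subset_closedBall hz))) (by positivity), inv_div]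
    exact hlow z hz

theorem aux_koebe {Ω : Set ℂ} (hΩ : IsOpen Ω) (hc : IsPreconnected Ω) (h0 : (0:ℂ) ∈ Ω)
    (hull : ∀ L, IsCompact L → L ⊆ Ω → ∃ M, IsCompact M ∧ L ⊆ M ∧ M ⊆ Ω ∧ IsPreconnected Mᶜ)
    {F : ℂ → ℂ} (hF : AuxAdm Ω F) (hd : deriv F 0 ≠ 0) {a : ℂ} (ha : ‖a‖ < 1)
    (haF : ∀ z ∈ Ω, F z ≠ a) : ∃ G, AuxAdm Ω G ∧ ‖deriv F 0‖ < ‖deriv G 0‖ := by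
  have mobPA : ∀ {k : ℂ → ℂ} {b : ℂ}, auxPA Ω k → ‖b‖ < 1 → (∀ z ∈ Ω, ‖k z‖ < 1) →
      auxPA Ω (fun z => (k z - b) / (1 - (starRingEnd ℂ) b * k z)) := by
    intro k b hk hb hk1
    simp only [div_eq_mul_inv]
    refine auxPA_mul hΩ ?_ ?_
    · simpa [sub_eq_add_neg] using auxPA_add hk (auxPA_const Ω (-b))
    · refine auxPA_inv hΩ hull ?_ (fun z hz => aux_mob_den hb (hk1 z hz).le)
      have := auxPA_add (auxPA_const Ω 1) (auxPA_mul hΩ (auxPA_const Ω (-(starRingEnd ℂ) b)) hk)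
      simpa [sub_eq_add_neg] using this
  have mobInj : ∀ {b x y : ℂ}, ‖b‖ < 1 → ‖x‖ < 1 → ‖y‖ < 1 →
      (x - b) / (1 - (starRingEnd ℂ) b * x) = (y - b) / (1 - (starRingEnd ℂ) b * y) → x = y := by
    intro b x y hb hx hy h
    rw [div_eq_div_iff (aux_mob_den hb hx.le) (aux_mob_den hb hy.le)] at h
    have h2 : (x - y) * (1 - (starRingEnd ℂ) b * b) = 0 := by linear_combination h
    rcases mul_eq_zero.1 h2 with h3 | h3
    · exact sub_eq_zero.1 h3
    · exact (aux_mob_den hb hb.le h3).elim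
  set h : ℂ → ℂ := fun z => (F z - a) / (1 - (starRingEnd ℂ) a * F z) with hh
  have hhPA : auxPA Ω h := mobPA hF.pa ha hF.maps
  have hh0 : ∀ z ∈ Ω, h z ≠ 0 := fun z hz =>
    div_ne_zero (sub_ne_zero.2 (haF z hz)) (aux_mob_den ha (hF.maps z hz).le)
  have hh1 : ∀ z ∈ Ω, ‖h z‖ < 1 := fun z hz => aux_mob_norm ha (hF.maps z hz)
  obtain ⟨g, hg, hg2⟩ := auxPA_sqrt hΩ hc hull hhPA hh0 h0
  have hg1 : ∀ z ∈ Ω, ‖g z‖ < 1 := by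
    intro z hz
    have := hh1 z hz
    rw [← hg2 z hz, norm_pow] at this
    nlinarith [norm_nonneg (g z)]
  set b := g 0 with hb
  have hb1 : ‖b‖ < 1 := hg1 0 h0
  refine ⟨fun z => (g z - b) / (1 - (starRingEnd ℂ) b * g z), ⟨mobPA hg hb1 hg1, ?_,
    fun z hz => aux_mob_norm hb1 (hg1 z hz), by simp [hb]⟩, ?_⟩
  · intro x hx y hy hxy
    have h1 := mobInj hb1 (hg1 x hx) (hg1 y hy) hxy
    have h2 : h x = h y := by rw [← hg2 x hx, ← hg2 y hy, h1]
    exact hF.inj hx hy (mobInj ha (hF.maps x hx) (hF.maps y hy) h2)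
  · have hFd := ((auxPA_diff hΩ hF.pa).differentiableAt (hΩ.mem_nhds h0)).hasDerivAt
    have hgd := ((auxPA_diff hΩ hg).differentiableAt (hΩ.mem_nhds h0)).hasDerivAt
    have d1 := aux_mob_deriv (a := a) hFd (aux_mob_den ha (hF.maps 0 h0).le)
    have d2 := aux_mob_deriv (a := b) hgd (aux_mob_den hb1 hb1.le)
    have d3 := hgd.fun_pow 2
    have d4 : HasDerivAt (fun z => g z ^ 2) (deriv F 0 * (1 - ‖a‖ ^ 2) / (1 - (starRingEnd ℂ) a * F 0) ^ 2) 0 := by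
      refine d1.congr_of_eventuallyEq ?_
      filter_upwards [hΩ.mem_nhds h0] with z hz
      exact hg2 z hz
    have d5 := d3.unique d4
    rw [hF.zero] at d5
    rw [d2.deriv, ← hb]
    have hba : ‖b‖ ^ 2 = ‖a‖ := by
      have := hg2 0 h0
      rw [← hb] at this
      rw [← norm_pow, this, hh]; simp [hF.zero]
    have e : 1 - (starRingEnd ℂ) b * b = ((1 - ‖b‖ ^ 2 : ℝ) : ℂ) := by
      rw [mul_comm, Complex.mul_conj, Complex.normSq_eq_norm_sq]; push_cast; rfl
    have e2 : (1 - (‖b‖ : ℂ) ^ 2) = ((1 - ‖b‖ ^ 2 : ℝ) : ℂ) := by push_cast; rfl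
    have e3 : (1 - (‖a‖ : ℂ) ^ 2) = ((1 - ‖a‖ ^ 2 : ℝ) : ℂ) := by push_cast; rfl
    have hpb : 0 < 1 - ‖b‖ ^ 2 := by nlinarith [norm_nonneg b]
    have hpa : 0 < 1 - ‖a‖ ^ 2 := by nlinarith [norm_nonneg a]
    have d6 : 2 * ‖b‖ * ‖deriv g 0‖ = ‖deriv F 0‖ * (1 - ‖a‖^2) := by
      have := congrArg norm d5
      rw [e3] at this
      simp only [mul_zero, sub_zero, one_pow, div_one, norm_mul, Complex.norm_real,
        Real.norm_of_nonneg hpa.le] at this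
      simpa [hb] using this
    rw [e, e2, norm_div, norm_mul, norm_pow, Complex.norm_real, Real.norm_of_nonneg hpb.le,
      lt_div_iff₀ (by positivity)]
    have hFp : 0 < ‖deriv F 0‖ := norm_pos_iff.2 hd
    have hb0 : 0 < ‖b‖ := by
      rw [norm_pos_iff, hb]; intro hz
      have := hg2 0 h0
      rw [hz] at this
      exact hh0 0 h0 (by rw [← this]; simp)
    set t := ‖b‖
    rw [← hba] at d6
    have ht1 : 0 < 1 - t := by linarith
    have key : 2 * t * (‖deriv F 0‖ * (1 - t ^ 2)) < 2 * t * ‖deriv g 0‖ := by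
      rw [d6]
      have : 2 * t < 1 + t ^ 2 := by nlinarith
      have := mul_lt_mul_of_pos_left this (mul_pos hFp hpb)
      nlinarith
    have key2 := lt_of_mul_lt_mul_left key (by positivity)
    nlinarith [mul_lt_mul_of_pos_right key2 hpb]

theorem aux_rmt {Ω : Set ℂ} (hΩ : IsOpen Ω) (hc : IsPreconnected Ω) (h0 : (0:ℂ) ∈ Ω)
    (hbd : Bornology.IsBounded Ω)
    (hull : ∀ L, IsCompact L → L ⊆ Ω → ∃ M, IsCompact M ∧ L ⊆ M ∧ M ⊆ Ω ∧ IsPreconnected Mᶜ) :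
    ∃ F : ℂ → ℂ, DifferentiableOn ℂ F Ω ∧ InjOn F Ω ∧ F '' Ω = ball 0 1 := by
  obtain ⟨r, hr, hrΩ⟩ := Metric.isOpen_iff.1 hΩ 0 h0
  set S : Set ℝ := {t | ∃ F, AuxAdm Ω F ∧ t = ‖deriv F 0‖} with hS
  have hbdd : BddAbove S := by
    refine ⟨1 / r, ?_⟩
    rintro t ⟨F, hF, rfl⟩
    refine (aux_schwarz_pick hr ((auxPA_diff hΩ hF.pa).mono hrΩ) (fun v hv => hF.maps v (hrΩ hv))).trans ?_
    gcongr
    nlinarith [sq_nonneg ‖F 0‖]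
  obtain ⟨B, hB, hΩB⟩ := hbd.exists_pos_norm_lt
  have hmem : B⁻¹ ∈ S := by
    refine ⟨fun z => (B:ℂ)⁻¹ * z, ⟨?_, ?_, ?_, by simp⟩, ?_⟩
    · have e : (fun z : ℂ => (B:ℂ)⁻¹ * z)
          = fun z => Polynomial.eval z (Polynomial.C ((B:ℂ)⁻¹) * Polynomial.X) := by
        ext z; rw [Polynomial.eval_mul, Polynomial.eval_C, Polynomial.eval_X]
      rw [e]; exact auxPA_poly Ω _
    · intro x _ y _ hxy
      exact mul_left_cancel₀ (inv_ne_zero (by exact_mod_cast hB.ne')) hxy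
    · intro z hz
      rw [norm_mul, norm_inv, Complex.norm_real, Real.norm_of_nonneg hB.le, inv_mul_lt_iff₀ hB, mul_one]
      exact hΩB z hz
    · have : HasDerivAt (fun z : ℂ => (B:ℂ)⁻¹ * z) ((B:ℂ)⁻¹) 0 := by
        simpa using (hasDerivAt_id (0:ℂ)).const_mul ((B:ℂ)⁻¹)
      rw [this.deriv, norm_inv, Complex.norm_real, Real.norm_of_nonneg hB.le]
  obtain ⟨u, -, -, hut, huS⟩ := (isLUB_csSup ⟨_, hmem⟩ hbdd).exists_seq_monotone_tendsto ⟨_, hmem⟩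
  choose F hF hFu using huS
  set m := sSup S
  have hm : 0 < m := (inv_pos.2 hB).trans_le (le_csSup hbdd hmem)
  let l : Filter ℕ := (hyperfilter ℕ : Filter ℕ)
  have hl : l ≤ atTop := Nat.hyperfilter_le_atTop
  have hlim : ∀ z, ∃ g, z ∈ Ω → Tendsto (fun n => F n z) l (𝓝 g) := by
    intro z
    by_cases hz : z ∈ Ω
    · obtain ⟨g, -, hg⟩ := (isCompact_closedBall (0:ℂ) 1).ultrafilter_le_nhds'
        ((hyperfilter ℕ).map (fun n => F n z))
        (Ultrafilter.mem_map.2 (Filter.univ_mem' fun n => by simpa using ((hF n).maps z hz).le))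
      exact ⟨g, fun _ => hg⟩
    · exact ⟨0, fun h => (hz h).elim⟩
  choose f hf using hlim
  have hFd := fun n => auxPA_diff hΩ (hF n).pa
  have hlu : TendstoLocallyUniformlyOn F f l Ω := aux_montel hΩ hFd (fun n => (hF n).maps) hf
  have hfd : DifferentiableOn ℂ f Ω := hlu.differentiableOn (Eventually.of_forall hFd) hΩ
  have hder : ‖deriv f 0‖ = m := by
    have h1 := ((hlu.deriv (Eventually.of_forall hFd) hΩ).tendsto_at h0).norm
    have h2 : Tendsto (fun n => ‖deriv (F n) 0‖) l (𝓝 m) := by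
      have : (fun n => ‖deriv (F n) 0‖) = u := by ext n; exact (hFu n).symm
      rw [this]; exact hut.mono_left hl
    exact tendsto_nhds_unique h1 h2
  have hd0 : deriv f 0 ≠ 0 := by rw [← norm_pos_iff, hder]; exact hm
  have hinj : InjOn f Ω := aux_hurwitz hΩ hc hFd (fun n => (hF n).inj) hlu h0 hd0
  have hle : ∀ z ∈ Ω, ‖f z‖ ≤ 1 := fun z hz =>
    le_of_tendsto (hf z hz).norm (Eventually.of_forall fun n => ((hF n).maps z hz).le)
  have hopen : IsOpen (f '' Ω) := by
    rcases (hfd.analyticOnNhd hΩ).is_constant_or_isOpen hc with ⟨w, hw⟩ | h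
    · exfalso
      apply hd0
      have : f =ᶠ[𝓝 0] fun _ => w := by
        filter_upwards [hΩ.mem_nhds h0] with z hz using hw z hz
      rw [this.deriv_eq]; simp
    · exact h Ω subset_rfl hΩ
  have hmaps : ∀ z ∈ Ω, ‖f z‖ < 1 := by
    have h1 : f '' Ω ⊆ closedBall 0 1 := by
      rintro _ ⟨z, hz, rfl⟩; simpa using hle z hz
    have h2 : f '' Ω ⊆ ball 0 1 := by
      rw [← interior_closedBall (0:ℂ) one_ne_zero]
      exact interior_maximal h1 hopen
    intro z hz
    simpa using h2 ⟨z, hz, rfl⟩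
  have hadm : AuxAdm Ω f := ⟨auxPA_of_tendsto hΩ (fun n => (hF n).pa) hlu, hinj, hmaps, by
    have := hf 0 h0
    simp only [(hF _).zero] at this
    exact (tendsto_nhds_unique this tendsto_const_nhds)⟩
  refine ⟨f, hfd, hinj, ?_⟩
  ext a
  constructor
  · rintro ⟨z, hz, rfl⟩; simpa using hmaps z hz
  · intro ha
    by_contra hna
    obtain ⟨G, hG, hlt⟩ := aux_koebe hΩ hc h0 hull hadm hd0 (a := a) (by simpa using ha)
      (fun z hz h => hna ⟨z, hz, h⟩)
    have := le_csSup hbdd (show ‖deriv G 0‖ ∈ S from ⟨G, hG, rfl⟩)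
    rw [hder] at hlt
    linarith

theorem aux_inverse {Ω : Set ℂ} (hΩ : IsOpen Ω) {F : ℂ → ℂ}
    (hF : DifferentiableOn ℂ F Ω) (hinj : InjOn F Ω) (him : F '' Ω = ball 0 1) :
    ∃ f : ℂ → ℂ, DifferentiableOn ℂ f (ball 0 1) ∧ (∀ w ∈ ball (0:ℂ) 1, f w ∈ Ω ∧ F (f w) = w) ∧
      ∀ z ∈ Ω, f (F z) = z := by
  have hex : ∀ w, ∃ z, w ∈ ball (0:ℂ) 1 → z ∈ Ω ∧ F z = w := by
    intro w
    by_cases hw : w ∈ ball (0:ℂ) 1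
    · rw [← him] at hw
      obtain ⟨z, hz, h⟩ := hw
      exact ⟨z, fun _ => ⟨hz, h⟩⟩
    · exact ⟨0, fun h => (hw h).elim⟩
  choose f hf using hex
  have hFm : ∀ z ∈ Ω, F z ∈ ball (0:ℂ) 1 := fun z hz => him ▸ ⟨z, hz, rfl⟩
  have hleft : ∀ z ∈ Ω, f (F z) = z := fun z hz =>
    hinj (hf _ (hFm z hz)).1 hz (hf _ (hFm z hz)).2
  have hnc : ∀ z ∈ Ω, ¬ ∀ᶠ w in 𝓝 z, F w = F z := by
    intro z hz h
    have h1 : ∀ᶠ w in 𝓝 z, w = z := by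
      filter_upwards [h, hΩ.mem_nhds hz] with w hw hwΩ using hinj hwΩ hz hw
    have h2 : ∀ᶠ w in 𝓝[≠] z, w = z := h1.filter_mono nhdsWithin_le_nhds
    obtain ⟨w, hw, hw2⟩ := (h2.and self_mem_nhdsWithin).exists
    exact hw2 hw
  have hana : AnalyticOnNhd ℂ F Ω := hF.analyticOnNhd hΩ
  have hcont : ∀ w ∈ ball (0:ℂ) 1, ContinuousAt f w := by
    intro w hw
    obtain ⟨hz, hzw⟩ := hf w hw
    have hmap : 𝓝 (F (f w)) ≤ map F (𝓝 (f w)) :=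
      ((hana _ hz).eventually_constant_or_nhds_le_map_nhds).resolve_left (hnc _ hz)
    rw [hzw] at hmap
    intro s hs
    have h1 : F '' (s ∩ Ω) ∈ 𝓝 w := hmap (image_mem_map (inter_mem hs (hΩ.mem_nhds hz)))
    rw [mem_map]
    filter_upwards [h1]
    rintro _ ⟨v, ⟨hvs, hvΩ⟩, rfl⟩
    rw [mem_preimage, hleft v hvΩ]; exact hvs
  refine ⟨f, ?_, hf, hleft⟩
  have hdiff : ∀ w ∈ ball (0:ℂ) 1, deriv F (f w) ≠ 0 → DifferentiableAt ℂ f w := by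
    intro w hw hd
    obtain ⟨hz, hzw⟩ := hf w hw
    have h1 := (hF.differentiableAt (hΩ.mem_nhds hz)).hasDerivAt
    have : HasDerivAt f (deriv F (f w))⁻¹ w := by
      refine HasDerivAt.of_local_left_inverse (hcont w hw) h1 hd ?_
      filter_upwards [isOpen_ball.mem_nhds hw] with v hv using (hf v hv).2
    exact this.differentiableAt
  intro w hw
  apply DifferentiableAt.differentiableWithinAt
  apply AnalyticAt.differentiableAt
  refine Complex.analyticAt_of_differentiable_on_punctured_nhds_of_continuousAt ?_ (hcont w hw)
  obtain ⟨hz, hzw⟩ := hf w hw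
  have hev : ∀ᶠ v in 𝓝[≠] (f w), deriv F v ≠ 0 := by
    rcases ((hana _ hz).deriv).eventually_eq_zero_or_eventually_ne_zero with h | h
    · exfalso
      obtain ⟨r, hr, hrb⟩ := Metric.eventually_nhds_iff_ball.1 (h.and (hΩ.mem_nhds hz))
      apply hnc _ hz
      filter_upwards [ball_mem_nhds _ hr] with v hv
      exact isOpen_ball.is_const_of_deriv_eq_zero (convex_ball _ _).isPreconnected
        (fun u hu => (hF.differentiableAt (hΩ.mem_nhds (hrb u hu).2)).differentiableWithinAt)
        (fun u hu => (hrb u hu).1) hv (mem_ball_self hr)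
    · exact h
  have ht : Tendsto f (𝓝[≠] w) (𝓝[≠] (f w)) := by
    refine tendsto_nhdsWithin_iff.2 ⟨(hcont w hw).mono_left nhdsWithin_le_nhds, ?_⟩
    filter_upwards [self_mem_nhdsWithin, mem_nhdsWithin_of_mem_nhds (isOpen_ball.mem_nhds hw)] with v hv hvb h
    apply hv
    have := (hf v hvb).2
    rw [h] at this
    exact (this.symm.trans hzw)
  filter_upwards [ht.eventually hev, mem_nhdsWithin_of_mem_nhds (isOpen_ball.mem_nhds hw)] with v hv hvb
  exact hdiff v hvb hv

theorem aux_rolle (k : ℕ) : ∀ (φ : ℕ → ℝ → ℝ) (S : Set ℝ), S.OrdConnected → (0:ℝ) ∈ S →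
    (∀ j, ∀ t ∈ S, HasDerivAt (φ j) (φ (j+1) t) t) → (∀ j < k, φ j 0 = 0) →
    (∀ t ∈ S, φ k t ≠ 0) → ∀ t ∈ S, t ≠ 0 → φ 0 t ≠ 0 := by
  induction k with
  | zero => intro φ S _ _ _ _ h t ht _; exact h t ht
  | succ k ih =>
    intro φ S hS h0 hd hz hk t ht ht0 hcon
    have h1 := ih (fun j => φ (j+1)) S hS h0 (fun j => hd (j+1)) (fun j hj => hz (j+1) (by omega)) hk
    have hz0 : φ 0 0 = 0 := hz 0 (by omega)
    have hcont : ∀ a ∈ S, ∀ b ∈ S, ContinuousOn (φ 0) (Icc a b) := fun a ha b hb x hx =>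
      (hd 0 x (hS.out ha hb hx)).continuousAt.continuousWithinAt
    rcases lt_or_gt_of_ne ht0 with h | h
    · obtain ⟨c, hc, hc0⟩ := exists_hasDerivAt_eq_zero h (hcont t ht 0 h0) (by rw [hcon, hz0])
        (fun x hx => hd 0 x (hS.out ht h0 (Ioo_subset_Icc_self hx)))
      exact h1 c (hS.out ht h0 (Ioo_subset_Icc_self hc)) hc.2.ne hc0
    · obtain ⟨c, hc, hc0⟩ := exists_hasDerivAt_eq_zero h (hcont 0 h0 t ht) (by rw [hcon, hz0])
        (fun x hx => hd 0 x (hS.out h0 ht (Ioo_subset_Icc_self hx)))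
      exact h1 c (hS.out h0 ht (Ioo_subset_Icc_self hc)) hc.1.ne' hc0

theorem aux_complexify {f : ℝ → ℂ} {s : ℝ} (hf : AnalyticAt ℝ f s) :
    ∃ g : ℂ → ℂ, AnalyticAt ℂ g (s:ℂ) ∧ ∀ᶠ t : ℝ in 𝓝 s, g (t:ℂ) = f t := by
  obtain ⟨p, hp⟩ := hf
  have hp' := hasFPowerSeriesAt_iff.1 hp
  set c : ℕ → ℂ := fun n => p.coeff n with hc
  let P : FormalMultilinearSeries ℂ ℂ ℂ := fun n => ContinuousMultilinearMap.mkPiRing ℂ (Fin n) (c n)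
  have hPc : ∀ n, P.coeff n = c n := by
    intro n; simp [P, FormalMultilinearSeries.coeff]
  have hPn : ∀ n, ‖P n‖ = ‖c n‖ := fun n => by
    simp [P]
  have hrad : 0 < P.radius := by
    obtain ⟨r, hr, h⟩ := Metric.eventually_nhds_iff.1 hp'
    have hs : HasSum (fun n => ((r/2:ℝ)) ^ n • p.coeff n) (f (s + r/2)) := h (by
      simp only [dist_zero_right, Real.norm_eq_abs]; rw [abs_of_pos (by linarith)]; linarith)
    have ht := hs.summable.tendsto_atTop_zero
    have hb := ht.norm.isBoundedUnder_le
    refine lt_of_lt_of_le (b := ((Real.toNNReal (r/2) : NNReal) : ENNReal)) (by simp; linarith) ?_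
    refine P.le_radius_of_tendsto (l := 0) ?_
    have h2 := ht.norm
    rw [norm_zero] at h2
    refine h2.congr (fun n => ?_)
    rw [hPn, norm_smul, norm_pow, Real.norm_eq_abs, abs_of_pos (by linarith),
      Real.coe_toNNReal _ (by linarith), mul_comm]
  have hP := P.hasFPowerSeriesOnBall hrad
  refine ⟨fun z => P.sum (z - s), ?_, ?_⟩
  · have h3 : HasFPowerSeriesAt (fun z => P.sum (z - s)) P (0 + (s:ℂ)) :=
      (hP.comp_sub (s:ℂ)).hasFPowerSeriesAt
    rw [zero_add] at h3
    exact h3.analyticAt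
  · have h4 := hasFPowerSeriesAt_iff.1 hP.hasFPowerSeriesAt
    have h5 : ∀ᶠ t : ℝ in 𝓝 0, HasSum (fun n => ((t:ℂ)) ^ n • P.coeff n) (P.sum (0 + (t:ℂ))) :=
      (Complex.continuous_ofReal.tendsto' 0 (0:ℂ) (by simp)).eventually h4
    have h6 : ∀ᶠ t : ℝ in 𝓝 0, P.sum (t:ℂ) = f (s + t) := by
      filter_upwards [h5, hp'] with t h5 h6
      rw [zero_add] at h5
      refine h5.unique (h6.congr_fun ?_)
      intro n
      rw [hPc]
      simp [hc]
    have h7 : Tendsto (fun t : ℝ => t - s) (𝓝 s) (𝓝 0) := by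
      have : Continuous (fun t : ℝ => t - s) := by fun_prop
      exact this.tendsto' _ _ (by simp)
    filter_upwards [h7.eventually h6] with t ht
    simp only [Complex.ofReal_sub, add_sub_cancel] at ht
    exact ht

/-- directional derivatives -/
def auxT (σ : ℂ → ℝ) (v : ℂ) (k : ℕ) (z : ℂ) : ℝ := iteratedFDeriv ℝ k σ z (fun _ => v)

theorem auxT_analytic {O : Set ℂ} {σ : ℂ → ℝ} (hσ : AnalyticOnNhd ℝ σ O) (v : ℂ) (k : ℕ) :
    AnalyticOnNhd ℝ (auxT σ v k) O := by
  intro z hz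
  have h := hσ.iteratedFDeriv k z hz
  exact ((ContinuousMultilinearMap.apply ℝ (fun _ : Fin k => ℂ) ℝ (fun _ => v)).analyticAt _).comp h

theorem auxT_deriv {O : Set ℂ} {σ : ℂ → ℝ} (hσ : AnalyticOnNhd ℝ σ O) (v : ℂ) (k : ℕ) {z : ℂ}
    (hz : z ∈ O) : fderiv ℝ (auxT σ v k) z v = auxT σ v (k+1) z := by
  have h := (hσ.iteratedFDeriv k z hz).differentiableAt
  have h2 := ((ContinuousMultilinearMap.apply ℝ (fun _ : Fin k => ℂ) ℝ (fun _ => v)).hasFDerivAt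
    (x := iteratedFDeriv ℝ k σ z)).comp z h.hasFDerivAt
  have h3 : HasFDerivAt (auxT σ v k) _ z := h2
  rw [h3.fderiv]
  rfl

theorem auxT_hasDerivAt {O : Set ℂ} {σ : ℂ → ℝ} (hσ : AnalyticOnNhd ℝ σ O) (v y : ℂ) (k : ℕ)
    {t : ℝ} (hz : y + t • v ∈ O) :
    HasDerivAt (fun t : ℝ => auxT σ v k (y + t • v)) (auxT σ v (k+1) (y + t • v)) t := by
  have h := (auxT_analytic hσ v k _ hz).differentiableAt.hasFDerivAt
  have h1 : HasDerivAt (fun t : ℝ => y + t • v) v t := by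
    simpa using ((hasDerivAt_id t).smul_const v).const_add y
  have := h.comp_hasDerivAt t h1
  rw [auxT_deriv hσ v k hz] at this
  exact this

theorem auxT_exists {O : Set ℂ} (hOc : IsPreconnected O) {σ : ℂ → ℝ}
    (hσ : AnalyticOnNhd ℝ σ O) (hne : ∃ z ∈ O, σ z ≠ 0) {a : ℂ} (ha : a ∈ O) :
    ∃ k v, auxT σ v k a ≠ 0 := by
  by_contra hcon
  push Not at hcon
  obtain ⟨p, r, hp⟩ := hσ a ha
  obtain ⟨z, hz, h⟩ := hne
  apply h
  refine hσ.eqOn_of_preconnected_of_eventuallyEq (g := fun _ => 0) (fun z _ => analyticAt_const) hOc ha ?_ hz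
  have : ∀ y ∈ eball (0:ℂ) r, σ (a + y) = 0 := by
    intro y hy
    have h1 := hp.hasSum_iteratedFDeriv hy
    refine h1.unique ?_
    refine (hasSum_zero : HasSum (fun _ : ℕ => (0:ℝ)) 0).congr_fun (fun n => ?_)
    have := hcon n y
    unfold auxT at this
    rw [this]; simp
  have h2 : ∀ᶠ y in 𝓝 (0:ℂ), σ (a + y) = 0 :=
    eventually_of_mem (Metric.eball_mem_nhds 0 hp.r_pos) this
  have h7 : Tendsto (fun t : ℂ => t - a) (𝓝 a) (𝓝 0) := by
    have : Continuous (fun t : ℂ => t - a) := by fun_prop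
    exact this.tendsto' _ _ (by simp)
  filter_upwards [h7.eventually h2] with t ht
  simpa using ht

open scoped ContDiff

def auxX (a v z : ℂ) : ℝ := ((z - a) / (-Complex.I * v)).re

theorem auxX_cont (a v : ℂ) : Continuous (auxX a v) := by
  unfold auxX
  exact Complex.continuous_re.comp ((continuous_id.sub continuous_const).div_const _)

theorem auxX_self (a v : ℂ) : auxX a v a = 0 := by simp [auxX]

theorem auxX_eq {a v z y : ℂ} (hv : v ≠ 0) (h : auxX a v z = auxX a v y) :
    ∃ t : ℝ, z = y + t • v := by
  refine ⟨((z - y) / (-Complex.I * v)).im, ?_⟩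
  unfold auxX at h
  set q := (z - y) / (-Complex.I * v) with hq
  have h1 : q.re = 0 := by
    have : q = (z - a) / (-Complex.I * v) - (y - a) / (-Complex.I * v) := by
      rw [hq, ← sub_div]; ring
    rw [this, Complex.sub_re, h, sub_self]
  have h2 : q = q.im * Complex.I := by
    apply Complex.ext <;> simp [h1]
  have hc : -Complex.I * v ≠ 0 := by simp [hv]
  have h3 : z - y = q * (-Complex.I * v) := by rw [hq]; field_simp
  rw [h2] at h3
  have h4 : z - y = q.im * v := by
    rw [h3]; linear_combination (-(q.im:ℂ) * v) * Complex.I_mul_I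
  rw [Complex.real_smul]; linear_combination h4

theorem aux_straighten {O : Set ℂ} (hO : IsOpen O) {τ : ℂ → ℝ} (hτ : AnalyticOnNhd ℝ τ O) {a v : ℂ}
    (ha : a ∈ O) (h0 : τ a = 0) (hd : fderiv ℝ τ a v ≠ 0) :
    ∃ (Ξ : ℝ → ℂ) (η : ℝ) (N : Set ℂ), 0 < η ∧ IsOpen N ∧ a ∈ N ∧ Ξ 0 = a ∧
      (∀ s, |s| < η → AnalyticAt ℝ Ξ s) ∧ (∀ s, |s| < η → auxX a v (Ξ s) = s ∧ Ξ s ∈ N) ∧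
      ∀ z ∈ N, τ z = 0 → |auxX a v z| < η → z = Ξ (auxX a v z) := by
  have hv : v ≠ 0 := by rintro rfl; simp at hd
  set c : ℂ := -Complex.I * v with hcdef
  have hc : c ≠ 0 := by simp [hcdef, hv]
  let xl : ℂ →L[ℝ] ℝ := Complex.reCLM.comp ((ContinuousLinearMap.mul ℝ ℂ) c⁻¹)
  have hxl : ∀ z, xl z = (z / c).re := fun z => by
    simp [xl, div_eq_mul_inv, mul_comm]
  have hX : ∀ z, auxX a v z = xl z - xl a := fun z => by
    rw [← map_sub, hxl]; rfl
  let L : ℂ →L[ℝ] ℂ := Complex.ofRealCLM.comp xl + Complex.I • Complex.ofRealCLM.comp (fderiv ℝ τ a)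
  let Θ : ℂ → ℂ := fun z => (auxX a v z : ℂ) + Complex.I * (τ z : ℂ)
  have hΘ : HasFDerivAt Θ L a := by
    have h1 : HasFDerivAt (fun z => (auxX a v z : ℂ)) (Complex.ofRealCLM.comp xl) a := by
      have : HasFDerivAt (auxX a v) xl a := by
        have e : auxX a v = fun z => xl z - xl a := funext hX
        rw [e]
        exact xl.hasFDerivAt.sub_const _
      exact Complex.ofRealCLM.hasFDerivAt.comp a this
    have h2 : HasFDerivAt (fun z => (τ z : ℂ)) (Complex.ofRealCLM.comp (fderiv ℝ τ a)) a :=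
      Complex.ofRealCLM.hasFDerivAt.comp a (hτ a ha).differentiableAt.hasFDerivAt
    exact h1.add (h2.const_smul Complex.I)
  have hLinj : Function.Injective L := by
    rw [injective_iff_map_eq_zero]
    intro z hz
    have e : L z = (xl z : ℂ) + Complex.I * (fderiv ℝ τ a z : ℂ) := by simp [L]
    rw [e] at hz
    have hr : xl z = 0 := by simpa using congrArg Complex.re hz
    have hi : fderiv ℝ τ a z = 0 := by simpa using congrArg Complex.im hz
    obtain ⟨t, ht⟩ := auxX_eq (a := a) (z := z) (y := 0) hv (by rw [hX, hX, hr]; simp)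
    rw [zero_add] at ht
    rw [ht, map_smul, smul_eq_mul] at hi
    rcases mul_eq_zero.1 hi with h | h
    · rw [ht, h, zero_smul]
    · exact (hd h).elim
  let Le : ℂ ≃L[ℝ] ℂ := (LinearEquiv.ofInjectiveEndo (L : ℂ →ₗ[ℝ] ℂ) hLinj).toContinuousLinearEquiv
  have hLe : (Le : ℂ →L[ℝ] ℂ) = L := by ext <;> rfl
  have hΘa : AnalyticAt ℝ Θ a := by
    have h1 : AnalyticAt ℝ (auxX a v) a := by
      have e : auxX a v = fun z => xl z - xl a := funext hX
      rw [e]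
      exact (xl.analyticAt a).sub analyticAt_const
    exact ((Complex.ofRealCLM.analyticAt _).comp h1).add
      (analyticAt_const.mul ((Complex.ofRealCLM.analyticAt _).comp (hτ a ha)))
  have hcd : ContDiffAt ℝ ω Θ a := hΘa.contDiffAt
  have hΘ' : HasFDerivAt Θ (Le : ℂ →L[ℝ] ℂ) a := by rw [hLe]; exact hΘ
  have hn : (ω : WithTop ℕ∞) ≠ 0 := by simp
  set Φ := hcd.toOpenPartialHomeomorph Θ hΘ' hn with hΦ
  have hcoe : ∀ z, Φ z = Θ z := fun z => by
    rw [hΦ, ContDiffAt.toOpenPartialHomeomorph_coe]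
  have has : a ∈ Φ.source := hcd.mem_toOpenPartialHomeomorph_source hΘ' hn
  have hΘ0 : Θ a = 0 := by simp [Θ, auxX_self, h0]
  have hsa : AnalyticAt ℝ Φ.symm 0 := by
    have h := hcd.to_localInverse hΘ' hn
    rw [hΘ0] at h
    exact h.analyticAt
  have hev : ∀ᶠ w in 𝓝 (0:ℂ), AnalyticAt ℝ Φ.symm w ∧ w ∈ Φ.target := by
    refine hsa.eventually_analyticAt.and (Φ.open_target.mem_nhds ?_)
    have := Φ.map_source has
    rwa [hcoe, hΘ0] at this
  obtain ⟨η, hη, hev⟩ := Metric.eventually_nhds_iff.1 hev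
  have hevr : ∀ s : ℝ, |s| < η → AnalyticAt ℝ Φ.symm (s:ℂ) ∧ (s:ℂ) ∈ Φ.target := fun s hs =>
    hev (by simpa using hs)
  refine ⟨fun s => Φ.symm (s:ℂ), η, Φ.source, hη, Φ.open_source, has, ?_, ?_, ?_, ?_⟩
  · have := Φ.left_inv has
    rw [hcoe, hΘ0] at this
    simpa using this
  · intro s hs
    exact AnalyticAt.comp (f := fun s : ℝ => (s:ℂ)) (hevr s hs).1 (Complex.ofRealCLM.analyticAt s)
  · intro s hs
    refine ⟨?_, Φ.map_target (hevr s hs).2⟩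
    have := Φ.right_inv (hevr s hs).2
    rw [hcoe] at this
    simpa [Θ] using congrArg Complex.re this
  · intro z hz hz0 _
    have := Φ.left_inv hz
    rw [hcoe] at this
    simpa [Θ, hz0] using this.symm

theorem aux_sep {Ξ : ℝ → ℂ} {η : ℝ} {N E : Set ℂ} {τ X : ℂ → ℝ} {a b : ℂ} (hη : 0 < η)
    (hN : IsOpen N) (haN : a ∈ N) (hX : Continuous X) (hXa : X a = 0)
    (hΞc : ∀ s, |s| < η → ContinuousAt Ξ s) (hΞ : ∀ s, |s| < η → X (Ξ s) = s ∧ Ξ s ∈ N)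
    (hinv : ∀ z ∈ N, τ z = 0 → |X z| < η → z = Ξ (X z)) (hE : IsPreconnected E)
    (hE0 : ∀ z ∈ E, τ z = 0) (ha : a ∈ E) (hb : b ∈ E) (hab : ∀ s, |s| < η → Ξ s ≠ b) :
    ∃ s0 δ, 0 < δ ∧ |s0| + δ < η ∧ ∀ s, |s - s0| < δ → Ξ s ∈ E := by
  by_cases hA : ∀ s, -η < s → s < 0 → Ξ s ∈ E
  · refine ⟨-(η/2), η/4, by linarith, ?_, fun s hs => ?_⟩
    · rw [abs_neg, abs_of_pos (by linarith)]; linarith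
    · rw [abs_lt] at hs; exact hA s (by linarith) (by linarith)
  by_cases hB : ∀ s, s < η → 0 < s → Ξ s ∈ E
  · refine ⟨(η/2), η/4, by linarith, ?_, fun s hs => ?_⟩
    · rw [abs_of_pos (by linarith)]; linarith
    · rw [abs_lt] at hs; exact hB s (by linarith) (by linarith)
  exfalso
  push Not at hA hB
  obtain ⟨s1, h1, h1', h1E⟩ := hA
  obtain ⟨s2, h2, h2', h2E⟩ := hB
  have hlt : ∀ s ∈ Icc s1 s2, |s| < η := fun s hs => abs_lt.2 ⟨by linarith [hs.1], by linarith [hs.2]⟩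
  have hK : IsCompact (Ξ '' Icc s1 s2) := isCompact_Icc.image_of_continuousOn
    (fun s hs => (hΞc s (hlt s hs)).continuousWithinAt)
  have hU1 : IsOpen (N ∩ X ⁻¹' Ioo s1 s2) := hN.inter (isOpen_Ioo.preimage hX)
  have hU2 : IsOpen (Ξ '' Icc s1 s2)ᶜ := hK.isClosed.isOpen_compl
  obtain ⟨z, hzE, ⟨hzN, hzX⟩, hz2⟩ := hE _ _ hU1 hU2 (by
    intro z hz
    by_cases hzI : z ∈ Ξ '' Icc s1 s2
    · left
      obtain ⟨s, hs, rfl⟩ := hzI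
      have := hΞ s (hlt s hs)
      refine ⟨this.2, ?_⟩
      rw [mem_preimage, this.1]
      refine ⟨lt_of_le_of_ne hs.1 ?_, lt_of_le_of_ne hs.2 ?_⟩
      · rintro rfl; exact h1E hz
      · rintro rfl; exact h2E hz
    · right; exact hzI) ⟨a, ha, haN, by rw [mem_preimage, hXa]; exact ⟨h1', h2'⟩⟩
    ⟨b, hb, by rintro ⟨s, hs, h⟩; exact hab s (hlt s hs) h⟩
  apply hz2
  have hI := Ioo_subset_Icc_self hzX
  exact ⟨X z, hI, (hinv z hzN (hE0 z hzE) (hlt _ hI)).symm⟩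

theorem aux_arc {O : Set ℂ} (hO : IsOpen O) (hOc : IsPreconnected O) {σ : ℂ → ℝ}
    (hσ : AnalyticOnNhd ℝ σ O) (hne : ∃ z ∈ O, σ z ≠ 0) {E : Set ℂ} (hEO : E ⊆ O)
    (hE0 : ∀ z ∈ E, σ z = 0) (hEc : IsPreconnected E) (hE2 : ∃ x ∈ E, ∃ y ∈ E, x ≠ y) :
    ∃ (Γ : ℂ → ℂ) (R : ℝ), 0 < R ∧ DifferentiableOn ℂ Γ (ball 0 R) ∧
      (∀ w ∈ ball (0:ℂ) R, Γ w ∈ O) ∧ (∀ w ∈ ball (0:ℂ) R, σ (Γ w) = 0 → w.im = 0) ∧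
      (∀ x : ℝ, |x| < R → Γ x ∈ E) ∧ (∀ x : ℝ, |x| < R → 𝓝 (Γ x) ≤ map Γ (𝓝 (x:ℂ))) := by
  classical
  have hex : ∃ k, ∃ a ∈ E, ∃ v, auxT σ v k a ≠ 0 := by
    obtain ⟨a, ha, -⟩ := hE2
    obtain ⟨k, v, h⟩ := auxT_exists hOc hσ hne (hEO ha)
    exact ⟨k, a, ha, v, h⟩
  have hk0 := Nat.find_spec hex
  have hmin : ∀ j < Nat.find hex, ∀ a ∈ E, ∀ v, auxT σ v j a = 0 := by
    intro j hj a ha v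
    by_contra h
    exact Nat.find_min hex hj ⟨a, ha, v, h⟩
  obtain ⟨k, hk⟩ : ∃ k, Nat.find hex = k + 1 := by
    refine Nat.exists_eq_succ_of_ne_zero ?_
    intro h0
    rw [h0] at hk0
    obtain ⟨a, ha, v, h⟩ := hk0
    exact h (hE0 a ha)
  rw [hk] at hmin hk0
  obtain ⟨a, ha, v, hav⟩ := hk0
  have haO := hEO ha
  have hd : fderiv ℝ (auxT σ v k) a v ≠ 0 := by rw [auxT_deriv hσ v k haO]; exact hav
  have hv : v ≠ 0 := by rintro rfl; simp at hd
  obtain ⟨b, hb, hba⟩ : ∃ b ∈ E, b ≠ a := by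
    obtain ⟨x, hx, y, hy, hxy⟩ := hE2
    by_cases h : x = a
    · exact ⟨y, hy, fun h2 => hxy (h.trans h2.symm)⟩
    · exact ⟨x, hx, h⟩
  obtain ⟨Ξ, η0, N, hη0, hN, haN, hΞ0, hΞa, hΞX, hinv⟩ :=
    aux_straighten hO (auxT_analytic hσ v k) haO (hmin k (by omega) a ha v) hd
  -- small ball
  have hballev : ∀ᶠ z in 𝓝 a, z ∈ O ∧ auxT σ v (k+1) z ≠ 0 :=
    (hO.eventually_mem haO).and ((auxT_analytic hσ v (k+1) a haO).continuousAt.eventually_ne hav)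
  obtain ⟨r, hr, hball⟩ := Metric.eventually_nhds_iff_ball.1 hballev
  have hXic : ContinuousAt Ξ 0 := (hΞa 0 (by simpa using hη0)).continuousAt
  have hΞev : ∀ᶠ s in 𝓝 (0:ℝ), Ξ s ∈ ball a r ∧ Ξ s ≠ b := by
    refine (hXic.eventually ?_).and (hXic.eventually_ne ?_)
    · rw [hΞ0]; exact ball_mem_nhds a hr
    · rw [hΞ0]; exact hba.symm
  obtain ⟨η1, hη1, hΞev⟩ := Metric.eventually_nhds_iff.1 hΞev
  set η := min η0 η1 with hηd
  have hη : 0 < η := lt_min hη0 hη1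
  have hle0 : η ≤ η0 := min_le_left _ _
  have hle1 : η ≤ η1 := min_le_right _ _
  have hΞev' : ∀ s, |s| < η → Ξ s ∈ ball a r ∧ Ξ s ≠ b := fun s hs =>
    hΞev (by simpa using hs.trans_le hle1)
  obtain ⟨s0, δ, hδ, hsδ, hsE⟩ := aux_sep hη hN haN (auxX_cont a v) (auxX_self a v)
    (fun s hs => (hΞa s (hs.trans_le hle0)).continuousAt) (fun s hs => hΞX s (hs.trans_le hle0))
    (fun z hz h1 h2 => hinv z hz h1 (h2.trans_le hle0)) hEc
    (fun z hz => hmin k (by omega) z hz v) ha hb (fun s hs => (hΞev' s hs).2)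
  have hs0 : |s0| < η := by linarith
  have hsη : ∀ s, |s - s0| < δ → |s| < η := fun s hs => by
    have := abs_add_le (s - s0) s0
    rw [sub_add_cancel] at this
    linarith
  obtain ⟨G, hGa, hGΞ⟩ := aux_complexify (hΞa s0 (hs0.trans_le hle0))
  have hG0 : G s0 = Ξ s0 := hGΞ.self_of_nhds
  -- derivative nonzero
  have hGd : deriv G s0 ≠ 0 := by
    intro h0
    have h1 : HasDerivAt G 0 (s0:ℂ) := h0 ▸ hGa.differentiableAt.hasDerivAt
    have h2 : HasDerivAt (fun s : ℝ => G s) 0 s0 := h1.comp_ofReal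
    have h3 : HasDerivAt (fun s : ℝ => auxX a v (G s)) 0 s0 := by
      have h4 : HasDerivAt (fun s : ℝ => (G s - a) / (-Complex.I * v)) 0 s0 := by
        simpa using (h2.sub_const a).div_const (-Complex.I * v)
      have h5 := Complex.reCLM.hasFDerivAt.comp_hasDerivAt s0 h4
      simpa [auxX, Function.comp_def] using h5
    have h6 : HasDerivAt (fun s : ℝ => auxX a v (G s)) 1 s0 := by
      refine (hasDerivAt_id s0).congr_of_eventuallyEq ?_
      have : ∀ᶠ s in 𝓝 s0, |s| < η0 :=
        (continuous_abs.tendsto s0).eventually (gt_mem_nhds (hs0.trans_le hle0))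
      filter_upwards [hGΞ, this] with s h1 h2
      rw [h1, (hΞX s h2).1]; rfl
    exact zero_ne_one (h3.unique h6)
  have hstrict : HasStrictDerivAt G (deriv G s0) (s0:ℂ) :=
    hGa.contDiffAt.hasStrictDerivAt (n := 1) (by simp)
  let P := (hstrict.hasStrictFDerivAt_equiv hGd).toOpenPartialHomeomorph G
  have hPc : ∀ z, P z = G z := fun z => rfl
  have hPs : (s0:ℂ) ∈ P.source := (hstrict.hasStrictFDerivAt_equiv hGd).mem_toOpenPartialHomeomorph_source
  have hGc : ContinuousAt G s0 := hGa.continuousAt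
  -- eventual conditions
  obtain ⟨κ, hκ, hGκ⟩ := Metric.eventually_nhds_iff.1 hGΞ
  have hXG0 : auxX a v (G s0) = s0 := by rw [hG0]; exact (hΞX s0 (hs0.trans_le hle0)).1
  have hXG : Tendsto (fun w : ℂ => auxX a v (G w)) (𝓝 (s0:ℂ)) (𝓝 s0) := by
    have := (auxX_cont a v).continuousAt.tendsto.comp hGc.tendsto
    rwa [hXG0] at this
  have hXG' : Tendsto (fun w : ℂ => ((auxX a v (G w) : ℝ):ℂ)) (𝓝 (s0:ℂ)) (𝓝 (s0:ℂ)) :=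
    (Complex.continuous_ofReal.tendsto s0).comp hXG
  have hfin : ∀ᶠ w in 𝓝 (s0:ℂ), AnalyticAt ℂ G w ∧ w ∈ P.source ∧ G w ∈ ball a r ∧
      |auxX a v (G w) - s0| < min δ κ ∧ ((auxX a v (G w) : ℝ):ℂ) ∈ P.source := by
    have e1 : ∀ᶠ w in 𝓝 (s0:ℂ), G w ∈ ball a r := by
      refine hGc.eventually_mem ?_
      rw [hG0]; exact isOpen_ball.mem_nhds (hΞev' s0 hs0).1
    have e2 : ∀ᶠ w in 𝓝 (s0:ℂ), auxX a v (G w) ∈ ball s0 (min δ κ) :=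
      hXG.eventually_mem (ball_mem_nhds s0 (lt_min hδ hκ))
    have e3 := hXG'.eventually_mem (P.open_source.mem_nhds hPs)
    have e4 := P.open_source.eventually_mem hPs
    filter_upwards [hGa.eventually_analyticAt, e1, e2, e3, e4] with w h0 h1 h2 h3 h4
    exact ⟨h0, h4, h1, by rwa [mem_ball, Real.dist_eq] at h2, h3⟩
  obtain ⟨R0, hR0, hfin⟩ := Metric.eventually_nhds_iff_ball.1 hfin
  set R := min R0 (min δ κ) with hRd
  have hR : 0 < R := lt_min hR0 (lt_min hδ hκ)
  have hRm : ∀ w ∈ ball (0:ℂ) R, (s0:ℂ) + w ∈ ball (s0:ℂ) R0 := by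
    intro w hw
    rw [mem_ball_zero_iff] at hw
    rw [mem_ball_iff_norm, add_sub_cancel_left]
    exact hw.trans_le (min_le_left _ _)
  have hxm : ∀ x : ℝ, |x| < R → (x:ℂ) ∈ ball (0:ℂ) R := fun x hx => by simpa using hx
  refine ⟨fun w => G (s0 + w), R, hR, ?_, ?_, ?_, ?_, ?_⟩
  · intro w hw
    have h1 := (hfin _ (hRm w hw)).1.differentiableAt
    exact (h1.comp w (by fun_prop : DifferentiableAt ℂ (fun w : ℂ => (s0:ℂ) + w) w)).differentiableWithinAt
  · intro w hw
    exact (hball _ (hfin _ (hRm w hw)).2.2.1).1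
  · intro w hw hσ0
    obtain ⟨-, h2, h3, h4, h5⟩ := hfin _ (hRm w hw)
    set z := G (s0 + w) with hz
    set s := auxX a v z with hs
    have hsd : |s - s0| < δ := h4.trans_le (min_le_left _ _)
    have hyE := hsE s hsd
    have hGs : G s = Ξ s := hGκ (by rw [Real.dist_eq]; exact h4.trans_le (min_le_right _ _))
    have hXs : auxX a v z = auxX a v (Ξ s) := (hΞX s ((hsη s hsd).trans_le hle0)).1.symm
    obtain ⟨t, ht⟩ := auxX_eq hv hXs
    have ht0 : t = 0 := by
      by_contra hne0
      set S : Set ℝ := {t | Ξ s + t • v ∈ ball a r} with hS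
      have hSc : Convex ℝ S := by
        have e : S = (AffineMap.lineMap (Ξ s) (Ξ s + v) : ℝ →ᵃ[ℝ] ℂ) ⁻¹' ball a r := by
          ext t; simp [hS, AffineMap.lineMap_apply, add_comm]
        rw [e]
        exact (convex_ball a r).affine_preimage _
      refine aux_rolle (k+1) (fun j t => auxT σ v j (Ξ s + t • v)) S hSc.ordConnected ?_ ?_ ?_ ?_ t ?_ hne0 ?_
      · change Ξ s + (0:ℝ) • v ∈ ball a r
        rw [zero_smul, add_zero]; exact (hΞev' s (hsη s hsd)).1
      · intro j t ht
        exact auxT_hasDerivAt hσ v (Ξ s) j (hball _ ht).1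
      · intro j hj
        simp only [zero_smul, add_zero]
        exact hmin j hj _ hyE v
      · intro t ht
        exact (hball _ ht).2
      · change Ξ s + t • v ∈ ball a r
        rw [← ht]; exact h3
      · simp only [← ht]
        exact hσ0
    rw [ht0, zero_smul, add_zero, ← hGs] at ht
    have := P.injOn h2 h5 ht
    have := congrArg Complex.im this
    simpa using this
  · intro x hx
    have h1 : G ((s0 + x : ℝ):ℂ) = Ξ (s0 + x) := hGκ (by
      rw [Real.dist_eq, add_sub_cancel_left]
      exact hx.trans_le ((min_le_right _ _).trans (min_le_right _ _)))
    have h2 : Ξ (s0 + x) ∈ E := hsE _ (by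
      rw [add_sub_cancel_left]
      exact hx.trans_le ((min_le_right _ _).trans (min_le_left _ _)))
    rw [← h1] at h2
    simpa using h2
  · intro x hx
    have h1 := P.map_nhds_eq (hfin _ (hRm x (hxm x hx))).2.1
    have h2 : map G (𝓝 ((s0:ℂ) + x)) = 𝓝 (G (s0 + x)) := h1
    simp only
    rw [← h2, ← map_add_left_nhds]
    simp only [map_map]
    exact le_rfl

theorem aux_conn_frontier {X : Type*} [TopologicalSpace X] {t Ω : Set X} (ht : IsPreconnected t)
    (hΩ : IsOpen Ω) (hd : ∀ z ∈ t, z ∉ frontier Ω) (hne : (t ∩ Ω).Nonempty) : t ⊆ Ω := by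
  refine ht.subset_left_of_subset_union hΩ isClosed_closure.isOpen_compl
    (disjoint_compl_right.mono_left subset_closure) (fun z hz => ?_) hne
  by_cases h : z ∈ closure Ω
  · left
    by_contra h2
    exact hd z hz (by rw [frontier, hΩ.interior_eq]; exact ⟨h, h2⟩)
  · right; exact h

theorem aux_side {Ω : Set ℂ} (hΩ : IsOpen Ω) {F : ℂ → ℂ} (hF : DifferentiableOn ℂ F Ω)
    (hFm : ∀ z ∈ Ω, F z ∈ ball (0:ℂ) 1)
    (hFl : ∀ y ∈ frontier Ω, Tendsto (fun z => ‖F z‖) (𝓝[Ω] y) (𝓝 1)) {Γ : ℂ → ℂ} {R : ℝ}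
    (hR : 0 < R) (hΓ : DifferentiableOn ℂ Γ (ball 0 R))
    (hΓr : ∀ x : ℝ, |x| < R → Γ x ∈ frontier Ω) (hΓu : ∀ w ∈ auxHD R, Γ w ∉ frontier Ω)
    {ζ : ℂ} (hζ : ‖ζ‖ = 1) :
    ∃ x0 : ℝ, ∃ δ > 0, |x0| + δ ≤ R ∧ ∀ x : ℝ, |x - x0| < δ →
      ∃ V ∈ 𝓝 ζ, ∀ᶠ w in 𝓝 (x:ℂ), 0 < w.im → Γ w ∈ Ω → F (Γ w) ∉ V := by
  have hsub : auxHD R ⊆ ball (0:ℂ) R := fun w hw => by simpa using hw.1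
  have hcR : ∀ x : ℝ, |x| < R → ∀ᶠ w in 𝓝 (x:ℂ), w ∈ ball (0:ℂ) R := fun x hx =>
    isOpen_ball.eventually_mem (by simpa using hx)
  have hpre : IsPreconnected (Γ '' auxHD R) :=
    (auxHD_convex R).isPreconnected.image _ (hΓ.continuousOn.mono hsub)
  by_cases hcase : (Γ '' auxHD R ∩ Ω).Nonempty
  · have hin : Γ '' auxHD R ⊆ Ω := aux_conn_frontier hpre hΩ (by
      rintro _ ⟨w, hw, rfl⟩; exact hΓu w hw) hcase
    have hmaps : MapsTo Γ (auxHD R) Ω := fun w hw => hin ⟨w, hw, rfl⟩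
    obtain ⟨x0, δ, hδ, hle, h⟩ := aux_halfdisc_noncluster hR (Q := fun w => F (Γ w))
      (hF.comp (hΓ.mono hsub) hmaps) (fun w hw => by simpa using hFm _ (hmaps hw)) (by
        intro x hx
        have hcont : ContinuousAt Γ x :=
          (hΓ.differentiableAt (isOpen_ball.mem_nhds (by simpa using hx))).continuousAt
        have h1 : Tendsto Γ (𝓝[auxHD R] (x:ℂ)) (𝓝[Ω] (Γ x)) :=
          tendsto_nhdsWithin_iff.2 ⟨hcont.tendsto.mono_left nhdsWithin_le_nhds,
            eventually_nhdsWithin_of_forall hmaps⟩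
        exact (hFl _ (hΓr x hx)).comp h1) hζ
    refine ⟨x0, δ, hδ, hle, fun x hx => ?_⟩
    have h1 := h x hx
    rw [mapClusterPt_iff_frequently] at h1
    push Not at h1
    obtain ⟨V, hV, h2⟩ := h1
    refine ⟨V, hV, ?_⟩
    rw [eventually_nhdsWithin_iff] at h2
    have hxR : |x| < R := by
      have := abs_add_le (x - x0) x0
      rw [sub_add_cancel] at this
      linarith
    filter_upwards [h2, hcR x hxR] with w h3 h4 h5 _
    exact h3 ⟨by simpa using h4, h5⟩
  · refine ⟨0, R, hR, by simp, fun x hx => ⟨univ, univ_mem, ?_⟩⟩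
    filter_upwards [hcR x (by simpa using hx)] with w h4 h5 h6
    exact (hcase ⟨_, ⟨w, ⟨by simpa using h4, h5⟩, rfl⟩, h6⟩).elim

theorem aux_twoside {Ω : Set ℂ} (hΩ : IsOpen Ω) {F : ℂ → ℂ} (hF : DifferentiableOn ℂ F Ω)
    (hFm : ∀ z ∈ Ω, F z ∈ ball (0:ℂ) 1)
    (hFl : ∀ y ∈ frontier Ω, Tendsto (fun z => ‖F z‖) (𝓝[Ω] y) (𝓝 1)) {Γ : ℂ → ℂ} {R : ℝ}
    (hR : 0 < R) (hΓ : DifferentiableOn ℂ Γ (ball 0 R))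
    (hΓr : ∀ x : ℝ, |x| < R → Γ x ∈ frontier Ω)
    (hΓu : ∀ w ∈ ball (0:ℂ) R, Γ w ∈ frontier Ω → w.im = 0)
    {ζ : ℂ} (hζ : ‖ζ‖ = 1) :
    ∃ x : ℝ, |x| < R ∧ ∃ V ∈ 𝓝 ζ, ∀ᶠ w in 𝓝 (x:ℂ), Γ w ∈ Ω → F (Γ w) ∉ V := by
  obtain ⟨x0, δ, hδ, hle, h1⟩ := aux_side hΩ hF hFm hFl hR hΓ hΓr (fun w hw hfr =>
    hw.2.ne' (hΓu w (by simpa using hw.1) hfr)) hζ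
  have hm : ∀ w : ℂ, ‖w‖ < δ → (x0:ℂ) - w ∈ ball (0:ℂ) R := by
    intro w hw
    rw [mem_ball_zero_iff]
    have := norm_sub_le (x0:ℂ) w
    rw [Complex.norm_real, Real.norm_eq_abs] at this
    linarith
  obtain ⟨x1, δ1, hδ1, hle1, h2⟩ := aux_side hΩ hF hFm hFl (Γ := fun w => Γ (x0 - w)) hδ
    (hΓ.comp (by fun_prop) (fun w hw => hm w (by simpa using hw)))
    (fun x hx => by
      have := hΓr (x0 - x) (by
        have := hm (x:ℂ) (by simpa using hx)
        rwa [← Complex.ofReal_sub, mem_ball_zero_iff, Complex.norm_real] at this)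
      simpa using this)
    (fun w hw hfr => by
      have := hΓu _ (hm w hw.1) hfr
      simp at this
      exact hw.2.ne' this) hζ
  have hx1 : |x1| < δ := by linarith
  have hxR : |x0 - x1| < R := by
    have := hm (x1:ℂ) (by simpa using hx1)
    rwa [← Complex.ofReal_sub, mem_ball_zero_iff, Complex.norm_real] at this
  obtain ⟨V1, hV1, h1⟩ := h1 (x0 - x1) (by simpa using hx1)
  obtain ⟨V2, hV2, h2⟩ := h2 x1 (by simpa using hδ1)
  refine ⟨x0 - x1, hxR, V1 ∩ V2, inter_mem hV1 hV2, ?_⟩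
  have ht : Tendsto (fun w : ℂ => (x0:ℂ) - w) (𝓝 ((x0 - x1 : ℝ):ℂ)) (𝓝 (x1:ℂ)) := by
    have : Continuous (fun w : ℂ => (x0:ℂ) - w) := by fun_prop
    exact this.tendsto' _ _ (by simp)
  have hb : ∀ᶠ w in 𝓝 ((x0 - x1 : ℝ):ℂ), w ∈ ball (0:ℂ) R :=
    isOpen_ball.eventually_mem (by rw [mem_ball_zero_iff, Complex.norm_real]; exact hxR)
  filter_upwards [h1, ht.eventually h2, hb] with w h3 h4 h5 h6 h7
  rcases lt_trichotomy w.im 0 with h | h | h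
  · refine h4 (by simpa using h) (by simpa using h6) ?_
    simpa using h7.2
  · have hw : w = (w.re:ℂ) := Complex.ext (by simp) (by simp [h])
    have hr : |w.re| < R := by
      rw [mem_ball_zero_iff, hw, Complex.norm_real] at h5; simpa using h5
    have := hΓr w.re hr
    rw [← hw, frontier, hΩ.interior_eq] at this
    exact this.2 h6
  · exact h3 h h6 h7.1

theorem aux_cluster_conn {f : ℂ → ℂ} {B K : Set ℂ} {ζ : ℂ} (hB : Convex ℝ B)
    (hf : ContinuousOn f B) (hK : IsCompact K) (hfK : ∀ z ∈ B, f z ∈ K) :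
    IsPreconnected {y | MapClusterPt y (𝓝[B] ζ) f} := by
  set E := {y | MapClusterPt y (𝓝[B] ζ) f} with hE
  have hEcl : IsClosed E := isClosed_setOfPred_clusterPt
  have hfKe : ∀ᶠ z in 𝓝[B] ζ, f z ∈ K := eventually_nhdsWithin_of_forall hfK
  have hEK : E ⊆ K := by
    intro y hy
    by_contra h
    have h1 := hy.frequently (hK.isClosed.isOpen_compl.eventually_mem h)
    exact h1 (hfKe.mono (fun z h2 h3 => h3 h2))
  have hEc : IsCompact E := hK.of_isClosed_subset hEcl hEK
  intro U1 U2 hU1 hU2 hsub ⟨y1, hy1, hy1'⟩ ⟨y2, hy2, hy2'⟩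
  by_contra hcon
  rw [not_nonempty_iff_eq_empty] at hcon
  have hdis : Disjoint (E \ U2) (E \ U1) := by
    rw [Set.disjoint_left]
    rintro y ⟨h1, h2⟩ ⟨_, h3⟩
    rcases hsub h1 with h | h
    · exact h3 h
    · exact h2 h
  obtain ⟨W1, W2, hW1, hW2, hE1, hE2, hW⟩ :=
    SeparatedNhds.of_isCompact_isCompact (hEc.diff hU2) (hEc.diff hU1) hdis
  have hnot : ∀ y ∈ E, y ∈ U1 → y ∉ U2 := fun y h h1 h2 => by
    have : y ∈ E ∩ (U1 ∩ U2) := ⟨h, h1, h2⟩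
    rw [hcon] at this; exact this
  have hev : ∀ᶠ z in 𝓝[B] ζ, f z ∈ W1 ∪ W2 := by
    by_contra hne
    have hfr : ∃ᶠ z in 𝓝[B] ζ, f z ∈ K \ (W1 ∪ W2) :=
      ((not_eventually.1 hne).and_eventually hfKe).mono (fun z h => ⟨h.2, h.1⟩)
    obtain ⟨y, hy, hyc⟩ := (hK.diff (hW1.union hW2)).exists_mapClusterPt_of_frequently hfr
    apply hy.2
    rcases hsub hyc with h | h
    · left; exact hE1 ⟨hyc, hnot y hyc h⟩
    · right; exact hE2 ⟨hyc, fun h1 => hnot y hyc h1 h⟩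
  rw [eventually_nhdsWithin_iff] at hev
  obtain ⟨r, hr, hball⟩ := Metric.eventually_nhds_iff_ball.1 hev
  have hpre : IsPreconnected (f '' (B ∩ ball ζ r)) :=
    ((hB.inter (convex_ball ζ r)).isPreconnected).image _ (hf.mono inter_subset_left)
  have hmeet : ∀ y ∈ E, ∀ W, IsOpen W → y ∈ W → (f '' (B ∩ ball ζ r) ∩ W).Nonempty := by
    intro y hy W hWo hyW
    have h1 := hy.frequently (hWo.eventually_mem hyW)
    have h2 : ∀ᶠ z in 𝓝[B] ζ, z ∈ B ∩ ball ζ r :=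
      (eventually_mem_nhdsWithin).and (mem_nhdsWithin_of_mem_nhds (ball_mem_nhds ζ hr))
    obtain ⟨z, hz1, hz2⟩ := (h1.and_eventually h2).exists
    exact ⟨f z, ⟨z, hz2, rfl⟩, hz1⟩
  obtain ⟨y, -, hy⟩ := hpre W1 W2 hW1 hW2 (by
    rintro _ ⟨z, hz, rfl⟩; exact hball z hz.2 hz.1)
    (hmeet y1 hy1 W1 hW1 (hE1 ⟨hy1, hnot y1 hy1 hy1'⟩))
    (hmeet y2 hy2 W2 hW2 (hE2 ⟨hy2, fun h => hnot y2 hy2 h hy2'⟩))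
  exact Set.disjoint_left.1 hW hy.1 hy.2

theorem aux_boundary {Ω O : Set ℂ} (hΩ : IsOpen Ω) (hbd : Bornology.IsBounded Ω) (hO : IsOpen O)
    (hOc : IsPreconnected O) {σ : ℂ → ℝ} (hσ : AnalyticOnNhd ℝ σ O) (hne : ∃ z ∈ O, σ z ≠ 0)
    (hfr : frontier Ω ⊆ O) (hfr0 : ∀ z ∈ frontier Ω, σ z = 0) {F f : ℂ → ℂ}
    (hF : DifferentiableOn ℂ F Ω) (hFm : ∀ z ∈ Ω, F z ∈ ball (0:ℂ) 1)
    (hf : DifferentiableOn ℂ f (ball 0 1))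
    (hfm : ∀ w ∈ ball (0:ℂ) 1, f w ∈ Ω ∧ F (f w) = w) (hleft : ∀ z ∈ Ω, f (F z) = z) :
    ∃ g : ℂ → ℂ, ContinuousOn g (closedBall 0 1) ∧ (∀ w ∈ ball (0:ℂ) 1, g w = f w) ∧
      ∀ ζ ∈ sphere (0:ℂ) 1, g ζ ∈ frontier Ω := by
  have hK : IsCompact (closure Ω) := hbd.isCompact_closure
  have hclos : closure (ball (0:ℂ) 1) = closedBall 0 1 := closure_ball 0 one_ne_zero
  -- properness of F
  have hFl : ∀ y ∈ frontier Ω, Tendsto (fun z => ‖F z‖) (𝓝[Ω] y) (𝓝 1) := by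
    intro y hy
    rw [frontier, hΩ.interior_eq] at hy
    refine tendsto_order.2 ⟨fun c hc => ?_, fun c hc => ?_⟩
    · have hcomp : IsCompact (f '' closedBall 0 c) :=
        (isCompact_closedBall (0:ℂ) c).image_of_continuousOn
          (hf.continuousOn.mono (closedBall_subset_ball hc))
      have h1 : y ∈ (f '' closedBall 0 c)ᶜ := by
        rintro ⟨w, hw, rfl⟩
        exact hy.2 (hfm w (closedBall_subset_ball hc hw)).1
      filter_upwards [mem_nhdsWithin_of_mem_nhds (hcomp.isClosed.isOpen_compl.mem_nhds h1),
        self_mem_nhdsWithin] with z h2 h3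
      by_contra h4
      push Not at h4
      exact h2 ⟨F z, by simpa using h4, hleft z h3⟩
    · filter_upwards [self_mem_nhdsWithin] with z hz
      have := hFm z hz
      rw [mem_ball_zero_iff] at this
      linarith
  have hev : ∀ ζ : ℂ, ∀ᶠ z in 𝓝[ball (0:ℂ) 1] ζ, f z ∈ closure Ω := fun ζ =>
    eventually_nhdsWithin_of_forall (fun z hz => subset_closure (hfm z hz).1)
  have hclu : ∀ ζ ∈ sphere (0:ℂ) 1, ∀ y, MapClusterPt y (𝓝[ball (0:ℂ) 1] ζ) f → y ∈ frontier Ω := by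
    intro ζ hζ y hy
    rw [frontier, hΩ.interior_eq]
    refine ⟨?_, fun hyΩ => ?_⟩
    · by_contra h
      have h1 := hy.frequently (isClosed_closure.isOpen_compl.eventually_mem h)
      exact h1 ((hev ζ).mono (fun z h2 h3 => h3 h2))
    · have hFc : ContinuousAt F y := (hF.differentiableAt (hΩ.mem_nhds hyΩ)).continuousAt
      have h1 : ∀ᶠ z in 𝓝 y, F z ∈ ball (0:ℂ) ((1 + ‖F y‖)/2) := by
        refine hFc.eventually_mem (isOpen_ball.mem_nhds ?_)
        have := hFm y hyΩ
        rw [mem_ball_zero_iff] at this ⊢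
        linarith
      have h2 := hy.frequently h1
      have h3 : ∀ᶠ z in 𝓝[ball (0:ℂ) 1] ζ, (1 + ‖F y‖)/2 < ‖z‖ := by
        refine mem_nhdsWithin_of_mem_nhds ((continuous_norm.tendsto ζ).eventually (lt_mem_nhds ?_))
        have := hFm y hyΩ
        rw [mem_ball_zero_iff] at this
        rw [mem_sphere_zero_iff_norm.1 hζ]
        linarith
      obtain ⟨z, ⟨h4, h5⟩, h6⟩ := ((h2.and_eventually h3).and_eventually eventually_mem_nhdsWithin).exists
      rw [(hfm z h6).2, mem_ball_zero_iff] at h4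
      linarith
  have hlim : ∀ ζ ∈ sphere (0:ℂ) 1, ∃ y ∈ frontier Ω, Tendsto f (𝓝[ball (0:ℂ) 1] ζ) (𝓝 y) := by
    intro ζ hζ
    have hζ1 : ‖ζ‖ = 1 := by simpa using hζ
    set E := {y | MapClusterPt y (𝓝[ball (0:ℂ) 1] ζ) f} with hE
    have hEc : IsPreconnected E := aux_cluster_conn (convex_ball 0 1) hf.continuousOn hK
      (fun z hz => subset_closure (hfm z hz).1)
    have : (𝓝[ball (0:ℂ) 1] ζ).NeBot := mem_closure_iff_nhdsWithin_neBot.1 (by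
      rw [hclos]; exact sphere_subset_closedBall hζ)
    obtain ⟨y, hyK, hy⟩ := hK.exists_mapClusterPt_of_frequently (hev ζ).frequently
    refine ⟨y, hclu ζ hζ y hy, hK.tendsto_nhds_of_unique_mapClusterPt (hev ζ) ?_⟩
    intro y' _ hy'
    by_contra hyy
    obtain ⟨Γ, R, hR, hΓd, hΓO, hΓ0, hΓE, hΓn⟩ := aux_arc hO hOc hσ hne
      (fun z hz => hfr (hclu ζ hζ z hz)) (fun z hz => hfr0 z (hclu ζ hζ z hz)) hEc
      ⟨y', hy', y, hy, hyy⟩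
    obtain ⟨x, hx, V, hV, hxV⟩ := aux_twoside hΩ hF hFm hFl hR hΓd
      (fun x hx => hclu ζ hζ _ (hΓE x hx)) (fun w hw h => hΓ0 w hw (hfr0 _ h)) hζ1
    have h1 : ∀ᶠ y in 𝓝 (Γ x), y ∈ Ω → F y ∉ V := hΓn x hx hxV
    have h20 : MapClusterPt (Γ x) (𝓝[ball (0:ℂ) 1] ζ) f := hΓE x hx
    have h2 := h20.frequently h1
    obtain ⟨z, ⟨h3, h4⟩, h5⟩ := ((h2.and_eventually eventually_mem_nhdsWithin).and_eventually
      (mem_nhdsWithin_of_mem_nhds hV : ∀ᶠ z in 𝓝[ball (0:ℂ) 1] ζ, z ∈ V)).exists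
    have h6 := h3 (hfm z h4).1
    rw [(hfm z h4).2] at h6
    exact h6 h5
  refine ⟨extendFrom (ball 0 1) f, continuousOn_extendFrom hclos.ge ?_, ?_, ?_⟩
  · intro ζ hζ
    rcases eq_or_lt_of_le (mem_closedBall_zero_iff.1 hζ) with h | h
    · obtain ⟨y, -, hy⟩ := hlim ζ (by simpa using h)
      exact ⟨y, hy⟩
    · exact ⟨f ζ, hf.continuousOn ζ (by simpa using h)⟩
  · exact fun w hw => extendFrom_extends hf.continuousOn w hw
  · intro ζ hζ
    obtain ⟨y, hy, hy2⟩ := hlim ζ hζ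
    rwa [extendFrom_eq (by rw [hclos]; exact sphere_subset_closedBall hζ) hy2]

theorem aux_comp_closed {X : Type*} [TopologicalSpace X] [LocallyConnectedSpace X] {S : Set X}
    (hS : IsOpen S) {x y : X} (hy : y ∈ S) (hc : y ∈ closure (connectedComponentIn S x)) :
    y ∈ connectedComponentIn S x := by
  have h1 : IsOpen (connectedComponentIn S y) := hS.connectedComponentIn
  obtain ⟨z, hz1, hz2⟩ := mem_closure_iff.1 hc _ h1 (mem_connectedComponentIn hy)
  rw [connectedComponentIn_eq hz2, ← connectedComponentIn_eq hz1]
  exact mem_connectedComponentIn hy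

theorem aux_frontier_comp {X : Type*} [TopologicalSpace X] [LocallyConnectedSpace X] {S : Set X}
    (hS : IsOpen S) (x : X) {y : X} (hy : y ∈ frontier (connectedComponentIn S x)) : y ∉ S := by
  intro h
  have ho : IsOpen (connectedComponentIn S x) := hS.connectedComponentIn
  rw [frontier, ho.interior_eq] at hy
  exact hy.2 (aux_comp_closed hS h hy.1)

theorem aux_exterior_conn : IsPreconnected {z : ℂ | 1 ≤ ‖z‖} := by
  have h : {z : ℂ | 1 ≤ ‖z‖} =
      (fun q : ℝ × ℝ => (q.1:ℂ) * Complex.exp (q.2 * Complex.I)) '' (Ici 1 ×ˢ univ) := by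
    ext z
    constructor
    · intro hz
      exact ⟨(‖z‖, z.arg), ⟨hz, mem_univ _⟩, Complex.norm_mul_exp_arg_mul_I z⟩
    · rintro ⟨⟨r, t⟩, ⟨hr, -⟩, rfl⟩
      have hr1 : (1:ℝ) ≤ r := hr
      change (1:ℝ) ≤ _
      rw [norm_mul, Complex.norm_exp_ofReal_mul_I, mul_one, Complex.norm_real]
      exact hr1.trans (le_abs_self r)
  rw [h]
  exact (isPreconnected_Ici.prod isPreconnected_univ).image _ (by fun_prop)

theorem aux_planar {O : Set ℂ} (hO : IsOpen O) (hOc : IsPreconnected O)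
    (hOb : closedBall (0:ℂ) 1 ⊆ O) {σ : ℂ → ℝ} (hσ : AnalyticOnNhd ℝ σ O) {G G' : Set ℂ}
    (hG : IsOpen G) (hG' : IsOpen G') (hdis : Disjoint G G')
    (hcov : ∀ z ∈ O, σ z ≠ 0 → z ∈ G ∪ G') (hGσ : ∀ z ∈ G, σ z ≠ 0) (hGσ' : ∀ z ∈ G', σ z ≠ 0)
    (h1 : sphere (0:ℂ) 1 ⊆ G) (h2 : sphere (0:ℂ) (1/2) ⊆ G') :
    ∃ g : ℂ → ℂ, ContinuousOn g (closedBall 0 1) ∧ DifferentiableOn ℂ g (ball 0 1) ∧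
      (∀ w ∈ closedBall (0:ℂ) 1, g w ∈ closedBall (0:ℂ) 1) ∧
      (∀ w ∈ sphere (0:ℂ) 1, σ (g w) = 0) ∧ (∃ w ∈ closedBall (0:ℂ) 1, g w = 0) ∧
      ∃ w ∈ closedBall (0:ℂ) 1, σ (g w) ≠ 0 := by
  set A : Set ℂ := {z | z ∈ closedBall (0:ℂ) 1 ∧ σ z = 0} with hA
  have hAc : IsClosed A :=
    (hσ.continuousOn.mono hOb).preimage_isClosed_of_isClosed isClosed_closedBall isClosed_singleton
  have hAo : IsOpen Aᶜ := hAc.isOpen_compl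
  have h1s : (1:ℂ) ∈ sphere (0:ℂ) 1 := by simp
  have hhs : (1/2:ℂ) ∈ sphere (0:ℂ) (1/2) := by simp
  have h1A : (1:ℂ) ∈ Aᶜ := fun h => hGσ 1 (h1 h1s) h.2
  set W := connectedComponentIn Aᶜ 1 with hW
  have hWo : IsOpen W := hAo.connectedComponentIn
  have hWA : W ⊆ Aᶜ := connectedComponentIn_subset _ _
  have hWc : IsPreconnected W := isPreconnected_connectedComponentIn
  have h1W : (1:ℂ) ∈ W := mem_connectedComponentIn h1A
  have hext : {z : ℂ | 1 ≤ ‖z‖} ⊆ W := by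
    refine aux_exterior_conn.subset_connectedComponentIn (by simp) ?_
    rintro z hz ⟨hz1, hz2⟩
    have : ‖z‖ = 1 := le_antisymm (by simpa using hz1) hz
    exact hGσ z (h1 (by simpa using this)) hz2
  -- separation
  set S1 := G ∪ {z : ℂ | 1 < ‖z‖} with hS1
  set S2 := G' ∩ ball (0:ℂ) 1 with hS2
  have hS1o : IsOpen S1 := hG.union (isOpen_lt continuous_const continuous_norm)
  have hS2o : IsOpen S2 := hG'.inter isOpen_ball
  have hS12 : Disjoint S1 S2 := by
    rw [Set.disjoint_left]
    rintro z (hz | hz) ⟨hz1, hz2⟩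
    · exact Set.disjoint_left.1 hdis hz hz1
    · rw [mem_ball_zero_iff] at hz2
      exact absurd hz2 (not_lt.2 (le_of_lt hz))
  have hWS1 : W ⊆ S1 := by
    refine hWc.subset_left_of_subset_union hS1o hS2o hS12 ?_ ⟨1, h1W, Or.inl (h1 h1s)⟩
    intro z hz
    rcases lt_trichotomy ‖z‖ 1 with h | h | h
    · have hzc : z ∈ closedBall (0:ℂ) 1 := by simpa using h.le
      rcases hcov z (hOb hzc) (fun h0 => hWA hz ⟨hzc, h0⟩) with h3 | h3
      · exact Or.inl (Or.inl h3)
      · exact Or.inr ⟨h3, by simpa using h⟩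
    · exact Or.inl (Or.inl (h1 (by simpa using h)))
    · exact Or.inl (Or.inr h)
  have hWS2 : Disjoint W S2 := hS12.mono_left hWS1
  have hsph2 : sphere (0:ℂ) (1/2) ⊆ S2 := fun z hz => ⟨h2 hz, by
    rw [mem_sphere_zero_iff_norm] at hz
    rw [mem_ball_zero_iff, hz]; norm_num⟩
  have hWball : Disjoint W (ball (0:ℂ) (1/2)) := by
    rw [Set.disjoint_iff_inter_eq_empty, ← not_nonempty_iff_eq_empty]
    intro hne
    have := aux_conn_frontier hWc isOpen_ball (fun z hz hfr => ?_) hne h1W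
    · rw [mem_ball_zero_iff] at this; norm_num at this
    · rw [frontier_ball (0:ℂ) (by norm_num)] at hfr
      exact Set.disjoint_left.1 hWS2 hz (hsph2 hfr)
  set I := (closure W)ᶜ with hI
  have hIo : IsOpen I := isClosed_closure.isOpen_compl
  have hbI : closedBall (0:ℂ) (1/2) ⊆ I := by
    have e1 : Disjoint (closure W) (ball (0:ℂ) (1/2)) := hWball.closure_left isOpen_ball
    have e2 : Disjoint (closure W) S2 := hWS2.closure_left hS2o
    intro z hz hzW
    rcases eq_or_lt_of_le (mem_closedBall_zero_iff.1 hz) with h | h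
    · exact Set.disjoint_left.1 e2 hzW (hsph2 (by simpa using h))
    · exact Set.disjoint_left.1 e1 hzW (mem_ball_zero_iff.2 h)
  have hIW : ∀ z ∈ I, z ∉ W := fun z hz h => hz (subset_closure h)
  have hIb : I ⊆ ball (0:ℂ) 1 := by
    intro z hz
    rw [mem_ball_zero_iff]
    by_contra h
    exact hIW z hz (hext (not_lt.1 h))
  set Ω := connectedComponentIn I 0 with hΩd
  have hΩo : IsOpen Ω := hIo.connectedComponentIn
  have hΩI : Ω ⊆ I := connectedComponentIn_subset _ _
  have hbΩ : closedBall (0:ℂ) (1/2) ⊆ Ω :=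
    (convex_closedBall (0:ℂ) (1/2)).isPreconnected.subset_connectedComponentIn (by simp) hbI
  have h0Ω : (0:ℂ) ∈ Ω := hbΩ (by simp)
  have hΩb : Bornology.IsBounded Ω := isBounded_ball.subset (hΩI.trans hIb)
  have hΩW : Disjoint Ω W := Set.disjoint_left.2 (fun z hz => hIW z (hΩI hz))
  have hfrA : frontier Ω ⊆ A := by
    intro y hy
    have hy1 : y ∈ closure W := by
      have := aux_frontier_comp hIo 0 hy
      rwa [hI, Set.mem_compl_iff, not_not] at this
    have hy2 : y ∉ W := fun h =>
      Set.disjoint_left.1 (hΩW.closure_left hWo) (frontier_subset_closure hy) h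
    have hy3 : y ∈ frontier W := by rw [frontier, hWo.interior_eq]; exact ⟨hy1, hy2⟩
    have := aux_frontier_comp hAo 1 hy3
    rwa [Set.mem_compl_iff, not_not] at this
  -- simply connected
  have hull : ∀ L, IsCompact L → L ⊆ Ω → ∃ M, IsCompact M ∧ L ⊆ M ∧ M ⊆ Ω ∧ IsPreconnected Mᶜ := by
    intro L hL hLΩ
    have hLo : IsOpen Lᶜ := hL.isClosed.isOpen_compl
    set Y := connectedComponentIn Lᶜ 1 with hY
    have hYo : IsOpen Y := hLo.connectedComponentIn
    have hYL : Y ⊆ Lᶜ := connectedComponentIn_subset _ _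
    have hcW : closure W ⊆ Y := by
      refine hWc.closure.subset_connectedComponentIn (subset_closure h1W) ?_
      intro z hz hzL
      exact hΩI (hLΩ hzL) hz
    have hMc : Yᶜᶜ = Y := compl_compl Y
    refine ⟨Yᶜ, ?_, ?_, ?_, by rw [hMc]; exact isPreconnected_connectedComponentIn⟩
    · refine Metric.isCompact_of_isClosed_isBounded hYo.isClosed_compl
        ((isBounded_ball (x := (0:ℂ)) (r := 1)).subset ?_)
      exact fun z hz => hIb (fun h => hz (hcW h))
    · exact fun z hz h => hYL h hz
    · intro z hz
      by_contra hzΩ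
      apply hz
      have hzI : z ∈ I := fun h => hz (hcW h)
      set C := connectedComponentIn I z with hC
      have hzC : z ∈ C := mem_connectedComponentIn hzI
      have hCΩ : Disjoint C Ω := by
        rw [Set.disjoint_left]
        intro x hx hx2
        apply hzΩ
        rw [hΩd, connectedComponentIn_eq hx2, ← connectedComponentIn_eq hx]
        exact hzC
      obtain ⟨y, hy⟩ : (frontier C).Nonempty := nonempty_frontier_iff.2 ⟨⟨z, hzC⟩, by
        intro h
        have : (0:ℂ) ∈ C := h ▸ mem_univ _
        exact Set.disjoint_left.1 hCΩ this h0Ω⟩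
      have hyY : y ∈ Y := by
        have := aux_frontier_comp hIo z hy
        rw [hI, Set.mem_compl_iff, not_not] at this
        exact hcW this
      have hCc : closure C ⊆ connectedComponentIn Lᶜ y := by
        have hCp : IsPreconnected C := isPreconnected_connectedComponentIn
        refine hCp.closure.subset_connectedComponentIn (frontier_subset_closure hy) ?_
        intro x hx hxL
        exact Set.disjoint_left.1 (hCΩ.closure_left hΩo) hx (hLΩ hxL)
      rw [hY, connectedComponentIn_eq hyY]
      exact hCc (subset_closure hzC)
  obtain ⟨F, hF, hFi, hFim⟩ := aux_rmt hΩo isPreconnected_connectedComponentIn h0Ω hΩb hull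
  obtain ⟨f, hf, hfm, hleft⟩ := aux_inverse hΩo hF hFi hFim
  have hFm : ∀ z ∈ Ω, F z ∈ ball (0:ℂ) 1 := fun z hz => hFim ▸ ⟨z, hz, rfl⟩
  obtain ⟨g, hgc, hgf, hgs⟩ := aux_boundary hΩo hΩb hO hOc hσ
    ⟨1, hOb (by simp), hGσ 1 (h1 h1s)⟩ (fun z hz => hOb (hfrA hz).1) (fun z hz => (hfrA hz).2)
    hF hFm hf hfm hleft
  have hval : ∀ z ∈ Ω, ∃ w ∈ closedBall (0:ℂ) 1, g w = z := fun z hz =>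
    ⟨F z, ball_subset_closedBall (hFm z hz), by rw [hgf _ (hFm z hz), hleft z hz]⟩
  refine ⟨g, hgc, hf.congr hgf, ?_, fun w hw => (hfrA (hgs w hw)).2, hval 0 h0Ω, ?_⟩
  · intro w hw
    rcases eq_or_lt_of_le (mem_closedBall_zero_iff.1 hw) with h | h
    · exact (hfrA (hgs w (by simpa using h))).1
    · have hw' : w ∈ ball (0:ℂ) 1 := by simpa using h
      rw [hgf w hw']
      exact ball_subset_closedBall (hIb (hΩI (hfm w hw').1))
  · obtain ⟨w, hw, hw2⟩ := hval (1/2) (hbΩ (sphere_subset_closedBall hhs))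
    exact ⟨w, hw, by rw [hw2]; exact hGσ' _ (h2 hhs)⟩

theorem aux_isolated {E : Type*} [NormedAddCommGroup E] [NormedSpace ℂ E] [CompleteSpace E]
    {φ : ℂ → E} {p : E} (hφ : DifferentiableOn ℂ φ (ball 0 1)) (h0 : φ 0 = p)
    (hne : ∃ a ∈ ball (0:ℂ) 1, ∃ b ∈ ball (0:ℂ) 1, φ a ≠ φ b) {d : ℝ} (hd : 0 < d) :
    ∃ r, 0 < r ∧ r < 1 ∧ ∀ x : ℂ, ‖x‖ < r → ‖φ x - p‖ < d ∧ (x ≠ 0 → φ x ≠ p) := by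
  have han : AnalyticOnNhd ℂ φ (ball 0 1) := hφ.analyticOnNhd isOpen_ball
  have h0m : (0:ℂ) ∈ ball (0:ℂ) 1 := by simp
  have h1 : ∀ᶠ x in 𝓝 (0:ℂ), x ≠ 0 → φ x ≠ p := by
    rcases (han 0 h0m).eventually_eq_or_eventually_ne (g := fun _ => p) analyticAt_const with h | h
    · exfalso
      have heq := han.eqOn_of_preconnected_of_eventuallyEq (g := fun _ => p)
        (fun z _ => analyticAt_const) (convex_ball (0:ℂ) 1).isPreconnected h0m h
      obtain ⟨a, ha, b, hb, hab⟩ := hne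
      exact hab ((heq ha).trans (heq hb).symm)
    · exact eventually_nhdsWithin_iff.1 h
  have h2 : ∀ᶠ x in 𝓝 (0:ℂ), φ x ∈ ball p d := by
    refine (han 0 h0m).continuousAt.eventually_mem ?_
    rw [h0]; exact ball_mem_nhds p hd
  obtain ⟨r, hr, h⟩ := Metric.eventually_nhds_iff.1 (h1.and h2)
  refine ⟨min r (1/2), lt_min hr (by norm_num), by
    have := min_le_right r (1/2:ℝ); linarith, fun x hx => ?_⟩
  have h3 := h (y := x) (by simpa using hx.trans_le (min_le_left _ _))
  exact ⟨by simpa [dist_eq_norm] using h3.2, h3.1⟩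

theorem aux_thick {E : Type*} [NormedAddCommGroup E] {φ : ℂ → E} {V : Set E} {r : ℝ}
    (hφ : ContinuousOn φ (sphere 0 r)) (hV : IsOpen V) (h : ∀ x ∈ sphere (0:ℂ) r, φ x ∈ V) :
    ∃ κ > 0, ∀ x : ℂ, ‖x‖ = r → ∀ u : E, ‖u‖ < κ → φ x + u ∈ V := by
  have hK : IsCompact (φ '' sphere 0 r) := (isCompact_sphere (0:ℂ) r).image_of_continuousOn hφ
  obtain ⟨κ, hκ, hsub⟩ := hK.exists_thickening_subset_open hV (by
    rintro _ ⟨x, hx, rfl⟩; exact h x hx)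
  refine ⟨κ, hκ, fun x hx u hu => hsub ?_⟩
  rw [mem_thickening_iff]
  exact ⟨φ x, ⟨x, by simpa using hx, rfl⟩, by simpa [dist_eq_norm] using hu⟩

theorem aux_geom {E : Type*} [NormedAddCommGroup E] [NormedSpace ℂ E] [CompleteSpace E]
    {U V1 V2 : Set E} {p : E} (hU : IsOpen U) (hp : p ∈ U) (hV1 : IsOpen V1) (hV2 : IsOpen V2)
    {φ1 φ2 : ℂ → E} (hφ1 : DifferentiableOn ℂ φ1 (ball 0 1)) (hφ2 : DifferentiableOn ℂ φ2 (ball 0 1))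
    (h10 : φ1 0 = p) (h20 : φ2 0 = p)
    (hne1 : ∃ a ∈ ball (0:ℂ) 1, ∃ b ∈ ball (0:ℂ) 1, φ1 a ≠ φ1 b)
    (hne2 : ∃ a ∈ ball (0:ℂ) 1, ∃ b ∈ ball (0:ℂ) 1, φ2 a ≠ φ2 b)
    (hm1 : ∀ x ∈ ball (0:ℂ) 1, φ1 x ≠ p → φ1 x ∈ V1)
    (hm2 : ∀ x ∈ ball (0:ℂ) 1, φ2 x ≠ p → φ2 x ∈ V2) :
    ∃ ε > 0, ∀ q ∈ ball p ε, ∃ (Ψ : ℂ → E) (R : ℝ), 1 < R ∧ DifferentiableOn ℂ Ψ (ball 0 R) ∧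
      (∀ z ∈ ball (0:ℂ) R, Ψ z ∈ U) ∧ Ψ 0 = q ∧ (∀ z ∈ sphere (0:ℂ) 1, Ψ z ∈ V1) ∧
      ∀ z ∈ sphere (0:ℂ) (1/2), Ψ z ∈ V2 := by
  obtain ⟨d, hd, hdU⟩ := Metric.isOpen_iff.1 hU p hp
  obtain ⟨ρ1, hρ1, hρ1', hfa1⟩ := aux_isolated hφ1 h10 hne1 (d := d/3) (by linarith)
  set r1 := ρ1/2 with hr1
  have hr1p : 0 < r1 := by simp only [hr1]; linarith
  have hs1 : sphere (0:ℂ) r1 ⊆ ball (0:ℂ) 1 := fun x hx => by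
    rw [mem_sphere_zero_iff_norm] at hx
    rw [mem_ball_zero_iff, hx, hr1]; linarith
  obtain ⟨κ1, hκ1, hth1⟩ := aux_thick (hφ1.continuousOn.mono hs1) hV1 (fun x hx => by
    refine hm1 x (hs1 hx) ((hfa1 x ?_).2 ?_)
    · rw [mem_sphere_zero_iff_norm] at hx; rw [hx, hr1]; linarith
    · rintro rfl; simp at hx; linarith)
  obtain ⟨ρ2, hρ2, hρ2', hfa2⟩ := aux_isolated hφ2 h20 hne2 (d := min (d/3) (κ1/2))
    (lt_min (by linarith) (by linarith))
  set r2 := ρ2/2 with hr2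
  have hr2p : 0 < r2 := by simp only [hr2]; linarith
  have hs2 : sphere (0:ℂ) (r2/2) ⊆ ball (0:ℂ) 1 := fun x hx => by
    rw [mem_sphere_zero_iff_norm] at hx
    rw [mem_ball_zero_iff, hx, hr2]; linarith
  obtain ⟨κ2, hκ2, hth2⟩ := aux_thick (hφ2.continuousOn.mono hs2) hV2 (fun x hx => by
    refine hm2 x (hs2 hx) ((hfa2 x ?_).2 ?_)
    · rw [mem_sphere_zero_iff_norm] at hx; rw [hx, hr2]; linarith
    · rintro rfl; simp at hx; linarith)
  obtain ⟨ρ3, hρ3, hρ3', hfa3⟩ := aux_isolated hφ1 h10 hne1 (d := κ2/2) (by linarith)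
  obtain ⟨N0, hN0⟩ := exists_pow_lt_of_lt_one hρ3 (by norm_num : (1/2:ℝ) < 1)
  set N := N0 + 1 with hN
  have hNlt : r1 * (1/2:ℝ)^N < ρ3 := by
    have e1 : (1/2:ℝ)^N ≤ (1/2:ℝ)^N0 := pow_le_pow_of_le_one (by norm_num) (by norm_num) (by omega)
    have e2 : r1 ≤ 1 := by rw [hr1]; linarith
    have e3 : (0:ℝ) < (1/2:ℝ)^N := by positivity
    nlinarith
  obtain ⟨R, hR1, hR2, hRN⟩ : ∃ R : ℝ, 1 < R ∧ R < 2 ∧ R^N < 2 := by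
    have h1 : ∀ᶠ R : ℝ in 𝓝 1, R^N < 2 :=
      ((continuous_pow N).tendsto (1:ℝ)).eventually (gt_mem_nhds (by norm_num))
    have h2 : ∀ᶠ R : ℝ in 𝓝 1, R < 2 := gt_mem_nhds (by norm_num)
    obtain ⟨δ, hδ, h⟩ := Metric.eventually_nhds_iff.1 (h1.and h2)
    have := h (y := 1 + δ/2) (by
      rw [Real.dist_eq, add_sub_cancel_left, abs_of_pos (by linarith)]; linarith)
    exact ⟨1 + δ/2, by linarith, this.2, this.1⟩
  refine ⟨min (d/3) (min (κ1/2) (κ2/2)),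
    lt_min (by linarith) (lt_min (by linarith) (by linarith)), fun q hq => ?_⟩
  have hq' : ‖q - p‖ < min (d/3) (min (κ1/2) (κ2/2)) := by rwa [mem_ball_iff_norm] at hq
  have hqd : ‖q - p‖ < d/3 := hq'.trans_le (min_le_left _ _)
  have hqκ1 : ‖q - p‖ < κ1/2 := hq'.trans_le ((min_le_right _ _).trans (min_le_left _ _))
  have hqκ2 : ‖q - p‖ < κ2/2 := hq'.trans_le ((min_le_right _ _).trans (min_le_right _ _))
  have hx : ∀ z : ℂ, ‖(r1:ℂ) * z^N‖ = r1 * ‖z‖^N := fun z => by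
    rw [norm_mul, norm_pow, Complex.norm_real, Real.norm_eq_abs, abs_of_pos hr1p]
  have hy : ∀ z : ℂ, ‖(r2:ℂ) * z‖ = r2 * ‖z‖ := fun z => by
    rw [norm_mul, Complex.norm_real, Real.norm_eq_abs, abs_of_pos hr2p]
  have hxR : ∀ z ∈ ball (0:ℂ) R, ‖(r1:ℂ) * z^N‖ < ρ1 := by
    intro z hz
    rw [mem_ball_zero_iff] at hz
    rw [hx]
    have : ‖z‖^N ≤ R^N := pow_le_pow_left₀ (norm_nonneg z) hz.le N
    have h2 : r1 * ‖z‖^N < r1 * 2 := mul_lt_mul_of_pos_left (this.trans_lt hRN) hr1p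
    linarith
  have hyR : ∀ z ∈ ball (0:ℂ) R, ‖(r2:ℂ) * z‖ < ρ2 := by
    intro z hz
    rw [mem_ball_zero_iff] at hz
    rw [hy]
    have h2 : r2 * ‖z‖ < r2 * 2 := mul_lt_mul_of_pos_left (hz.trans hR2) hr2p
    linarith
  refine ⟨fun z => φ1 (r1 * z^N) + φ2 (r2 * z) - p + (q - p), R, hR1, ?_, ?_, ?_, ?_, ?_⟩
  · have e1 : DifferentiableOn ℂ (fun z : ℂ => φ1 (r1 * z^N)) (ball 0 R) :=
      hφ1.comp (by fun_prop) (fun z hz => mem_ball_zero_iff.2 ((hxR z hz).trans hρ1'))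
    have e2 : DifferentiableOn ℂ (fun z : ℂ => φ2 (r2 * z)) (ball 0 R) :=
      hφ2.comp (by fun_prop) (fun z hz => mem_ball_zero_iff.2 ((hyR z hz).trans hρ2'))
    exact ((e1.add e2).sub_const p).add_const (q - p)
  · intro z hz
    apply hdU
    rw [mem_ball_iff_norm]
    have e1 := (hfa1 _ (hxR z hz)).1
    have e2 := ((hfa2 _ (hyR z hz)).1).trans_le (min_le_left _ _)
    have e3 : φ1 (r1 * z^N) + φ2 (r2 * z) - p + (q - p) - p =
        (φ1 (r1 * z^N) - p) + (φ2 (r2 * z) - p) + (q - p) := by abel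
    beta_reduce
    rw [e3]
    have := norm_add₃_le (a := φ1 (r1 * z^N) - p) (b := φ2 (r2 * z) - p) (c := q - p)
    linarith
  · simp [hN, h10, h20]
  · intro z hz
    rw [mem_sphere_zero_iff_norm] at hz
    have e3 : φ1 (r1 * z^N) + φ2 (r2 * z) - p + (q - p) =
        φ1 (r1 * z^N) + ((φ2 (r2 * z) - p) + (q - p)) := by abel
    beta_reduce
    rw [e3]
    refine hth1 _ (by rw [hx, hz, one_pow, mul_one]) _ ?_
    have e2 := ((hfa2 _ (hyR z (by rw [mem_ball_zero_iff, hz]; exact hR1))).1).trans_le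
      (min_le_right _ _)
    have := norm_add_le (φ2 (r2 * z) - p) (q - p)
    linarith
  · intro z hz
    rw [mem_sphere_zero_iff_norm] at hz
    have e3 : φ1 (r1 * z^N) + φ2 (r2 * z) - p + (q - p) =
        φ2 (r2 * z) + ((φ1 (r1 * z^N) - p) + (q - p)) := by abel
    beta_reduce
    rw [e3]
    refine hth2 _ (by rw [hy, hz]; ring) _ ?_
    have e2 := (hfa3 (r1 * z^N) (by rw [hx, hz]; exact hNlt)).1
    have := norm_add_le (φ1 (r1 * z^N) - p) (q - p)
    linarith

end AuxLemmas

theorem attached_disc_through_every_nearby_point {n : ℕ} (hn : 2 ≤ n)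
    (U H : Set (EuclideanSpace ℂ (Fin n)))
    (hH : IsRealAnalyticHypersurface U H)
    (p : EuclideanSpace ℂ (Fin n)) (hp : p ∈ H)
    (h2 : CurveSupportedFromTwoSides U H p) :
    ∃ ε > 0, ∀ q ∈ ball p ε,
      ∃ ψ : ℂ → EuclideanSpace ℂ (Fin n),
        IsAttachedDisc H ψ ∧ ψ '' closedBall 0 1 ⊆ U ∧ q ∈ ψ '' closedBall 0 1 := by
  obtain ⟨hU, -, ρ, hρ, hHeq, -⟩ := hH
  obtain ⟨C1, C2, V1, V2, ⟨φ1, hφ1, hφ1U, hne1, h10, hC1, hC1H⟩, ⟨φ2, hφ2, hφ2U, hne2, h20, hC2, hC2H⟩,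
    ⟨x1, hx1, hV1⟩, ⟨x2, hx2, hV2⟩, hV12, hCV1, hCV2⟩ := h2
  have hpU : p ∈ U := by rw [hHeq] at hp; exact hp.1
  have hUH : ∀ z, z ∈ U \ H ↔ z ∈ U ∧ ρ z ≠ 0 := fun z => by
    rw [hHeq]
    constructor
    · rintro ⟨h1, h3⟩
      exact ⟨h1, fun h => h3 ⟨h1, h⟩⟩
    · rintro ⟨h1, h3⟩
      exact ⟨h1, fun h => h3 h.2⟩
  have hUHo : IsOpen (U \ H) := by
    have e : U \ H = U ∩ ρ ⁻¹' {0}ᶜ := Set.ext hUH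
    rw [e]
    exact hρ.continuousOn.isOpen_inter_preimage hU isOpen_compl_singleton
  have hV1o : IsOpen V1 := by rw [hV1]; exact hUHo.connectedComponentIn
  have hV2o : IsOpen V2 := by rw [hV2]; exact hUHo.connectedComponentIn
  have hV1s : V1 ⊆ U \ H := by rw [hV1]; exact connectedComponentIn_subset _ _
  have hV2s : V2 ⊆ U \ H := by rw [hV2]; exact connectedComponentIn_subset _ _
  have hdis : Disjoint V1 V2 := by
    rw [Set.disjoint_left]
    intro z h1 h3
    apply hV12
    rw [hV1] at h1 ⊢
    rw [hV2] at h3 ⊢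
    rw [connectedComponentIn_eq h1, connectedComponentIn_eq h3]
  obtain ⟨ε, hε, hq⟩ := aux_geom hU hpU hV1o hV2o hφ1 hφ2 h10 h20 hne1 hne2
    (fun x hx hne => hCV1 ⟨by rw [hC1]; exact ⟨x, hx, rfl⟩, hne⟩)
    (fun x hx hne => hCV2 ⟨by rw [hC2]; exact ⟨x, hx, rfl⟩, hne⟩)
  refine ⟨ε, hε, fun q hqm => ?_⟩
  obtain ⟨Ψ, R, hR, hΨ, hΨU, hΨ0, hΨ1, hΨ2⟩ := hq q hqm
  have hbR : closedBall (0:ℂ) 1 ⊆ ball 0 R := closedBall_subset_ball hR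
  have hσ : AnalyticOnNhd ℝ (fun z => ρ (Ψ z)) (ball (0:ℂ) R) := by
    intro z hz
    have h1 : AnalyticAt ℝ Ψ z := ((hΨ.analyticOnNhd isOpen_ball) z hz).restrictScalars
    exact (hρ _ (hΨU z hz)).comp h1
  have hW : IsOpen ((U \ H) ∩ (closure V1)ᶜ) := hUHo.inter isClosed_closure.isOpen_compl
  obtain ⟨g, hgc, hgd, hgm, hgs, ⟨w0, hw0, hgw0⟩, ⟨w1, hw1, hgw1⟩⟩ :=
    aux_planar isOpen_ball (convex_ball (0:ℂ) R).isPreconnected hbR hσ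
      (hΨ.continuousOn.isOpen_inter_preimage isOpen_ball hV1o)
      (hΨ.continuousOn.isOpen_inter_preimage isOpen_ball hW)
      (by
        rw [Set.disjoint_left]
        rintro z ⟨_, h1⟩ ⟨_, h3⟩
        exact h3.2 (subset_closure h1))
      (by
        intro z hz h0
        by_cases h : Ψ z ∈ V1
        · exact Or.inl ⟨hz, h⟩
        · refine Or.inr ⟨hz, (hUH _).2 ⟨hΨU z hz, h0⟩, fun hc => h ?_⟩
          rw [hV1] at hc ⊢
          exact aux_comp_closed hUHo ((hUH _).2 ⟨hΨU z hz, h0⟩) hc)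
      (fun z hz => ((hUH _).1 (hV1s hz.2)).2)
      (fun z hz => ((hUH _).1 hz.2.1).2)
      (fun z hz => ⟨hbR (sphere_subset_closedBall hz), hΨ1 z hz⟩)
      (fun z hz => by
        refine ⟨hbR ?_, hV2s (hΨ2 z hz), fun hc => ?_⟩
        · rw [mem_sphere_zero_iff_norm] at hz
          rw [mem_closedBall_zero_iff, hz]
          norm_num
        · exact Set.disjoint_left.1 (hdis.closure_left hV2o) hc (hΨ2 z hz))
  have hgR : Set.MapsTo g (closedBall 0 1) (ball 0 R) := fun w hw => hbR (hgm w hw)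
  have hsph : ∀ w ∈ sphere (0:ℂ) 1, Ψ (g w) ∈ H := fun w hw => by
    rw [hHeq]
    exact ⟨hΨU _ (hgR (sphere_subset_closedBall hw)), hgs w hw⟩
  refine ⟨fun w => Ψ (g w), ⟨hΨ.continuousOn.comp hgc hgR,
    hΨ.comp hgd (hgR.mono_left ball_subset_closedBall), ?_, ?_⟩, ?_, ⟨w0, hw0, ?_⟩⟩
  · refine ⟨w1, hw1, 1, by simp, fun h => hgw1 ?_⟩
    have h1 : ρ (Ψ (g 1)) = 0 := hgs 1 (by simp)
    beta_reduce at h ⊢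
    rw [h, h1]
  · rintro _ ⟨w, hw, rfl⟩
    exact hsph w hw
  · rintro _ ⟨w, hw, rfl⟩
    exact hΨU _ (hgR hw)
  · beta_reduce
    rw [hgw0, hΨ0]
end
end

section
/- Let H be a real-analytic hypersurface in an open set U ⊆ ℂⁿ (n ≥ 2) that is curve-supported from two sides at a point p ∈ H. Then for every compact set K ⊆ H that is a neighborhood of p in H (i.e., H ∩ B_δ(p) ⊆ K for some δ > 0), the polynomial hull K̂ contains an open neighborhood of p in ℂⁿ. -/
open Metric

noncomputable section

theorem one_side_hull {n : ℕ}
    (U H : Set (EuclideanSpace ℂ (Fin n)))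
    (hU : IsOpen U) (hUH : IsOpen (U \ H))
    (p : EuclideanSpace ℂ (Fin n)) (hp : p ∈ H) (hpU : p ∈ U)
    (C V K : Set (EuclideanSpace ℂ (Fin n)))
    (hC : IsSupportCurve U H p C) (hV : IsComponentOfComplement U H V)
    (hCV : C \ {p} ⊆ V) (hK : IsCompact K)
    (δ : ℝ) (hδ : 0 < δ) (hδK : H ∩ ball p δ ⊆ K) :
    ∃ ε > 0, ∀ z ∈ ball p ε, z ∉ V → z ∈ polyHull K := by
  obtain ⟨φ, hd, hmap, ⟨a, ha, b, hb, hab⟩, h0, hCe, hCH⟩ := hC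
  obtain ⟨x, hx, hVx⟩ := hV
  have hVo : IsOpen V := hVx ▸ hUH.connectedComponentIn
  have han : AnalyticOnNhd ℂ φ (ball 0 1) := hd.analyticOnNhd isOpen_ball
  have hm0 : (0 : ℂ) ∈ ball (0 : ℂ) 1 := by simp
  have hne : ∀ᶠ ζ in nhdsWithin (0 : ℂ) {0}ᶜ, φ ζ ≠ p := by
    rcases (han 0 hm0).eventually_eq_or_eventually_ne (analyticAt_const (v := p)) with h | h
    · exfalso
      have := han.eqOn_of_preconnected_of_eventuallyEq
        (analyticOnNhd_const (v := p)) (convex_ball (0 : ℂ) 1).isPreconnected hm0 h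
      exact hab ((this ha).trans (this hb).symm)
    · exact h
  obtain ⟨δ', hδ', hδU⟩ : ∃ δ' > 0, ball p δ' ⊆ U ∩ ball p δ :=
    Metric.isOpen_iff.1 (hU.inter isOpen_ball) p ⟨hpU, mem_ball_self hδ⟩
  have hcont : ∀ᶠ ζ in nhds (0 : ℂ), φ ζ ∈ ball p (δ' / 2) := by
    have := (han 0 hm0).continuousAt
    refine this.eventually_mem ?_
    rw [h0]; exact ball_mem_nhds _ (by positivity)
  obtain ⟨r₁, hr₁, hne'⟩ := Metric.eventually_nhds_iff.1 (eventually_nhdsWithin_iff.1 hne)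
  obtain ⟨r₂, hr₂, hc'⟩ := Metric.eventually_nhds_iff.1 hcont
  obtain ⟨r, hr, hrlt⟩ : ∃ r : ℝ, 0 < r ∧ r < min 1 (min r₁ r₂) :=
    exists_between (by positivity)
  simp only [lt_min_iff] at hrlt
  have hsub : closedBall (0 : ℂ) r ⊆ ball 0 1 := closedBall_subset_ball hrlt.1
  have hSV : φ '' sphere 0 r ⊆ V := by
    rintro _ ⟨ζ, hζ, rfl⟩
    have hζ' : ‖ζ‖ = r := by simpa using hζ
    apply hCV
    refine ⟨hCe ▸ ⟨ζ, hsub (sphere_subset_closedBall hζ), rfl⟩, ?_⟩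
    apply hne' (by simpa [hζ'] using hrlt.2.1)
    intro h
    rw [Set.mem_singleton_iff.1 h] at hζ'
    simp at hζ'; linarith
  have hScomp : IsCompact (φ '' sphere 0 r) :=
    (isCompact_sphere _ _).image_of_continuousOn
      (hd.continuousOn.mono (sphere_subset_closedBall.trans hsub))
  obtain ⟨ε, hε, hth⟩ := hScomp.exists_thickening_subset_open hVo hSV
  refine ⟨min ε (δ' / 2), by positivity, fun z hz hzV P => ?_⟩
  have hz1 : ‖z - p‖ < ε := by
    rw [← dist_eq_norm]; exact lt_of_lt_of_le hz (min_le_left _ _)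
  have hz2 : ‖z - p‖ < δ' / 2 := by
    rw [← dist_eq_norm]; exact lt_of_lt_of_le hz (min_le_right _ _)
  set ψ : ℂ → EuclideanSpace ℂ (Fin n) := fun ζ => φ ζ + (z - p) with hψ
  have hψ0 : ψ 0 = z := by simp [hψ, h0]
  have hψd : DifferentiableOn ℂ ψ (ball 0 1) := hd.add_const _
  have hψsub : ∀ ζ ∈ closedBall (0 : ℂ) r, ψ ζ ∈ U ∩ ball p δ := by
    intro ζ hζ
    apply hδU
    have h1 : dist (φ ζ) p < δ' / 2 := hc' (lt_of_le_of_lt hζ hrlt.2.2)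
    rw [dist_eq_norm] at h1
    rw [mem_ball, dist_eq_norm]
    have : ψ ζ - p = (φ ζ - p) + (z - p) := by simp only [hψ]; abel
    rw [this]
    linarith [norm_add_le (φ ζ - p) (z - p)]
  have hψS : ∀ ζ ∈ sphere (0 : ℂ) r, ψ ζ ∈ V := by
    intro ζ hζ
    apply hth
    rw [mem_thickening_iff]
    exact ⟨φ ζ, ⟨ζ, hζ, rfl⟩, by simpa [hψ, dist_eq_norm] using hz1⟩
  set E : Set ℂ := closedBall 0 r ∩ ψ ⁻¹' Vᶜ with hE
  have hψc : ContinuousOn ψ (closedBall 0 r) := hψd.continuousOn.mono hsub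
  have hEc : IsClosed E := hψc.preimage_isClosed_of_isClosed isClosed_closedBall hVo.isClosed_compl
  have h0E : (0 : ℂ) ∈ E := ⟨by simp [hr.le], by simpa [hψ0] using hzV⟩
  have hfr : ∀ ζ ∈ frontier E, ψ ζ ∈ K := by
    intro ζ hζ
    have hζE : ζ ∈ E := hEc.frontier_subset hζ
    have hζr : ζ ∈ ball (0 : ℂ) r := by
      rcases (mem_closedBall.1 hζE.1).lt_or_eq with h | h
      · exact h
      · exact absurd (hψS ζ h) hζE.2
    refine hδK ⟨?_, (hψsub ζ hζE.1).2⟩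
    by_contra hnH
    have hmem : ψ ζ ∈ U \ H := ⟨(hψsub ζ hζE.1).1, hnH⟩
    set W := connectedComponentIn (U \ H) (ψ ζ) with hW
    have hWo : IsOpen W := hUH.connectedComponentIn
    have hWV : ∀ y ∈ W, y ∉ V := by
      intro y hy hyV
      have e1 := connectedComponentIn_eq hy
      rw [hVx] at hyV
      have e2 := connectedComponentIn_eq hyV
      apply hζE.2
      rw [hVx, e2, ← e1]
      exact mem_connectedComponentIn hmem
    have hnhds : E ∈ nhds ζ := by
      have hca : ContinuousAt ψ ζ :=
        hψc.continuousAt (Filter.mem_of_superset (isOpen_ball.mem_nhds hζr) ball_subset_closedBall)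
      filter_upwards [isOpen_ball.mem_nhds hζr,
        hca.preimage_mem_nhds (hWo.mem_nhds (mem_connectedComponentIn hmem))] with y hy1 hy2
      exact ⟨ball_subset_closedBall hy1, hWV _ hy2⟩
    exact hζ.2 (mem_interior_iff_mem_nhds.2 hnhds)
  set F : ℂ → ℂ := fun ζ => MvPolynomial.eval (fun i => ψ ζ i) P with hF
  set M := ⨆ w : K, ‖MvPolynomial.eval (fun i => (w : EuclideanSpace ℂ (Fin n)) i) P‖ with hM
  have hKb : ∀ w ∈ K, ‖MvPolynomial.eval (fun i => w i) P‖ ≤ M := by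
    intro w hw
    have hc : Continuous fun w : EuclideanSpace ℂ (Fin n) =>
        ‖MvPolynomial.eval (fun i => w i) P‖ := by
      refine ((MvPolynomial.continuous_eval P).comp ?_).norm
      fun_prop
    have hbdd : BddAbove (Set.range fun w : K =>
        ‖MvPolynomial.eval (fun i => (w : EuclideanSpace ℂ (Fin n)) i) P‖) := by
      have := hK.bddAbove_image hc.continuousOn
      rwa [Set.image_eq_range] at this
    exact le_ciSup hbdd ⟨w, hw⟩
  have hFfr : ∀ ζ ∈ frontier E, ‖F ζ‖ ≤ M := fun ζ hζ => hKb _ (hfr ζ hζ)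
  have hgoal : ‖F 0‖ ≤ M := by
    by_cases hi : (0 : ℂ) ∈ interior E
    · have hFd : DifferentiableOn ℂ F (ball 0 1) := by
        have hco : ∀ i, DifferentiableOn ℂ (fun ζ => ψ ζ i) (ball 0 1) := fun i =>
          (EuclideanSpace.proj (𝕜 := ℂ) i : EuclideanSpace ℂ (Fin n) →L[ℂ] ℂ).differentiable.comp_differentiableOn hψd
        simp only [hF]
        clear hFfr hKb hM hF
        clear_value M
        induction P using MvPolynomial.induction_on with
        | C a => simp
        | add p q hp hq => simp only [map_add]; exact hp.add hq
        | mul_X p i hp => simp only [map_mul, MvPolynomial.eval_X]; exact hp.mul (hco i)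
      have hcl : closure (interior E) ⊆ E := closure_minimal interior_subset hEc
      refine Complex.norm_le_of_forall_mem_frontier_norm_le (U := interior E)
        ((isBounded_closedBall (x := (0 : ℂ)) (r := r)).subset
          (interior_subset.trans Set.inter_subset_left)) ?_ ?_ (subset_closure hi)
      · exact (hFd.mono (hcl.trans (Set.inter_subset_left.trans hsub))).diffContOnCl
      · exact fun ζ hζ => hFfr ζ (frontier_interior_subset hζ)
    · exact hFfr 0 ⟨subset_closure h0E, hi⟩
  simpa [hF, hψ0] using hgoal

theorem polynomial_hull_contains_neighborhood {n : ℕ} (hn : 2 ≤ n)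
    (U H : Set (EuclideanSpace ℂ (Fin n)))
    (hH : IsRealAnalyticHypersurface U H)
    (p : EuclideanSpace ℂ (Fin n)) (hp : p ∈ H)
    (h2 : CurveSupportedFromTwoSides U H p) :
    ∀ K : Set (EuclideanSpace ℂ (Fin n)), IsCompact K → K ⊆ H →
      (∃ δ > 0, H ∩ ball p δ ⊆ K) →
      ∃ ε > 0, ball p ε ⊆ polyHull K := by
  intro K hK hKH hδK
  obtain ⟨δ, hδ, hδK⟩ := hδK
  obtain ⟨hU, -, ρ, hρ, hHe, -⟩ := hH
  have hpU : p ∈ U := by rw [hHe] at hp; exact hp.1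
  have hUH : IsOpen (U \ H) := by
    have : U \ H = U ∩ ρ ⁻¹' {0}ᶜ := by
      rw [hHe]; ext z; simp
    rw [this]
    exact hρ.continuousOn.isOpen_inter_preimage hU isOpen_compl_singleton
  obtain ⟨C₁, C₂, V₁, V₂, hC₁, hC₂, hV₁, hV₂, hne, h₁, h₂⟩ := h2
  obtain ⟨ε₁, hε₁, H₁⟩ := one_side_hull U H hU hUH p hp hpU C₁ V₁ K hC₁ hV₁ h₁ hK δ hδ hδK
  obtain ⟨ε₂, hε₂, H₂⟩ := one_side_hull U H hU hUH p hp hpU C₂ V₂ K hC₂ hV₂ h₂ hK δ hδ hδK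
  refine ⟨min ε₁ ε₂, by positivity, fun z hz => ?_⟩
  by_cases hz1 : z ∈ V₁
  · refine H₂ z (ball_subset_ball (min_le_right _ _) hz) fun hz2 => hne ?_
    obtain ⟨x, -, rfl⟩ := hV₁
    obtain ⟨y, -, rfl⟩ := hV₂
    exact (connectedComponentIn_eq hz1).trans (connectedComponentIn_eq hz2).symm
  · exact H₁ z (ball_subset_ball (min_le_left _ _) hz) hz1
end
end

section
/- Let H be a real-analytic hypersurface in an open set U ⊆ ℂⁿ (n ≥ 2) that is curve-supported from two sides at a point p ∈ H. Then for every compact set K ⊆ H that is a neighborhood of p in H (i.e., H ∩ B_δ(p) ⊆ K for some δ > 0), the rational hull K̂_rat contains an open neighborhood of p in ℂⁿ. -/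
open Metric

noncomputable section

/-- Continuity principle: zeros of `Q` in the open part `O` cannot appear along a family of
translated discs whose boundaries stay in the open set `V` disjoint from `O`. -/
lemma no_zero_of_translate {E : Type*} [NormedAddCommGroup E] [NormedSpace ℂ E]
    {V O : Set E} (hV : IsOpen V) (hO : IsOpen O) (hVO : Disjoint V O)
    {Q : E → ℂ} (hQ : Differentiable ℂ Q) {φ : ℂ → E} {r : ℝ} (hr : 0 < r) (hr1 : r < 1)
    (hφ : DifferentiableOn ℂ φ (ball 0 1)) (v : E)
    (hZ : ∀ t ∈ Set.Icc (0 : ℝ) 1, ∀ ζ ∈ closedBall (0 : ℂ) r,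
      Q (φ ζ + (t : ℂ) • v) = 0 → φ ζ + (t : ℂ) • v ∈ V ∪ O)
    (hS : ∀ t ∈ Set.Icc (0 : ℝ) 1, ∀ ζ ∈ sphere (0 : ℂ) r, φ ζ + (t : ℂ) • v ∈ V)
    (h0 : ∀ ζ ∈ closedBall (0 : ℂ) r, Q (φ ζ) = 0 → φ ζ ∈ V) :
    ∀ ζ ∈ closedBall (0 : ℂ) r, Q (φ ζ + v) = 0 → φ ζ + v ∈ V := by
  by_contra! hcon
  obtain ⟨ζ₁, hζ₁, hQ₁, hV₁⟩ := hcon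
  have hsub : closedBall (0 : ℂ) r ⊆ ball 0 1 := closedBall_subset_ball hr1
  set F : ℝ × ℂ → E := fun x => φ x.2 + (x.1 : ℂ) • v with hF
  have hFat : ∀ t : ℝ, ∀ ζ ∈ ball (0 : ℂ) 1, ContinuousAt F (t, ζ) := by
    intro t ζ hζ
    have h1 : ContinuousAt φ ζ := (hφ.differentiableAt (isOpen_ball.mem_nhds hζ)).continuousAt
    have h2 : ContinuousAt (fun x : ℝ × ℂ => φ x.2) (t, ζ) :=
      ContinuousAt.comp (f := Prod.snd) (g := φ) h1 continuousAt_snd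
    exact h2.add (by fun_prop)
  set D : Set (ℝ × ℂ) := Set.Icc (0 : ℝ) 1 ×ˢ closedBall (0 : ℂ) r with hD
  have hDc : IsCompact D := isCompact_Icc.prod (isCompact_closedBall _ _)
  have hFD : ContinuousOn F D := fun x hx => (hFat x.1 x.2 (hsub hx.2)).continuousWithinAt
  set T : Set (ℝ × ℂ) := D ∩ F ⁻¹' (Q ⁻¹' {0} ∩ Vᶜ) with hT
  have hTcl : IsClosed T := hFD.preimage_isClosed_of_isClosed hDc.isClosed
    ((isClosed_singleton.preimage hQ.continuous).inter hV.isClosed_compl)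
  have hTc : IsCompact T := hDc.of_isClosed_subset hTcl Set.inter_subset_left
  have hTn : T.Nonempty := ⟨(1, ζ₁), ⟨⟨by simp, hζ₁⟩, by simpa [hF] using ⟨hQ₁, hV₁⟩⟩⟩
  obtain ⟨⟨t₀, ζ₀⟩, ⟨⟨ht₀, hζ₀⟩, hQ₀, hV₀⟩, hmin⟩ :=
    hTc.exists_isMinOn hTn continuous_fst.continuousOn
  simp only at ht₀ hζ₀
  have hQ₀' : Q (φ ζ₀ + (t₀ : ℂ) • v) = 0 := hQ₀
  have hV₀' : φ ζ₀ + (t₀ : ℂ) • v ∉ V := hV₀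
  have ht₀pos : 0 < t₀ := by
    rcases ht₀.1.lt_or_eq with h | h
    · exact h
    · subst h
      simp only [Complex.ofReal_zero, zero_smul, add_zero] at hQ₀' hV₀'
      exact absurd (h0 ζ₀ hζ₀ hQ₀') hV₀'
  have hO₀ : F (t₀, ζ₀) ∈ O := (hZ t₀ ht₀ ζ₀ hζ₀ hQ₀').resolve_left hV₀'
  have hζ₀b : ζ₀ ∈ ball (0 : ℂ) r := by
    rcases (mem_closedBall.1 hζ₀).lt_or_eq with h | h
    · exact h
    · exact absurd (hS t₀ ht₀ ζ₀ h) hV₀'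
  have hgd : ∀ t : ℝ, DifferentiableOn ℂ (fun ζ => Q (F (t, ζ))) (ball 0 1) := by
    intro t
    exact hQ.comp_differentiableOn (hφ.add_const ((t : ℂ) • v))
  have hga : AnalyticOnNhd ℂ (fun ζ => Q (F (t₀, ζ))) (ball 0 1) :=
    (hgd t₀).analyticOnNhd isOpen_ball
  rcases (hga ζ₀ (hsub hζ₀)).eventually_eq_zero_or_eventually_ne_zero with hz | hnz
  · have hzero := hga.eqOn_zero_of_preconnected_of_eventuallyEq_zero
      (convex_ball _ _).isPreconnected (hsub hζ₀) hz
    have hpre : IsPreconnected ((fun ζ => F (t₀, ζ)) '' closedBall (0 : ℂ) r) := by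
      apply (convex_closedBall _ _).isPreconnected.image
      exact (hφ.continuousOn.mono hsub).add (continuousOn_const (c := (t₀ : ℂ) • v))
    have hrs : (r : ℂ) ∈ sphere (0 : ℂ) r := by simp [abs_of_pos hr]
    obtain ⟨x, -, hx⟩ := hpre V O hV hO
      (by rintro _ ⟨ζ, hζ, rfl⟩; exact hZ t₀ ht₀ ζ hζ (hzero (hsub hζ)))
      ⟨F (t₀, r), ⟨_, sphere_subset_closedBall hrs, rfl⟩, hS t₀ ht₀ _ hrs⟩
      ⟨F (t₀, ζ₀), ⟨_, hζ₀, rfl⟩, hO₀⟩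
    exact Set.disjoint_left.1 hVO hx.1 hx.2
  · have e1 : ∀ᶠ ζ in nhds ζ₀, ζ ≠ ζ₀ → Q (F (t₀, ζ)) ≠ 0 := by
      simpa [eventually_nhdsWithin_iff] using hnz
    have e2 : ∀ᶠ ζ in nhds ζ₀, ζ ∈ ball (0 : ℂ) r := isOpen_ball.mem_nhds hζ₀b
    have e3 : ∀ᶠ ζ in nhds ζ₀, F (t₀, ζ) ∈ O :=
      ((hFat t₀ ζ₀ (hsub hζ₀)).comp (f := fun ζ => (t₀, ζ)) (by fun_prop)).eventually_mem
        (hO.mem_nhds hO₀)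
    obtain ⟨ρ, hρ, hρs⟩ := nhds_basis_closedBall.eventually_iff.1 (e1.and (e2.and e3))
    have hρ1 : closedBall ζ₀ ρ ⊆ ball 0 1 := fun ζ hζ =>
      hsub (ball_subset_closedBall (hρs hζ).2.1)
    have hgc : ∀ t : ℝ, ∀ ζ ∈ ball (0 : ℂ) 1, ContinuousAt (fun x => ‖Q (F x)‖) (t, ζ) :=
      fun t ζ hζ => (hQ.continuous.continuousAt.comp (hFat t ζ hζ)).norm
    obtain ⟨m, hm, hmS⟩ : ∃ m > 0, ∀ ζ ∈ sphere ζ₀ ρ, m < ‖Q (F (t₀, ζ))‖ := by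
      have hne : (sphere ζ₀ ρ).Nonempty := NormedSpace.sphere_nonempty.2 hρ.le
      obtain ⟨w, hw, hwm⟩ := (isCompact_sphere ζ₀ ρ).exists_isMinOn hne
        (f := fun ζ => ‖Q (F (t₀, ζ))‖)
        (((hgd t₀).continuousOn.mono (sphere_subset_closedBall.trans hρ1)).norm)
      have hpos : 0 < ‖Q (F (t₀, w))‖ := norm_pos_iff.2
        ((hρs (sphere_subset_closedBall hw)).1 (ne_of_mem_sphere hw hρ.ne'))
      exact ⟨_, half_pos hpos, fun ζ hζ => (half_lt_self hpos).trans_le (hwm hζ)⟩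
    have f1 : ∀ᶠ t in nhds t₀, ∀ ζ ∈ sphere ζ₀ ρ, m < ‖Q (F (t, ζ))‖ :=
      (isCompact_sphere ζ₀ ρ).eventually_forall_of_forall_eventually fun ζ hζ =>
        (hgc t₀ ζ (hρ1 (sphere_subset_closedBall hζ))).eventually_const_lt (hmS ζ hζ)
    have f2 : ∀ᶠ t in nhds t₀, ∀ ζ ∈ closedBall ζ₀ ρ, F (t, ζ) ∈ O :=
      (isCompact_closedBall ζ₀ ρ).eventually_forall_of_forall_eventually fun ζ hζ =>
        (hFat t₀ ζ (hρ1 hζ)).eventually_mem (hO.mem_nhds (hρs hζ).2.2)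
    have f3 : ∀ᶠ t in nhds t₀, ‖Q (F (t, ζ₀))‖ < m := by
      have : ContinuousAt (fun t => ‖Q (F (t, ζ₀))‖) t₀ :=
        (hgc t₀ ζ₀ (hsub hζ₀)).comp (f := fun t => (t, ζ₀)) (by fun_prop)
      exact this.eventually_lt_const (by
        have : Q (F (t₀, ζ₀)) = 0 := hQ₀'
        simpa [this] using hm)
    have f4 : ∀ᶠ t in nhdsWithin t₀ (Set.Iio t₀), t ∈ Set.Ioo 0 t₀ :=
      Ioo_mem_nhdsLT ht₀pos
    obtain ⟨t, ⟨g1, g2, g3⟩, g4⟩ :=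
      (((f1.and (f2.and f3)).filter_mono nhdsWithin_le_nhds).and f4).exists
    have htI : t ∈ Set.Icc (0 : ℝ) 1 := ⟨g4.1.le, g4.2.le.trans ht₀.2⟩
    have hnz' : ∀ ζ ∈ closedBall ζ₀ ρ, Q (F (t, ζ)) ≠ 0 := by
      intro ζ hζ h
      have hmem : (t, ζ) ∈ T := ⟨⟨htI, ball_subset_closedBall (hρs hζ).2.1⟩, h,
        fun hv => Set.disjoint_left.1 hVO hv (g2 ζ hζ)⟩
      have := hmin hmem
      simp only [Set.mem_ofPred_eq] at this
      exact absurd g4.2 (not_lt.2 this)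
    have hdc : DiffContOnCl ℂ (fun ζ => (Q (F (t, ζ)))⁻¹) (ball ζ₀ ρ) := by
      apply DifferentiableOn.diffContOnCl
      rw [closure_ball _ hρ.ne']
      exact ((hgd t).mono hρ1).inv hnz'
    have hle := Complex.norm_le_of_forall_mem_frontier_norm_le isBounded_ball hdc (C := m⁻¹)
      (by
        rw [frontier_ball _ hρ.ne']
        intro z hz
        rw [norm_inv]
        exact inv_anti₀ hm (g1 z hz).le) (subset_closure (mem_ball_self hρ))
    rw [norm_inv] at hle
    have hp0 : 0 < ‖Q (F (t, ζ₀))‖ := norm_pos_iff.2 (hnz' ζ₀ (mem_closedBall_self hρ.le))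
    exact absurd g3 (not_lt.2 ((inv_le_inv₀ hp0 hm).1 hle))

/-- One-sided version. -/
lemma one_side {n : ℕ} {U H : Set (EuclideanSpace ℂ (Fin n))}
    {p : EuclideanSpace ℂ (Fin n)} (hp : p ∈ H) (hUH : IsOpen (U \ H))
    {C V : Set (EuclideanSpace ℂ (Fin n))}
    (hC : IsSupportCurve U H p C) (hV : IsComponentOfComplement U H V) (hCV : C \ {p} ⊆ V)
    {δ : ℝ} (hδ : 0 < δ) (hδU : ball p δ ⊆ U) :
    ∃ ε > 0, ∀ q ∈ ball p ε, q ∉ V → ∀ Q : EuclideanSpace ℂ (Fin n) → ℂ,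
      Differentiable ℂ Q → Q q = 0 → ∃ w ∈ H ∩ ball p δ, Q w = 0 := by
  obtain ⟨φ, hφ, hφU, ⟨a, ha, b, hb, hab⟩, hφ0, rfl, -⟩ := hC
  obtain ⟨x, hx, rfl⟩ := hV
  set V := connectedComponentIn (U \ H) x with hVdef
  have hVo : IsOpen V := hUH.connectedComponentIn
  have hOo : IsOpen ((U \ H) \ V) := by
    rw [isOpen_iff_mem_nhds]
    rintro y ⟨hy, hyV⟩
    filter_upwards [hUH.connectedComponentIn.mem_nhds (mem_connectedComponentIn hy)] with z hz
    refine ⟨connectedComponentIn_subset _ _ hz, fun hzV => hyV ?_⟩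
    have h1 := connectedComponentIn_eq hz
    have h2 := connectedComponentIn_eq hzV
    rw [hVdef, h2, ← h1]
    exact mem_connectedComponentIn hy
  have h0 : (0 : ℂ) ∈ ball (0 : ℂ) 1 := by simp
  have han : AnalyticOnNhd ℂ φ (ball 0 1) := hφ.analyticOnNhd isOpen_ball
  have e1 : ∀ᶠ ζ in nhds (0 : ℂ), ζ ≠ 0 → φ ζ ≠ p := by
    rcases (han 0 h0).eventually_eq_or_eventually_ne (analyticAt_const (v := p)) with h | h
    · have := han.eqOn_of_preconnected_of_eventuallyEq (fun _ _ => analyticAt_const)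
        (convex_ball _ _).isPreconnected h0 h
      exact absurd ((this ha).trans (this hb).symm) hab
    · simpa [eventually_nhdsWithin_iff] using h
  have e2 : ∀ᶠ ζ in nhds (0 : ℂ), ζ ∈ ball (0 : ℂ) 1 := isOpen_ball.mem_nhds h0
  have e3 : ∀ᶠ ζ in nhds (0 : ℂ), φ ζ ∈ ball p (δ / 2) :=
    (han 0 h0).continuousAt.eventually_mem (by rw [hφ0]; exact ball_mem_nhds _ (half_pos hδ))
  obtain ⟨r, hr, hrs⟩ := nhds_basis_closedBall.eventually_iff.1 (e1.and (e2.and e3))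
  have hr1 : r < 1 := by
    have : (r : ℂ) ∈ closedBall (0 : ℂ) r := by simp [abs_of_pos hr]
    simpa [abs_of_pos hr] using (hrs this).2.1
  have hin : ∀ ζ ∈ closedBall (0 : ℂ) r, ζ ≠ 0 → φ ζ ∈ V := fun ζ hζ hne =>
    hCV ⟨⟨ζ, (hrs hζ).2.1, rfl⟩, (hrs hζ).1 hne⟩
  obtain ⟨ε, hε, hεV⟩ := ((isCompact_sphere (0 : ℂ) r).image_of_continuousOn
    (hφ.continuousOn.mono fun ζ hζ => (hrs (sphere_subset_closedBall hζ)).2.1)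
    ).exists_thickening_subset_open hVo (by
      rintro _ ⟨ζ, hζ, rfl⟩
      exact hin ζ (sphere_subset_closedBall hζ) (ne_of_mem_sphere hζ hr.ne'))
  refine ⟨min ε (δ / 2), lt_min hε (half_pos hδ), fun q hq hqV Q hQ hQq => ?_⟩
  by_contra! hno
  have hqn : ‖q - p‖ < min ε (δ / 2) := by simpa [dist_eq_norm] using hq
  have hdist : ∀ t ∈ Set.Icc (0 : ℝ) 1, ∀ ζ : ℂ,
      dist (φ ζ + (t : ℂ) • (q - p)) (φ ζ) < min ε (δ / 2) := by
    intro t ht ζ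
    rw [dist_eq_norm, add_sub_cancel_left, norm_smul]
    have : ‖(t : ℂ)‖ ≤ 1 := by simpa [abs_of_nonneg ht.1] using ht.2
    nlinarith [norm_nonneg (q - p)]
  have key := no_zero_of_translate hVo hOo Set.disjoint_sdiff_right hQ hr hr1 hφ (q - p)
    (by
      intro t ht ζ hζ hz
      have hball : φ ζ + (t : ℂ) • (q - p) ∈ ball p δ := by
        have h1 := (hdist t ht ζ).trans_le (min_le_right _ _)
        have h2 := mem_ball.1 (hrs hζ).2.2
        rw [mem_ball]
        linarith [dist_triangle (φ ζ + (t : ℂ) • (q - p)) (φ ζ) p]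
      by_cases hv : φ ζ + (t : ℂ) • (q - p) ∈ V
      · exact Or.inl hv
      · exact Or.inr ⟨⟨hδU hball, fun hH => hno _ ⟨hH, hball⟩ hz⟩, hv⟩)
    (by
      intro t ht ζ hζ
      apply hεV
      rw [mem_thickening_iff]
      exact ⟨φ ζ, ⟨ζ, hζ, rfl⟩, (hdist t ht ζ).trans_le (min_le_left _ _)⟩)
    (by
      intro ζ hζ hz
      by_cases h : ζ = 0
      · subst h
        rw [hφ0] at hz
        exact absurd hz (hno p ⟨hp, mem_ball_self hδ⟩)
      · exact hin ζ hζ h)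
    0 (mem_closedBall_self hr.le)
  rw [hφ0, add_sub_cancel] at key
  exact hqV (key hQq)

theorem rational_hull_contains_neighborhood {n : ℕ} (hn : 2 ≤ n)
    (U H : Set (EuclideanSpace ℂ (Fin n)))
    (hH : IsRealAnalyticHypersurface U H)
    (p : EuclideanSpace ℂ (Fin n)) (hp : p ∈ H)
    (h2 : CurveSupportedFromTwoSides U H p) :
    ∀ K : Set (EuclideanSpace ℂ (Fin n)), IsCompact K → K ⊆ H →
      (∃ δ > 0, H ∩ ball p δ ⊆ K) →
      ∃ ε > 0, ball p ε ⊆ ratHull K := by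
  rintro K - - ⟨δ₀, hδ₀, hK⟩
  obtain ⟨hU, -, ρ, hρ, hHe, -⟩ := hH
  obtain ⟨C₁, C₂, V₁, V₂, hC₁, hC₂, hV₁, hV₂, hne, hs₁, hs₂⟩ := h2
  have hpU : p ∈ U := by rw [hHe] at hp; exact hp.1
  have hUH : IsOpen (U \ H) := by
    have h := hρ.continuousOn.isOpen_inter_preimage hU (isOpen_compl_singleton (x := (0 : ℝ)))
    have he : U \ H = U ∩ ρ ⁻¹' {0}ᶜ := by
      ext z
      simp only [hHe, Set.mem_sdiff, Set.mem_ofPred_eq, Set.mem_inter_iff, Set.mem_preimage,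
        Set.mem_compl_iff, Set.mem_singleton_iff]
      tauto
    rw [he]
    exact h
  obtain ⟨δ₁, hδ₁, hδU⟩ := Metric.isOpen_iff.1 hU p hpU
  have hδ : 0 < min δ₀ δ₁ := lt_min hδ₀ hδ₁
  have hδU' : ball p (min δ₀ δ₁) ⊆ U := (ball_subset_ball (min_le_right _ _)).trans hδU
  obtain ⟨ε₁, hε₁, H₁⟩ := one_side hp hUH hC₁ hV₁ hs₁ hδ hδU'
  obtain ⟨ε₂, hε₂, H₂⟩ := one_side hp hUH hC₂ hV₂ hs₂ hδ hδU'
  have hdisj : ∀ q, q ∉ V₁ ∨ q ∉ V₂ := by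
    intro q
    by_contra! h
    obtain ⟨x, -, rfl⟩ := hV₁
    obtain ⟨y, -, rfl⟩ := hV₂
    exact hne ((connectedComponentIn_eq h.1).trans (connectedComponentIn_eq h.2).symm)
  refine ⟨min ε₁ ε₂, lt_min hε₁ hε₂, fun q hq P => ?_⟩
  have hQ : Differentiable ℂ (fun z : EuclideanSpace ℂ (Fin n) =>
      MvPolynomial.eval (fun i => z i) P - MvPolynomial.eval (fun i => q i) P) := by
    refine Differentiable.sub_const ?_ _
    induction P using MvPolynomial.induction_on with
    | C a => simp
    | add f g hf hg => 
      simp only [map_add]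
      exact hf.add hg
    | mul_X f i hf =>
      simp only [map_mul, MvPolynomial.eval_X]
      exact hf.mul (by fun_prop)
  have hw : ∃ w ∈ H ∩ ball p (min δ₀ δ₁),
      MvPolynomial.eval (fun i => w i) P - MvPolynomial.eval (fun i => q i) P = 0 := by
    rcases hdisj q with h | h
    · exact H₁ q (ball_subset_ball (min_le_left _ _) hq) h _ hQ (sub_self _)
    · exact H₂ q (ball_subset_ball (min_le_right _ _) hq) h _ hQ (sub_self _)
  obtain ⟨w, ⟨hwH, hwb⟩, hw0⟩ := hw
  exact ⟨w, hK ⟨hwH, ball_subset_ball (min_le_left _ _) hwb⟩, sub_eq_zero.1 hw0⟩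
end
end
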